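/- Let F → E → B be a rational fibration in which F is formal and elliptic and B is formal. If the fibration is TNCZ, then the total space E is formal. -/

import Mathlib

/-!
# A TNCZ fibration with formal elliptic fibre and formal base has formal total space

A formal algebra `C` has an acyclic ideal `K` which contains the coboundaries and spans `C`
together with the cocycles (`CDGA.FormalIdeal`); conversely, an ideal which spans `C` together with
the cocycles and all of whose cocycles are coboundaries makes `C` formal
(`CDGA.formal_of_ideal`). Such an ideal is constructed in the total algebra in four steps.

*The lower grading.* A formal minimal algebra on finitely many generators has a derivation `ℓ` of
degree zero with values in `K` and `[d, ℓ] = d` (`CDGA.FreeOn.exists_euler`). Its generalized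
eigenspaces `E p`, `p ∈ ℕ`, form a second, *lower* grading for which `d` lowers `p` by one and all
cohomology is represented in `E 0` (`CDGA.LowGrading`). Free generators can be chosen bihomogeneous
(`CDGA.BiFree`).

*Ellipticity.* All generators of an elliptic formal algebra have lower degree at most one
(`Sullivan.exists_biFree`). Dividing out the generators one at a time keeps the cohomology bounded,
and each quotient has a top class. Putting a generator of lower degree `p` back changes the lower
degree of the top class by `p` if the generator is odd and by `-1 - p` if it is even
(`CDGA.BiFree.topClass_odd`, `CDGA.BiFree.topClass_even`). These weights add up to zero, as the top
class of the whole algebra has lower degree zero. The even generators of lower degree zero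
generate a polynomial algebra which is finite-dimensional modulo the differentials of the odd
generators of lower degree one, so by Krull's height theorem there are at least as many of the
latter, and the weights of these two kinds have a nonnegative sum. The remaining generators with
nonzero weight are the even ones of lower degree one and those of lower degree at least two; if
there are any, their weights have a positive sum, namely the lower degree of the top class of the
quotient by all the others. Hence there are none.

*The section.* As the fibration is TNCZ, the generators of the fibre of lower degree zero lift to
cocycles of the total algebra `T`. This gives a multiplicative section `s` of `T → F` such that
`D ∘ s` vanishes in lower degree zero and lowers the lower degree by at most one
(`FibrationModel.exists_twist`): on generators of lower degree one the latter is no condition at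
all, and there are no others. Additively `T = B ⊗ F`.

*The ideal.* Let `K` be the ideal of the formal base. The ideal of `T` generated by `K` and the
elements of positive lower degree spans `T` together with the cocycles. Let `c` project `F` onto
representatives of its cohomology in lower degree zero. A descent through the filtration by base
degree, using a contracting homotopy of `F` onto the image of `c`, moves any cocycle of this ideal
into `K ⊗ c(F)`; there the differential acts on `K` alone, so the cocycle is a coboundary
(`Twist.descent`, `Twist.exact_idl`, `Twist.formal`).
-/

/-!
A self-contained framework for rational homotopy theory at the level of Sullivan models,
following the conventions of G. Lupton, "Variations on a conjecture of Halperin".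

All spaces are simply connected CW complexes of finite type over ℚ; following the paper,
a space is represented by its Sullivan minimal model (a minimal Sullivan algebra), and a
rational fibration `F → E → B` is represented by (the minimal model of the fibration,
i.e.) a KS-extension  `M_B → M_B ⊗ ΛV → ΛV`  whose quotient `ΛV, d` is a minimal model
of the fibre `F`; the total space `E` is represented by the middle (KS) algebra, which is
quasi-isomorphic to the minimal model of `E`.
-/

namespace RHT

/-- A non-negatively graded, graded-commutative differential graded algebra over `ℚ`
(a cochain algebra) : the basic algebraic object of rational homotopy theory. -/
structure CDGA : Type 1 where
  A : Type
  [ringA : Ring A]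
  [algA : Algebra ℚ A]
  grading : ℕ → Submodule ℚ A
  [gradedA : GradedAlgebra grading]
  gcomm : ∀ {i j : ℕ} {x y : A}, x ∈ grading i → y ∈ grading j →
    x * y = ((-1 : ℚ) ^ (i * j)) • (y * x)
  d : A →ₗ[ℚ] A
  d_mem : ∀ {i : ℕ} {x : A}, x ∈ grading i → d x ∈ grading (i + 1)
  d_sq : ∀ x : A, d (d x) = 0
  leibniz : ∀ {i : ℕ} (x y : A), x ∈ grading i →
    d (x * y) = d x * y + ((-1 : ℚ) ^ i) • (x * d y)

attribute [instance] CDGA.ringA CDGA.algA CDGA.gradedA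

namespace CDGA

/-- `x` is a coboundary. -/
def IsExact (C : CDGA) (x : C.A) : Prop := ∃ y : C.A, C.d y = x

def cocycles (C : CDGA) (i : ℕ) : Submodule ℚ C.A := C.grading i ⊓ LinearMap.ker C.d

def coboundaries (C : CDGA) (i : ℕ) : Submodule ℚ C.A := C.grading i ⊓ LinearMap.range C.d

/-- The degree `i` cohomology of a cochain algebra. -/
abbrev cohomology (C : CDGA) (i : ℕ) : Type :=
  ↥(C.cocycles i) ⧸ (Submodule.comap (C.cocycles i).subtype (C.coboundaries i))

/-- The differential vanishes identically. -/
def ZeroDiff (C : CDGA) : Prop := ∀ x : C.A, C.d x = 0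

/-- The rational cup-length of (the cohomology of) a cochain algebra: the greatest `n`
such that some `n`-fold product of cocycles of positive degree is not a coboundary. -/
noncomputable def cup0 (C : CDGA) : ℕ :=
  sSup {n | ∃ l : List C.A, l.length = n ∧
    (∀ x ∈ l, (∃ i, 0 < i ∧ x ∈ C.grading i) ∧ C.d x = 0) ∧ ¬ C.IsExact l.prod}

/-- All `(n+1)`-fold products of elements of the augmentation ideal vanish. -/
def NilpotentOfLength (C : CDGA) (n : ℕ) : Prop :=
  ∀ l : List C.A, l.length = n + 1 → (∀ x ∈ l, ∃ i, 0 < i ∧ x ∈ C.grading i) →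
    l.prod = 0

end CDGA

/-- A morphism of cochain algebras: a `ℚ`-algebra map preserving degrees and
commuting with the differentials. -/
structure Hom (C D : CDGA) where
  toAlgHom : C.A →ₐ[ℚ] D.A
  map_grading : ∀ {i : ℕ} {x : C.A}, x ∈ C.grading i → toAlgHom x ∈ D.grading i
  comm_d : ∀ x : C.A, toAlgHom (C.d x) = D.d (toAlgHom x)

/-- A morphism of cochain algebras is a quasi-isomorphism if it induces an isomorphism
on cohomology (stated elementwise: surjectivity and injectivity on cohomology classes). -/
def QuasiIso {C D : CDGA} (f : Hom C D) : Prop :=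
  (∀ y : D.A, D.d y = 0 → ∃ x : C.A, C.d x = 0 ∧ D.IsExact (f.toAlgHom x - y)) ∧
  (∀ x : C.A, C.d x = 0 → D.IsExact (f.toAlgHom x) → C.IsExact x)

/-- A (cofibrant) cochain algebra is formal if it admits a quasi-isomorphism to a cochain
algebra with zero differential (its cohomology algebra).  A space is formal iff its
minimal model (or any Sullivan model of it) is formal in this sense. -/
def Formal (C : CDGA) : Prop :=
  ∃ (H : CDGA) (f : Hom C H), H.ZeroDiff ∧ QuasiIso f

/-- A Sullivan algebra: a cochain algebra which is free graded-commutative on a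
(simply connected, finite type) graded vector space `V` of generators.  Freeness is
encoded by the universal property of the free graded-commutative algebra. -/
structure Sullivan extends CDGA where
  V : ℕ → Submodule ℚ A
  V_le : ∀ i, V i ≤ grading i
  V_zero : V 0 = ⊥
  V_one : V 1 = ⊥
  V_fin : ∀ i, FiniteDimensional ℚ (V i)
  generates : Algebra.adjoin ℚ (⋃ i, (V i : Set A)) = ⊤
  free : ∀ (C : Type) [instC : Ring C] [instC2 : Algebra ℚ C] (𝒞 : ℕ → Submodule ℚ C),
    (1 : C) ∈ 𝒞 0 →
    (∀ i j (x y : C), x ∈ 𝒞 i → y ∈ 𝒞 j → x * y ∈ 𝒞 (i + j)) →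
    (∀ i j (x y : C), x ∈ 𝒞 i → y ∈ 𝒞 j → x * y = ((-1 : ℚ) ^ (i * j)) • (y * x)) →
    ∀ f : (i : ℕ) → V i →ₗ[ℚ] C, (∀ i (v : V i), f i v ∈ 𝒞 i) →
    ∃! φ : A →ₐ[ℚ] C, ∀ i (v : V i), φ (v : A) = f i v

namespace Sullivan

variable (S : Sullivan)

/-- The span of the generators. -/
def genSpan : Submodule ℚ S.A := ⨆ i, S.V i

/-- `Λ^{≥ n} V` : the ideal spanned by products of at least `n` generators. -/
def lengthGE (n : ℕ) : Submodule ℚ S.A := S.genSpan ^ n * (⊤ : Submodule ℚ S.A)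

/-- Minimality: the differential is decomposable. -/
def Minimal : Prop := ∀ x ∈ S.genSpan, S.d x ∈ S.lengthGE 2

/-- The (space modelled by the) Sullivan algebra is elliptic: finitely many generators
(finite-dimensional rational homotopy) and finite-dimensional cohomology. -/
def Elliptic : Prop :=
  (∃ N, ∀ i, N ≤ i → S.V i = ⊥) ∧
  (∀ i, FiniteDimensional ℚ (S.toCDGA.cohomology i)) ∧
  (∃ N, ∀ i, N ≤ i → Subsingleton (S.toCDGA.cohomology i))

/-- Positive Euler characteristic : `Σ (-1)^i dim H^i > 0`. -/
def PosEuler : Prop :=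
  ∃ N : ℕ, (∀ i, N ≤ i → Subsingleton (S.toCDGA.cohomology i)) ∧
    0 < ∑ i ∈ Finset.range N,
      ((-1 : ℤ) ^ i * (Module.finrank ℚ (S.toCDGA.cohomology i) : ℤ))

/-- `S` is the minimal model of the odd sphere `S^m` : one generator, in odd degree `m`,
and zero differential. -/
def OddSphere (m : ℕ) : Prop :=
  Odd m ∧ Module.finrank ℚ (S.V m) = 1 ∧ (∀ j, j ≠ m → S.V j = ⊥) ∧ S.toCDGA.ZeroDiff

/-- `S` models a space which rationally is a wedge of odd-dimensional spheres:
it is formal, has no cohomology in positive even degrees, and all products of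
positive-degree cohomology classes vanish. -/
def WedgeOddSpheres : Prop :=
  Formal S.toCDGA ∧
  (∀ k, 0 < k → ∀ x ∈ S.grading (2 * k), S.d x = 0 → S.toCDGA.IsExact x) ∧
  (∀ i j (x y : S.A), 0 < i → 0 < j → x ∈ S.grading i → y ∈ S.grading j →
    S.d x = 0 → S.d y = 0 → S.toCDGA.IsExact (x * y))

/-- `S` models a rational Poincaré duality space with fundamental class in degree `N`. -/
def PoincareDuality (N : ℕ) : Prop :=
  (∀ i, FiniteDimensional ℚ (S.toCDGA.cohomology i)) ∧
  (∀ i, N < i → Subsingleton (S.toCDGA.cohomology i)) ∧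
  (Module.finrank ℚ (S.toCDGA.cohomology N) = 1) ∧
  (∀ i (x : S.A), i ≤ N → x ∈ S.grading i → S.d x = 0 → ¬ S.toCDGA.IsExact x →
    ∃ y ∈ S.grading (N - i), S.d y = 0 ∧ ¬ S.toCDGA.IsExact (x * y))

/-- Toomer's invariant `e₀` (of the space with minimal model `S`) : the greatest `n`
such that some non-coboundary cocycle lies in `Λ^{≥n} V`. -/
noncomputable def e0 : ℕ :=
  sSup {n | ∃ x ∈ S.lengthGE n, S.d x = 0 ∧ ¬ S.toCDGA.IsExact x}

/-- The set of even-degree generators. -/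
def evenGenSet : Set S.A := ⋃ k, (S.V (2 * k) : Set S.A)

/-- `Λ(V^even)` as a submodule. -/
def evenSub : Submodule ℚ S.A :=
  Subalgebra.toSubmodule (Algebra.adjoin ℚ S.evenGenSet)

/-- The span of the odd-degree generators. -/
def oddGenSpan : Submodule ℚ S.A := ⨆ k, S.V (2 * k + 1)

/-- A pure Sullivan algebra: `d(V^even) = 0` and `d(V^odd) ⊆ Λ(V^even)`. -/
def Pure : Prop :=
  (∀ k, ∀ v ∈ S.V (2 * k), S.d v = 0) ∧
  (∀ k, ∀ v ∈ S.V (2 * k + 1), S.d v ∈ S.evenSub)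

/-- For a pure Sullivan algebra, the lower (second) grading:
`(ΛV)_k = Λ(V^even) ⊗ Λ^k(V^odd)`. -/
def pureLow (k : ℕ) : Submodule ℚ S.A := S.evenSub * S.oddGenSpan ^ k

/-- The part of positive lower degree `(ΛV)_+`. -/
def pureLowPlus : Submodule ℚ S.A := ⨆ k, S.pureLow (k + 1)

/-- The cohomology of `S` is spherically generated: every cocycle agrees, modulo
coboundaries, with an element of the subalgebra generated by the cocycles lying in
the generating space `V` (the spherical classes). -/
def SphericallyGenerated : Prop :=
  ∀ x : S.A, S.d x = 0 →
    ∃ y ∈ Algebra.adjoin ℚ {w : S.A | w ∈ S.genSpan ∧ S.d w = 0},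
      S.toCDGA.IsExact (x - y)

end Sullivan

/-- A bigraded (minimal) Sullivan algebra: the bigraded model of a formal space.
The lower grading `low` is multiplicative, the generators split into pure lower
degrees, the differential lowers the lower degree by exactly one, and all cocycles
of positive lower degree are coboundaries (`H_+ = 0`). -/
structure BigradedSullivan extends Sullivan where
  low : ℕ → Submodule ℚ A
  low_one : (1 : A) ∈ low 0
  low_mul : ∀ i j (x y : A), x ∈ low i → y ∈ low j → x * y ∈ low (i + j)
  low_internal : DirectSum.IsInternal low
  V_low : ∀ i, V i = ⨆ k, (V i ⊓ low k)
  d_low_zero : ∀ x ∈ low 0, d x = 0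
  d_low : ∀ k, ∀ x ∈ low (k + 1), d x ∈ low k
  acyclic_plus : ∀ k, ∀ x ∈ low (k + 1), d x = 0 → ∃ y : A, d y = x

/-- The lower-degree-`0` part of the generators: `V_k` for `k = 0`, etc. -/
def BigradedSullivan.lowGens (S : BigradedSullivan) (k : ℕ) : Submodule ℚ S.A :=
  ⨆ i, (S.V i ⊓ S.low k)

/-- The universal property of a KS-extension `B → B ⊗ ΛV` : the total algebra is the
free graded-commutative algebra over `B` on the (lifted) generating space `V`. -/
def RelativelyFree (B T : CDGA) (incl : Hom B T) (V : ℕ → Submodule ℚ T.A) : Prop :=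
  ∀ (C : Type) [instC : Ring C] [instC2 : Algebra ℚ C] (𝒞 : ℕ → Submodule ℚ C),
    (1 : C) ∈ 𝒞 0 →
    (∀ i j (x y : C), x ∈ 𝒞 i → y ∈ 𝒞 j → x * y ∈ 𝒞 (i + j)) →
    (∀ i j (x y : C), x ∈ 𝒞 i → y ∈ 𝒞 j → x * y = ((-1 : ℚ) ^ (i * j)) • (y * x)) →
    ∀ (g : B.A →ₐ[ℚ] C), (∀ i (x : B.A), x ∈ B.grading i → g x ∈ 𝒞 i) →
    ∀ (f : (i : ℕ) → V i →ₗ[ℚ] C), (∀ i (v : V i), f i v ∈ 𝒞 i) →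
    ∃! φ : T.A →ₐ[ℚ] C, (∀ x : B.A, φ (incl.toAlgHom x) = g x) ∧
      (∀ i (v : V i), φ (v : T.A) = f i v)

/-- The KS (Koszul–Sullivan) condition: the lifted generators admit a well-ordered
basis `{v_α}` with `D v_α ∈ B ⊗ Λ(V_{<α})`. -/
def KSBasisCondition (B T : CDGA) (incl : Hom B T) (V : ℕ → Submodule ℚ T.A) : Prop :=
  ∃ (ι : Set ℕ) (b : ι → T.A),
    LinearIndependent ℚ b ∧
    Submodule.span ℚ (Set.range b) = (⨆ i, V i) ∧
    (∀ α : ι, ∃ i, b α ∈ V i) ∧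
    (∀ α : ι, T.d (b α) ∈
      Algebra.adjoin ℚ
        (Set.range (incl.toAlgHom : B.A → T.A) ∪ b '' {β : ι | (β : ℕ) < (α : ℕ)}))

/-- `incl : B → T` is a KS-extension of `B`. -/
def IsRelKS (B T : CDGA) (incl : Hom B T) : Prop :=
  ∃ V : ℕ → Submodule ℚ T.A, (∀ i, V i ≤ T.grading i) ∧
    RelativelyFree B T incl V ∧ KSBasisCondition B T incl V

/-- A model of a rational fibration `F → E → B` with base algebra `B` (a Sullivan model
of the base, or e.g. its cohomology `H(B)` when the base is formal) and fibre a Sullivan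
algebra `F = (ΛV, d)`: a KS-extension `B → B ⊗ ΛV → ΛV` whose quotient by the ideal
generated by `B⁺` is `F`.  The total algebra `T` represents the total space `E`. -/
structure FibrationModel (B : CDGA) (F : Sullivan) where
  T : CDGA
  incl : Hom B T
  proj : Hom T F.toCDGA
  V : ℕ → Submodule ℚ T.A
  V_le : ∀ i, V i ≤ T.grading i
  incl_inj : Function.Injective (incl.toAlgHom : B.A → T.A)
  relFree : RelativelyFree B T incl V
  ksBasis : KSBasisCondition B T incl V
  proj_incl : ∀ i, 0 < i → ∀ x ∈ B.grading i, proj.toAlgHom (incl.toAlgHom x) = 0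
  proj_V : ∀ i, (V i).map (proj.toAlgHom.toLinearMap) = F.V i
  fiber_inj : ∀ x ∈ Subalgebra.toSubmodule (Algebra.adjoin ℚ (⋃ i, (V i : Set T.A))),
    proj.toAlgHom x = 0 → x = 0
  ker_proj : ∀ x : T.A, proj.toAlgHom x = 0 ↔
    x ∈ (Submodule.map (incl.toAlgHom.toLinearMap) (⨆ i, B.grading (i + 1))) *
      (⊤ : Submodule ℚ T.A)

namespace FibrationModel

variable {B : CDGA} {F : Sullivan} (P : FibrationModel B F)

/-- The copy `1 ⊗ ΛV ⊆ B ⊗ ΛV` of the fibre inside the total algebra: the subalgebra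
generated by the lifted generators. -/
def fiberSub : Submodule ℚ P.T.A :=
  Subalgebra.toSubmodule (Algebra.adjoin ℚ (⋃ i, (P.V i : Set P.T.A)))

/-- The image `B ⊗ 1 ⊆ B ⊗ ΛV` of the base. -/
def baseSub : Submodule ℚ P.T.A := LinearMap.range (P.incl.toAlgHom.toLinearMap)

/-- The span of the lifted fibre generators. -/
def fiberGenSpan : Submodule ℚ P.T.A := ⨆ i, P.V i

/-- The span of all generators (base generators `W` together with the fibre ones). -/
def totalGenSpan (W : Submodule ℚ B.A) : Submodule ℚ P.T.A :=
  Submodule.map P.incl.toAlgHom.toLinearMap W ⊔ P.fiberGenSpan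

/-- `Λ^{≥n}(W ⊕ V)` in the total algebra. -/
def totalLengthGE (W : Submodule ℚ B.A) (n : ℕ) : Submodule ℚ P.T.A :=
  (P.totalGenSpan W) ^ n * (⊤ : Submodule ℚ P.T.A)

/-- The part of the fibre copy `1 ⊗ ΛV` lying over a submodule `K ⊆ ΛV`. -/
def fiberComap (K : Submodule ℚ F.A) : Submodule ℚ P.T.A :=
  P.fiberSub ⊓ Submodule.comap P.proj.toAlgHom.toLinearMap K

/-- The span of the even-degree lifted generators. -/
def evenGenSpan : Submodule ℚ P.T.A := ⨆ k, P.V (2 * k)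

/-- `Λ(V^even)` inside the total algebra. -/
def evenSub : Submodule ℚ P.T.A :=
  Subalgebra.toSubmodule (Algebra.adjoin ℚ (⋃ k, (P.V (2 * k) : Set P.T.A)))

/-- `Λ⁺(V^even)` inside the total algebra. -/
def evenPlus : Submodule ℚ P.T.A := P.evenGenSpan * P.evenSub

/-- The fibration (model) is totally non-cohomologous to zero: the projection onto the
fibre (modelling the fibre inclusion `j : F → E`) is surjective on cohomology. -/
def TNCZ : Prop :=
  ∀ y : F.A, F.d y = 0 → ∃ x : P.T.A, P.T.d x = 0 ∧
    CDGA.IsExact F.toCDGA (P.proj.toAlgHom x - y)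

end FibrationModel

/-- A (quasi-isomorphism) ladder between two fibration models: quasi-isomorphisms of
base, total and fibre algebras making both squares commute. -/
structure FibLadder {B B' : CDGA} {F F' : Sullivan}
    (P : FibrationModel B F) (P' : FibrationModel B' F') where
  fB : Hom B B'
  fT : Hom P.T P'.T
  fF : Hom F.toCDGA F'.toCDGA
  hB : QuasiIso fB
  hT : QuasiIso fT
  hF : QuasiIso fF
  commB : ∀ x : B.A, fT.toAlgHom (P.incl.toAlgHom x) = P'.incl.toAlgHom (fB.toAlgHom x)
  commF : ∀ x : P.T.A,
    fF.toAlgHom (P.proj.toAlgHom x) = P'.proj.toAlgHom (fT.toAlgHom x)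

/-- Two fibration models are quasi-isomorphic (model the same rational fibration). -/
def ModelPair {B B' : CDGA} {F F' : Sullivan}
    (P : FibrationModel B F) (P' : FibrationModel B' F') : Prop :=
  Nonempty (FibLadder P P') ∨ Nonempty (FibLadder P' P)

/-- An isomorphism of KS-extensions. -/
def FibIso {B B' : CDGA} {F F' : Sullivan}
    (P : FibrationModel B F) (P' : FibrationModel B' F') : Prop :=
  ∃ L : FibLadder P P', Function.Bijective (L.fB.toAlgHom : B.A → B'.A) ∧
    Function.Bijective (L.fT.toAlgHom : P.T.A → P'.T.A) ∧
    Function.Bijective (L.fF.toAlgHom : F.A → F'.A)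

/-- `cat₀ ≤ n` (Félix–Halperin): the projection `p_n : ΛV → ΛV/Λ^{≥n+1}V` makes `ΛV`
into a homotopy retract: for a relative KS-model `ΛV → R → ΛV/Λ^{≥n+1}V` of `p_n`
there is a retraction `ρ : R → ΛV` restricting to the identity on `ΛV`. -/
def catLe (S : Sullivan) (n : ℕ) : Prop :=
  ∃ (Q : CDGA) (q : Hom S.toCDGA Q),
    Function.Surjective (q.toAlgHom : S.A → Q.A) ∧
    (∀ x : S.A, q.toAlgHom x = 0 ↔ x ∈ S.lengthGE (n + 1)) ∧
    ∃ (R : CDGA) (ι : Hom S.toCDGA R) (ψ : Hom R Q) (ρ : Hom R S.toCDGA),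
      IsRelKS S.toCDGA R ι ∧ QuasiIso ψ ∧
      (∀ x : S.A, ψ.toAlgHom (ι.toAlgHom x) = q.toAlgHom x) ∧
      (∀ x : S.A, ρ.toAlgHom (ι.toAlgHom x) = x)

/-- The rational Lusternik–Schnirelmann category of the space with minimal model `S`. -/
noncomputable def cat0 (S : Sullivan) : ℕ := sInf {n | catLe S n}

/-- The rational cone-length (Cornea): the least `n` such that the minimal model is
quasi-isomorphic to a cochain algebra whose augmentation ideal has vanishing
`(n+1)`-fold products. -/
noncomputable def cl0 (S : Sullivan) : ℕ :=
  sInf {n | ∃ (Q : CDGA) (f : Hom S.toCDGA Q), QuasiIso f ∧ CDGA.NilpotentOfLength Q n}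

/-- For a formal space the invariants `cup₀, e₀, cat₀, cl₀` all agree; `nil₀` denotes
their common value (here represented by `cat₀`). -/
noncomputable def nil0 (S : Sullivan) : ℕ := cat0 S

end RHT

/-! ### Graded linear algebra in cochain algebras -/

noncomputable section

namespace RHT

namespace CDGA

variable (C : CDGA)

/-- Projection onto the component of degree `i`. -/
def pr (i : ℕ) : C.A →ₗ[ℚ] C.A := GradedAlgebra.proj C.grading i

lemma pr_mem (i : ℕ) (x : C.A) : C.pr i x ∈ C.grading i := by
  simp [pr, GradedAlgebra.proj_apply]

lemma pr_of_mem {i : ℕ} {x : C.A} (h : x ∈ C.grading i) : C.pr i x = x := by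
  simpa [pr, GradedAlgebra.proj_apply] using DirectSum.decompose_of_mem_same C.grading h

lemma pr_of_mem_ne {i j : ℕ} {x : C.A} (h : x ∈ C.grading j) (hij : j ≠ i) :
    C.pr i x = 0 := by
  simpa [pr, GradedAlgebra.proj_apply] using DirectSum.decompose_of_mem_ne C.grading h hij

lemma exists_sum_pr (x : C.A) : ∃ s : Finset ℕ, ∑ i ∈ s, C.pr i x = x := by
  classical exact ⟨_, DirectSum.sum_support_decompose C.grading x⟩

lemma exists_bound (x : C.A) : ∃ n : ℕ, ∀ i, n ≤ i → C.pr i x = 0 := by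
  obtain ⟨s, hs⟩ := C.exists_sum_pr x
  refine ⟨s.sup id + 1, fun i hi => ?_⟩
  rw [← hs, map_sum]
  refine Finset.sum_eq_zero fun j hj => C.pr_of_mem_ne (C.pr_mem j x) ?_
  have := Finset.le_sup (f := id) hj
  simp at this
  omega

lemma ext_pr {x y : C.A} (h : ∀ i, C.pr i x = C.pr i y) : x = y := by
  rw [← sub_eq_zero]
  obtain ⟨s, hs⟩ := C.exists_sum_pr (x - y)
  rw [← hs]
  exact Finset.sum_eq_zero fun i _ => by rw [map_sub, h, sub_self]

theorem homog_induction {p : C.A → Prop} (h : ∀ i, ∀ x ∈ C.grading i, p x)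
    (hadd : ∀ x y, p x → p y → p (x + y)) (x : C.A) : p x :=
  DirectSum.Decomposition.inductionOn C.grading (h 0 0 (zero_mem _))
    (fun {i} m => h i m m.2) (fun m n hm hn => hadd m n hm hn) x

lemma lin_ext {M : Type*} [AddCommMonoid M] [Module ℚ M] {f g : C.A →ₗ[ℚ] M}
    (h : ∀ i, ∀ x ∈ C.grading i, f x = g x) : f = g := by
  ext x
  exact C.homog_induction (p := fun x => f x = g x) h
    (fun x y hx hy => by rw [map_add, map_add, hx, hy]) x

lemma pr_mul_left {i j : ℕ} {a : C.A} (ha : a ∈ C.grading i) (x : C.A) :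
    C.pr (i + j) (a * x) = a * C.pr j x := by
  simpa [pr, GradedAlgebra.proj_apply] using
    DirectSum.coe_decompose_mul_add_of_left_mem C.grading ha

lemma pr_mul_right {i j : ℕ} {b : C.A} (hb : b ∈ C.grading j) (x : C.A) :
    C.pr (i + j) (x * b) = C.pr i x * b := by
  simpa [pr, GradedAlgebra.proj_apply] using
    DirectSum.coe_decompose_mul_add_of_right_mem C.grading hb

lemma pr_mul_left_lt {i j : ℕ} {a : C.A} (ha : a ∈ C.grading i) (x : C.A) (h : j < i) :
    C.pr j (a * x) = 0 := by
  simpa [pr, GradedAlgebra.proj_apply] using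
    DirectSum.coe_decompose_mul_of_left_mem_of_not_le C.grading ha (by omega)

lemma mul_deg {i j : ℕ} {a b : C.A} (ha : a ∈ C.grading i) (hb : b ∈ C.grading j) :
    a * b ∈ C.grading (i + j) := SetLike.mul_mem_graded ha hb

lemma one_deg : (1 : C.A) ∈ C.grading 0 := SetLike.one_mem_graded C.grading

lemma pr_d (i : ℕ) (x : C.A) : C.pr (i + 1) (C.d x) = C.d (C.pr i x) := by
  refine C.homog_induction (p := fun x => C.pr (i + 1) (C.d x) = C.d (C.pr i x)) ?_ ?_ x
  · intro j x hx
    by_cases h : j = i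
    · subst h
      rw [C.pr_of_mem (C.d_mem hx), C.pr_of_mem hx]
    · rw [C.pr_of_mem_ne (C.d_mem hx) (by omega), C.pr_of_mem_ne hx h, map_zero]
  · intro x y hx hy
    simp only [map_add, hx, hy]

lemma pr_zero_d (x : C.A) : C.pr 0 (C.d x) = 0 := by
  refine C.homog_induction (p := fun x => C.pr 0 (C.d x) = 0) ?_ ?_ x
  · intro j x hx
    exact C.pr_of_mem_ne (C.d_mem hx) (by omega)
  · intro x y hx hy
    simp only [map_add, hx, hy, add_zero]

/-- The algebra automorphism acting on degree `i` as the sign `(-1) ^ (m * i)`. -/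
def sg (m : ℕ) : C.A →ₐ[ℚ] C.A :=
  (DirectSum.toAlgebra ℚ (fun i => C.grading i)
    (fun i => ((-1 : ℚ) ^ (m * i)) • (C.grading i).subtype)
    (by simp)
    (by
      intro i j a b
      simp only [SetLike.coe_gMul, LinearMap.smul_apply, Submodule.subtype_apply,
        smul_mul_smul_comm, ← pow_add, mul_add])).comp
    (DirectSum.decomposeAlgEquiv C.grading : C.A →ₐ[ℚ] _)

lemma sg_of_mem (m : ℕ) {i : ℕ} {x : C.A} (hx : x ∈ C.grading i) :
    C.sg m x = ((-1 : ℚ) ^ (m * i)) • x := by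
  lift x to C.grading i using hx
  simp [sg, DirectSum.toAlgebra, DirectSum.toSemiring]

lemma sg_mem (m : ℕ) {i : ℕ} {x : C.A} (hx : x ∈ C.grading i) : C.sg m x ∈ C.grading i := by
  rw [C.sg_of_mem m hx]
  exact Submodule.smul_mem _ _ hx

lemma sg_sg (m n : ℕ) (x : C.A) : C.sg m (C.sg n x) = C.sg (m + n) x := by
  refine C.homog_induction (p := fun x => C.sg m (C.sg n x) = C.sg (m + n) x) ?_ ?_ x
  · intro i x hx
    rw [C.sg_of_mem n hx, map_smul, C.sg_of_mem m hx, C.sg_of_mem _ hx, smul_smul, ← pow_add]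
    congr 2
    ring
  · intro x y hx hy
    simp only [map_add, hx, hy]

lemma sg_even {m : ℕ} (hm : Even m) (x : C.A) : C.sg m x = x := by
  refine C.homog_induction (p := fun x => C.sg m x = x) ?_ ?_ x
  · intro i x hx
    rw [C.sg_of_mem m hx, (hm.mul_right i).neg_one_pow, one_smul]
  · intro x y hx hy
    simp only [map_add, hx, hy]

lemma sg_odd {m : ℕ} (hm : Odd m) (x : C.A) : C.sg m x = C.sg 1 x := by
  obtain ⟨k, rfl⟩ := hm
  rw [← C.sg_sg, C.sg_even (by simp)]

@[simp] lemma sg_self (m : ℕ) (x : C.A) : C.sg m (C.sg m x) = x := by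
  rw [C.sg_sg, C.sg_even (by simp)]

@[simp] lemma sg_zero (x : C.A) : C.sg 0 x = x := C.sg_even (by simp) x

lemma leib (x y : C.A) : C.d (x * y) = C.d x * y + C.sg 1 x * C.d y := by
  refine C.homog_induction (p := fun x => C.d (x * y) = C.d x * y + C.sg 1 x * C.d y) ?_ ?_ x
  · intro i x hx
    rw [C.leibniz x y hx, C.sg_of_mem 1 hx, one_mul, smul_mul_assoc]
  · intro a b ha hb
    simp only [map_add, add_mul, ha, hb]
    abel

lemma d_one : C.d 1 = 0 := by
  have := C.leib 1 1
  simpa using this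

lemma d_sg (m : ℕ) (x : C.A) : C.d (C.sg m x) = ((-1 : ℚ) ^ m) • C.sg m (C.d x) := by
  refine C.homog_induction
    (p := fun x => C.d (C.sg m x) = ((-1 : ℚ) ^ m) • C.sg m (C.d x)) ?_ ?_ x
  · intro i x hx
    rw [C.sg_of_mem m hx, map_smul, C.sg_of_mem m (C.d_mem hx), smul_smul, ← pow_add]
    congr 1
    rw [show m + m * (i + 1) = m * i + 2 * m by ring, pow_add, pow_mul]
    simp
  · intro a b ha hb
    simp only [map_add, ha, hb, smul_add]

lemma pr_sg (m i : ℕ) (x : C.A) : C.pr i (C.sg m x) = C.sg m (C.pr i x) := by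
  refine C.homog_induction (p := fun x => C.pr i (C.sg m x) = C.sg m (C.pr i x)) ?_ ?_ x
  · intro j x hx
    by_cases h : j = i
    · subst h
      rw [C.pr_of_mem (C.sg_mem m hx), C.pr_of_mem hx]
    · rw [C.pr_of_mem_ne (C.sg_mem m hx) h, C.pr_of_mem_ne hx h, map_zero]
  · intro x y hx hy
    simp only [map_add, hx, hy]

/-- Graded commutativity, with the sign absorbed in the automorphism `sg`. -/
lemma comm_left {j : ℕ} {b : C.A} (hb : b ∈ C.grading j) (a : C.A) :
    b * a = C.sg j a * b := by
  refine C.homog_induction (p := fun a => b * a = C.sg j a * b) ?_ ?_ a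
  · intro i x hx
    rw [C.gcomm hb hx, C.sg_of_mem j hx, smul_mul_assoc]
  · intro x y hx hy
    simp only [map_add, mul_add, add_mul, hx, hy]

lemma comm_right {j : ℕ} {b : C.A} (hb : b ∈ C.grading j) (a : C.A) :
    a * b = b * C.sg j a := by
  rw [C.comm_left hb, C.sg_self]

lemma comm_even {j : ℕ} (hj : Even j) {b : C.A} (hb : b ∈ C.grading j) (a : C.A) :
    b * a = a * b := by
  rw [C.comm_left hb, C.sg_even hj]

lemma odd_sq {j : ℕ} (hj : Odd j) {b : C.A} (hb : b ∈ C.grading j) : b * b = 0 := by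
  have h := C.gcomm hb hb
  rw [(hj.mul hj).neg_one_pow, neg_one_smul] at h
  have h2 : (2 : ℚ) • (b * b) = 0 := by
    rw [two_smul]
    nth_rewrite 1 [h]
    exact neg_add_cancel _
  exact (smul_eq_zero.mp h2).resolve_left (by norm_num)

/-- A subspace containing the homogeneous components of its elements. -/
def Homog (L : Submodule ℚ C.A) : Prop := ∀ i, ∀ x ∈ L, C.pr i x ∈ L

variable {C}

lemma Homog.sg {L : Submodule ℚ C.A} (h : C.Homog L) (m : ℕ) {x : C.A} (hx : x ∈ L) :
    C.sg m x ∈ L := by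
  obtain ⟨s, hs⟩ := C.exists_sum_pr x
  rw [← hs, map_sum]
  refine Submodule.sum_mem _ fun i _ => ?_
  rw [C.sg_of_mem m (C.pr_mem i x)]
  exact Submodule.smul_mem _ _ (h i x hx)

lemma Homog.mul_right {L : Submodule ℚ C.A} (h : C.Homog L)
    (hl : ∀ a, ∀ x ∈ L, a * x ∈ L) (a : C.A) {x : C.A} (hx : x ∈ L) : x * a ∈ L := by
  obtain ⟨s, hs⟩ := C.exists_sum_pr x
  rw [← hs, Finset.sum_mul]
  refine Submodule.sum_mem _ fun i _ => ?_
  rw [C.comm_left (C.pr_mem i x)]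
  exact hl _ _ (h i x hx)

lemma Homog.sup {L M : Submodule ℚ C.A} (h : C.Homog L) (h' : C.Homog M) :
    C.Homog (L ⊔ M) := by
  intro i x hx
  obtain ⟨y, hy, z, hz, rfl⟩ := Submodule.mem_sup.mp hx
  rw [map_add]
  exact add_mem (Submodule.mem_sup_left (h i y hy)) (Submodule.mem_sup_right (h' i z hz))

variable (C) in
lemma homog_range_d : C.Homog (LinearMap.range C.d) := by
  rintro i _ ⟨y, rfl⟩
  cases i with
  | zero => rw [C.pr_zero_d]; exact zero_mem _
  | succ i => rw [C.pr_d]; exact ⟨_, rfl⟩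

variable (C) in
lemma homog_ker_d : C.Homog (LinearMap.ker C.d) := by
  intro i x hx
  rw [LinearMap.mem_ker] at hx ⊢
  rw [← C.pr_d, hx, map_zero]

/-- A subspace is all of `A` as soon as it is reached by multiplicatively closed families of
homogeneous pieces containing a set of generators. -/
theorem grading_eq_of_gen {ι : Type*} {u : ι → C.A} {n : ι → ℕ}
    (hgen : Algebra.adjoin ℚ (Set.range u) = ⊤)
    (S : ℕ → Submodule ℚ C.A) (hle : ∀ i, S i ≤ C.grading i) (h1 : (1 : C.A) ∈ S 0)
    (hmul : ∀ i j x y, x ∈ S i → y ∈ S j → x * y ∈ S (i + j))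
    (hu : ∀ i, u i ∈ S (n i)) {k : ℕ} {x : C.A} (hx : x ∈ C.grading k) : x ∈ S k := by
  have htop : ∀ x : C.A, x ∈ ⨆ i, S i := by
    intro x
    have hx : x ∈ Algebra.adjoin ℚ (Set.range u) := by rw [hgen]; trivial
    induction hx using Algebra.adjoin_induction with
    | mem x hx =>
      obtain ⟨i, rfl⟩ := hx
      exact Submodule.mem_iSup_of_mem _ (hu i)
    | algebraMap r =>
      rw [Algebra.algebraMap_eq_smul_one]
      exact Submodule.smul_mem _ _ (Submodule.mem_iSup_of_mem _ h1)
    | add x y _ _ hx hy => exact add_mem hx hy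
    | mul x y _ _ hx hy =>
      refine Submodule.iSup_induction S (motive := fun x => x * y ∈ ⨆ i, S i) hx ?_ ?_ ?_
      · intro i x hx
        refine Submodule.iSup_induction S (motive := fun y => x * y ∈ ⨆ i, S i) hy ?_ ?_ ?_
        · intro j y hy
          exact Submodule.mem_iSup_of_mem _ (hmul i j x y hx hy)
        · simp
        · intro a b ha hb
          rw [mul_add]; exact add_mem ha hb
      · simp
      · intro a b ha hb
        rw [add_mul]; exact add_mem ha hb
  rw [← C.pr_of_mem hx]
  refine Submodule.iSup_induction S (motive := fun x => C.pr k x ∈ S k) (htop x) ?_ ?_ ?_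
  · intro i y hy
    by_cases h : i = k
    · subst h
      rwa [C.pr_of_mem (hle _ hy)]
    · rw [C.pr_of_mem_ne (hle _ hy) h]; exact zero_mem _
  · simp
  · intro a b ha hb
    rw [map_add]; exact add_mem ha hb

variable (C)

/-- The augmentation ideal. -/
def plus : Submodule ℚ C.A := LinearMap.ker (C.pr 0)

lemma mem_plus {x : C.A} : x ∈ C.plus ↔ C.pr 0 x = 0 := Iff.rfl

lemma mem_plus_of_mem {i : ℕ} (hi : i ≠ 0) {x : C.A} (hx : x ∈ C.grading i) : x ∈ C.plus :=
  C.pr_of_mem_ne hx hi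

lemma homog_plus : C.Homog C.plus := by
  intro i x hx
  by_cases h : i = 0
  · subst h
    rw [C.mem_plus.mp hx]; exact zero_mem _
  · exact C.mem_plus_of_mem h (C.pr_mem i x)

lemma plus_mul_left (a : C.A) {x : C.A} (hx : x ∈ C.plus) : a * x ∈ C.plus := by
  refine C.homog_induction (p := fun a => a * x ∈ C.plus) ?_ ?_ a
  · intro i a ha
    rw [mem_plus]
    rcases Nat.eq_zero_or_pos i with rfl | hi
    · have := C.pr_mul_left (j := 0) ha x
      rw [C.mem_plus.mp hx, mul_zero] at this
      simpa using this
    · exact C.pr_mul_left_lt ha x hi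
  · intro a b ha hb
    rw [add_mul]; exact add_mem ha hb

lemma plus_mul_right (a : C.A) {x : C.A} (hx : x ∈ C.plus) : x * a ∈ C.plus :=
  C.homog_plus.mul_right (fun a _ hx => C.plus_mul_left a hx) a hx

lemma d_mem_plus (x : C.A) : C.d x ∈ C.plus := C.pr_zero_d x

lemma one_notMem_plus [Nontrivial C.A] : (1 : C.A) ∉ C.plus := by
  rw [mem_plus, C.pr_of_mem C.one_deg]
  exact one_ne_zero

end CDGA

end RHT

end

/-! ### Free graded-commutative algebras and derivations -/

noncomputable section

namespace RHT

namespace CDGA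

/-- `C` is the free graded-commutative algebra on the homogeneous family `u` (with `u i` in degree
`n i`): the `u i` generate, and any family of elements of the right degrees in a
graded-commutative algebra is the image of `u` under an algebra map. -/
structure FreeOn (C : CDGA) {ι : Type} (u : ι → C.A) (n : ι → ℕ) : Prop where
  mem : ∀ i, u i ∈ C.grading (n i)
  gen : Algebra.adjoin ℚ (Set.range u) = ⊤
  lift : ∀ (R : Type) [Ring R] [Algebra ℚ R] (𝒞 : ℕ → Submodule ℚ R),
    (1 : R) ∈ 𝒞 0 →
    (∀ i j (x y : R), x ∈ 𝒞 i → y ∈ 𝒞 j → x * y ∈ 𝒞 (i + j)) →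
    (∀ i j (x y : R), x ∈ 𝒞 i → y ∈ 𝒞 j → x * y = ((-1 : ℚ) ^ (i * j)) • (y * x)) →
    ∀ c : ι → R, (∀ i, c i ∈ 𝒞 (n i)) → ∃ φ : C.A →ₐ[ℚ] R, ∀ i, φ (u i) = c i

/-- `f` is a derivation of parity `m`. -/
def IsDer (C : CDGA) (m : ℕ) (f : C.A →ₗ[ℚ] C.A) : Prop :=
  ∀ a b, f (a * b) = f a * b + C.sg m a * f b

lemma isDer_d (C : CDGA) : C.IsDer 1 C.d := C.leib

namespace IsDer

variable {C : CDGA} {m : ℕ} {f g : C.A →ₗ[ℚ] C.A}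

lemma one (h : C.IsDer m f) : f 1 = 0 := by
  have := h 1 1
  simpa using this

lemma sub (hf : C.IsDer m f) (hg : C.IsDer m g) : C.IsDer m (f - g) := by
  intro a b
  simp only [LinearMap.sub_apply, hf a b, hg a b, sub_mul, mul_sub]
  abel

/-- A derivation is determined by its values on generators, relative to a subspace that is an
ideal. -/
lemma mem_of_gen (hf : C.IsDer m f) {s : Set C.A} (L : Submodule ℚ C.A)
    (hl : ∀ a, ∀ x ∈ L, a * x ∈ L) (hr : ∀ a, ∀ x ∈ L, x * a ∈ L)
    (hs : ∀ x ∈ s, f x ∈ L) {x : C.A} (hx : x ∈ Algebra.adjoin ℚ s) : f x ∈ L := by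
  induction hx using Algebra.adjoin_induction with
  | mem x hx => exact hs x hx
  | algebraMap r => rw [Algebra.algebraMap_eq_smul_one, map_smul, hf.one, smul_zero]; exact zero_mem _
  | add x y _ _ hx hy => rw [map_add]; exact add_mem hx hy
  | mul x y _ _ hx hy => rw [hf]; exact add_mem (hr _ _ hx) (hl _ _ hy)

lemma eq_zero_of_gen (hf : C.IsDer m f) {s : Set C.A}
    (hs : ∀ x ∈ s, f x = 0) {x : C.A} (hx : x ∈ Algebra.adjoin ℚ s) : f x = 0 := by
  have := hf.mem_of_gen ⊥ (by simp) (by simp) (s := s) (by simpa using hs) hx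
  simpa using this

end IsDer

namespace FreeOn

variable {C : CDGA} {ι : Type} {u : ι → C.A} {n : ι → ℕ}

lemma map_mem (h : C.FreeOn u n) {R : Type*} [Ring R] [Algebra ℚ R] (𝒞 : ℕ → Submodule ℚ R)
    (h1 : (1 : R) ∈ 𝒞 0)
    (hmul : ∀ i j (x y : R), x ∈ 𝒞 i → y ∈ 𝒞 j → x * y ∈ 𝒞 (i + j))
    (φ : C.A →ₐ[ℚ] R) (hφ : ∀ i, φ (u i) ∈ 𝒞 (n i)) {k : ℕ} {x : C.A}
    (hx : x ∈ C.grading k) : φ x ∈ 𝒞 k :=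
  (grading_eq_of_gen h.gen (fun k => C.grading k ⊓ (𝒞 k).comap φ.toLinearMap)
    (fun i => inf_le_left) ⟨C.one_deg, by simpa using h1⟩
    (fun i j x y hx hy => ⟨C.mul_deg hx.1 hy.1, by
      simpa using hmul i j _ _ hx.2 hy.2⟩)
    (fun i => ⟨h.mem i, hφ i⟩) hx).2

lemma hom_ext (h : C.FreeOn u n) {R : Type*} [Semiring R] [Algebra ℚ R] {φ ψ : C.A →ₐ[ℚ] R}
    (hh : ∀ i, φ (u i) = ψ (u i)) : φ = ψ :=
  AlgHom.ext_of_adjoin_eq_top h.gen (by rintro _ ⟨i, rfl⟩; exact hh i)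

/-- The degree `k - m` part, or zero if `k < m`. -/
def low (C : CDGA) (k m : ℕ) : Submodule ℚ C.A := if m ≤ k then C.grading (k - m) else ⊥

lemma low_mul_left {i j m : ℕ} {a x : C.A} (ha : a ∈ C.grading i) (hx : x ∈ low C j m) :
    a * x ∈ low C (i + j) m := by
  unfold low at *
  split_ifs at hx with h
  · rw [if_pos (by omega)]
    have := C.mul_deg ha hx
    rwa [show i + j - m = i + (j - m) by omega]
  · rw [Submodule.mem_bot] at hx
    rw [hx, mul_zero]; exact zero_mem _

lemma low_mul_right {i j m : ℕ} {a x : C.A} (ha : a ∈ C.grading j) (hx : x ∈ low C i m) :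
    x * a ∈ low C (i + j) m := by
  unfold low at *
  split_ifs at hx with h
  · rw [if_pos (by omega)]
    have := C.mul_deg hx ha
    rwa [show i + j - m = i - m + j by omega]
  · rw [Submodule.mem_bot] at hx
    rw [hx, zero_mul]; exact zero_mem _

lemma low_comm {i j m : ℕ} {a x : C.A} (ha : a ∈ C.grading i) (hx : x ∈ low C j m) :
    ((-1 : ℚ) ^ (m * i)) • (a * x) = ((-1 : ℚ) ^ (i * j)) • (x * a) := by
  unfold low at *
  split_ifs at hx with h
  · rw [C.gcomm ha hx, smul_smul, ← pow_add]
    congr 2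
    obtain ⟨k, rfl⟩ := Nat.exists_eq_add_of_le h
    rw [Nat.add_sub_cancel_left]; ring
  · rw [Submodule.mem_bot] at hx
    rw [hx]; simp

/-- The matrices `!![(-1) ^ (m * k) a, x; 0, a]` with `a` of degree `k` and `x` of degree `k - m`:
algebra maps into these are graded derivations of degree `-m`. -/
def derMat (C : CDGA) (m k : ℕ) : Submodule ℚ (Matrix (Fin 2) (Fin 2) C.A) where
  carrier := {M | M 1 1 ∈ C.grading k ∧ M 0 0 = ((-1 : ℚ) ^ (m * k)) • M 1 1 ∧ M 1 0 = 0 ∧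
    M 0 1 ∈ low C k m}
  zero_mem' := by simp
  add_mem' := by
    rintro M N ⟨h1, h2, h3, h4⟩ ⟨k1, k2, k3, k4⟩
    refine ⟨add_mem h1 k1, ?_, ?_, add_mem h4 k4⟩
    · simp [h2, k2]
    · simp [h3, k3]
  smul_mem' := by
    rintro c M ⟨h1, h2, h3, h4⟩
    refine ⟨Submodule.smul_mem _ _ h1, ?_, ?_, Submodule.smul_mem _ _ h4⟩
    · simp only [Matrix.smul_apply, h2, smul_comm c]
    · simp [h3]

/-- Existence of graded derivations of degree `-m` with prescribed values on free generators. -/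
theorem exists_deriv (h : C.FreeOn u n) (m : ℕ) (x : ι → C.A) (hx : ∀ i, x i ∈ low C (n i) m) :
    ∃ f : C.A →ₗ[ℚ] C.A, C.IsDer m f ∧ (∀ i, f (u i) = x i) ∧
      (∀ k a, a ∈ C.grading k → f a ∈ low C k m) := by
  have h1 : (1 : Matrix (Fin 2) (Fin 2) C.A) ∈ derMat C m 0 := by
    refine ⟨?_, ?_, ?_, ?_⟩ <;> simp [C.one_deg]
  have hmul : ∀ i j (M N : Matrix (Fin 2) (Fin 2) C.A), M ∈ derMat C m i → N ∈ derMat C m j →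
      M * N ∈ derMat C m (i + j) := by
    rintro i j M N ⟨h1, h2, h3, h4⟩ ⟨k1, k2, k3, k4⟩
    refine ⟨?_, ?_, ?_, ?_⟩
    · simpa [Matrix.mul_apply, h3] using C.mul_deg h1 k1
    · simp [Matrix.mul_apply, h3, k3, h2, k2, smul_smul, ← pow_add, mul_add, add_comm]
    · simp [Matrix.mul_apply, h3, k3]
    · simp only [Matrix.mul_apply, Fin.sum_univ_two, h2]
      refine add_mem ?_ (low_mul_right k1 h4)
      rw [smul_mul_assoc]
      exact Submodule.smul_mem _ _ (low_mul_left h1 k4)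
  obtain ⟨φ, hφ⟩ := h.lift (Matrix (Fin 2) (Fin 2) C.A) (derMat C m) h1 hmul
    (by
      rintro i j M N ⟨h1, h2, h3, h4⟩ ⟨k1, k2, k3, k4⟩
      ext a b
      fin_cases a <;> fin_cases b
      · simp only [Matrix.mul_apply, Fin.sum_univ_two, Matrix.smul_apply]
        simp only [Fin.zero_eta, Fin.isValue, h2, k2, h3, k3, mul_zero, add_zero,
          smul_mul_smul_comm]
        rw [C.gcomm h1 k1, smul_smul, smul_smul]
        congr 1
        ring
      · simp only [Matrix.mul_apply, Fin.sum_univ_two, Matrix.smul_apply]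
        simp only [Fin.zero_eta, Fin.isValue, Fin.mk_one, h2, k2, smul_mul_assoc]
        have e : (-1 : ℚ) ^ (i * j) * (-1 : ℚ) ^ (j * i) = 1 := by
          rw [← pow_add, mul_comm j i, ← two_mul, pow_mul]; simp
        rw [low_comm h1 k4, low_comm k1 h4, smul_add, smul_smul, e, one_smul]
        exact add_comm _ _
      · simp [Matrix.mul_apply, h3, k3]
      · simp [Matrix.mul_apply, h3, k3, C.gcomm h1 k1])
    (fun i => !![C.sg m (u i), x i; 0, u i])
    (fun i => ⟨by simpa using h.mem i, by simp [C.sg_of_mem m (h.mem i)], by simp, by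
      simpa using hx i⟩)
  have key : ∀ a, φ a 0 0 = C.sg m a ∧ φ a 1 0 = 0 ∧ φ a 1 1 = a := by
    intro a
    have ha : a ∈ Algebra.adjoin ℚ (Set.range u) := by rw [h.gen]; trivial
    induction ha using Algebra.adjoin_induction with
    | mem x hx =>
      obtain ⟨i, rfl⟩ := hx
      simp [hφ]
    | algebraMap r => simp [Matrix.algebraMap_matrix_apply]
    | add x y _ _ hx hy =>
      simp only [map_add, Matrix.add_apply, hx, hy]
      simp
    | mul x y _ _ hx hy =>
      simp [map_mul, Matrix.mul_apply, hx, hy]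
  refine ⟨⟨⟨fun a => φ a 0 1, by simp⟩, by simp⟩, ?_, ?_, ?_⟩
  · intro a b
    simp [Matrix.mul_apply, key, add_comm]
  · intro i
    simp [hφ]
  · intro k a ha
    have := h.map_mem (derMat C m) h1 hmul φ (fun i => by
      rw [hφ]
      exact ⟨by simpa using h.mem i, by simp [C.sg_of_mem m (h.mem i)], by simp, by
      simpa using hx i⟩) ha
    exact this.2.2.2

end FreeOn

end CDGA

end RHT

end

/-! ### Generators of a Sullivan algebra -/

noncomputable section

namespace RHT

namespace CDGA.FreeOn

variable {C : CDGA} {ι : Type} {u : ι → C.A} {n : ι → ℕ}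

lemma grading_zero (h : C.FreeOn u n) (hn : ∀ i, n i ≠ 0) {x : C.A} (hx : x ∈ C.grading 0) :
    ∃ c : ℚ, x = c • 1 := by
  have := grading_eq_of_gen h.gen
    (fun k => if k = 0 then Submodule.span ℚ {1} else C.grading k)
    (by
      intro i
      split_ifs with hi
      · subst hi
        rw [Submodule.span_singleton_le_iff_mem]
        exact C.one_deg
      · exact le_rfl)
    (by simp [Submodule.mem_span_singleton_self (1 : C.A)])
    (by
      intro i j x y hx hy
      rcases Nat.eq_zero_or_pos i with rfl | hi
      · rw [if_pos rfl] at hx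
        obtain ⟨c, rfl⟩ := Submodule.mem_span_singleton.mp hx
        rw [zero_add, smul_mul_assoc, one_mul]
        exact Submodule.smul_mem _ _ hy
      · rcases Nat.eq_zero_or_pos j with rfl | hj
        · rw [if_pos rfl] at hy
          obtain ⟨c, rfl⟩ := Submodule.mem_span_singleton.mp hy
          rw [add_zero, mul_smul_comm, mul_one]
          exact Submodule.smul_mem _ _ hx
        · rw [if_neg hi.ne'] at hx
          rw [if_neg hj.ne'] at hy
          rw [if_neg (by omega)]
          exact C.mul_deg hx hy)
    (fun i => by rw [if_neg (hn i)]; exact h.mem i) hx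
  rw [if_pos rfl] at this
  obtain ⟨c, hc⟩ := Submodule.mem_span_singleton.mp this
  exact ⟨c, hc.symm⟩

lemma nontrivial (h : C.FreeOn u n) : Nontrivial C.A := by
  obtain ⟨φ, -⟩ := h.lift ℚ (fun k => if k = 0 then ⊤ else ⊥) (by simp)
    (by
      intro i j x y hx hy
      rcases Nat.eq_zero_or_pos i with rfl | hi
      · rcases Nat.eq_zero_or_pos j with rfl | hj
        · simp
        · rw [if_neg hj.ne', Submodule.mem_bot] at hy
          simp [hy]
      · rw [if_neg hi.ne', Submodule.mem_bot] at hx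
        simp [hx])
    (by
      intro i j x y hx hy
      rcases Nat.eq_zero_or_pos i with rfl | hi
      · simp [mul_comm]
      · rw [if_neg hi.ne', Submodule.mem_bot] at hx
        simp [hx])
    (fun _ => 0) (by simp)
  exact φ.toRingHom.domain_nontrivial

end CDGA.FreeOn

namespace Sullivan

variable (S : Sullivan)

/-- Index type of a homogeneous basis of the generating space. -/
abbrev Idx : Type := Σ i : ℕ, Fin (Module.finrank ℚ (S.V i))

/-- A homogeneous basis of the generating space. -/
def bas (k : S.Idx) : S.A :=
  haveI := S.V_fin k.1
  (Module.finBasis ℚ (S.V k.1) k.2 : S.A)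

lemma bas_mem (k : S.Idx) : S.bas k ∈ S.V k.1 := Subtype.property _

lemma V_le_span (i : ℕ) : S.V i ≤ Submodule.span ℚ (Set.range S.bas) := by
  have := S.V_fin i
  intro x hx
  have := (Module.finBasis ℚ (S.V i)).sum_repr ⟨x, hx⟩
  have h2 := congrArg Subtype.val this
  rw [show x = _ from h2.symm]
  simp only [Submodule.coe_sum, Submodule.coe_smul]
  exact Submodule.sum_mem _ fun j _ => Submodule.smul_mem _ _
    (Submodule.subset_span ⟨⟨i, j⟩, rfl⟩)

lemma two_le (k : S.Idx) : 2 ≤ k.1 := by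
  obtain ⟨i, j⟩ := k
  show 2 ≤ i
  by_contra h
  have : S.V i = ⊥ := by
    interval_cases i
    · exact S.V_zero
    · exact S.V_one
  have h0 : Module.finrank ℚ (S.V i) = 0 := by rw [this]; simp
  rw [h0] at j
  exact j.elim0

lemma freeOn : S.toCDGA.FreeOn S.bas (fun k => k.1) where
  mem k := S.V_le _ (S.bas_mem k)
  gen := by
    rw [eq_top_iff, ← S.generates]
    refine Algebra.adjoin_le ?_
    intro x hx
    obtain ⟨i, hi⟩ := Set.mem_iUnion.mp hx
    exact Algebra.span_le_adjoin ℚ _ (S.V_le_span i hi)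
  lift := by
    intro R _ _ 𝒞 h1 hmul hcomm c hc
    obtain ⟨φ, hφ, -⟩ := S.free R 𝒞 h1 hmul hcomm
      (fun i => haveI := S.V_fin i
        (Module.finBasis ℚ (S.V i)).constr ℚ (fun j => c ⟨i, j⟩))
      (by
        intro i v
        have := S.V_fin i
        rw [Module.Basis.constr_apply]
        exact Submodule.sum_mem _ fun j _ => Submodule.smul_mem _ _ (hc ⟨i, j⟩))
    refine ⟨φ, fun k => ?_⟩
    have := S.V_fin k.1
    have := hφ k.1 (Module.finBasis ℚ (S.V k.1) k.2)
    rw [Module.Basis.constr_basis] at this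
    exact this

variable {S}

lemma finite_idx (h : ∃ N, ∀ i, N ≤ i → S.V i = ⊥) : Finite S.Idx := by
  obtain ⟨N, hN⟩ := h
  have key : ∀ k : S.Idx, k.1 < N := by
    rintro ⟨i, j⟩
    show i < N
    by_contra hi
    have h0 : Module.finrank ℚ (S.V i) = 0 := by rw [hN i (by omega)]; simp
    rw [h0] at j
    exact j.elim0
  refine Finite.of_injective
    (fun k : S.Idx => (⟨⟨k.1, key k⟩, k.2⟩ : Σ i : Fin N, Fin (Module.finrank ℚ (S.V i)))) ?_
  rintro ⟨i, j⟩ ⟨i', j'⟩ h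
  simp only [Sigma.mk.injEq, Fin.mk.injEq] at h
  obtain ⟨rfl, h⟩ := h
  rw [eq_of_heq h]

lemma genSpan_le_plus : S.genSpan ≤ S.toCDGA.plus := by
  refine iSup_le fun i x hx => ?_
  rcases Nat.eq_zero_or_pos i with rfl | hi
  · rw [S.V_zero, Submodule.mem_bot] at hx
    rw [hx]; exact zero_mem _
  · exact S.toCDGA.mem_plus_of_mem hi.ne' (S.V_le _ hx)

lemma Minimal.d_bas (h : S.Minimal) (k : S.Idx) :
    S.d (S.bas k) ∈ S.toCDGA.plus * S.toCDGA.plus := by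
  have h1 := h _ (Submodule.mem_iSup_of_mem k.1 (S.bas_mem k))
  refine (?_ : S.lengthGE 2 ≤ _) h1
  rw [lengthGE, pow_two, mul_assoc]
  refine mul_le_mul' genSpan_le_plus ?_
  rw [Submodule.mul_le]
  exact fun m hm x _ => S.toCDGA.plus_mul_right x (genSpan_le_plus hm)

end Sullivan

end RHT

end

/-! ### The acyclic ideal attached to formality -/

noncomputable section

namespace RHT

namespace CDGA

/-- A homogeneous ideal `K` containing all coboundaries, acyclic for the differential, and
spanning the algebra together with the cocycles: the projection to the quotient by `K` is a
quasi-isomorphism onto an algebra with zero differential. -/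
structure FormalIdeal (C : CDGA) (K : Submodule ℚ C.A) : Prop where
  homog : C.Homog K
  mul_left : ∀ a, ∀ x ∈ K, a * x ∈ K
  d_mem : ∀ x, C.d x ∈ K
  sup : ∀ x, ∃ k ∈ K, C.d (x - k) = 0
  acyc : ∀ x ∈ K, C.d x = 0 → ∃ y ∈ K, C.d y = x

lemma FormalIdeal.mul_right {C : CDGA} {K : Submodule ℚ C.A} (h : C.FormalIdeal K)
    (a : C.A) {x : C.A} (hx : x ∈ K) : x * a ∈ K :=
  h.homog.mul_right h.mul_left a hx

lemma FormalIdeal.acyc_homog {C : CDGA} {K : Submodule ℚ C.A} (h : C.FormalIdeal K)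
    {i : ℕ} {x : C.A} (hx : x ∈ K) (hi : x ∈ C.grading (i + 1)) (hd : C.d x = 0) :
    ∃ y ∈ K, y ∈ C.grading i ∧ C.d y = x := by
  obtain ⟨y, hy, rfl⟩ := h.acyc x hx hd
  exact ⟨C.pr i y, h.homog i y hy, C.pr_mem i y, by rw [← C.pr_d, C.pr_of_mem hi]⟩

lemma map_pr {C D : CDGA} (f : Hom C D) (i : ℕ) (x : C.A) :
    f.toAlgHom (C.pr i x) = D.pr i (f.toAlgHom x) := by
  refine C.homog_induction
    (p := fun x => f.toAlgHom (C.pr i x) = D.pr i (f.toAlgHom x)) ?_ ?_ x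
  · intro j x hx
    by_cases h : j = i
    · subst h
      rw [C.pr_of_mem hx, D.pr_of_mem (f.map_grading hx)]
    · rw [C.pr_of_mem_ne hx h, D.pr_of_mem_ne (f.map_grading hx) h, map_zero]
  · intro x y hx hy
    simp only [map_add, hx, hy]

lemma exists_formalIdeal {C : CDGA} (h : Formal C) : ∃ K, C.FormalIdeal K := by
  obtain ⟨H, f, hH, hs, hi⟩ := h
  have hE : ∀ y, H.IsExact y ↔ y = 0 := fun y =>
    ⟨fun ⟨z, hz⟩ => by rw [← hz, hH], fun h => ⟨0, by rw [h, map_zero]⟩⟩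
  have hsup : ∀ x, ∃ k ∈ LinearMap.ker f.toAlgHom.toLinearMap, C.d (x - k) = 0 := by
    intro x
    obtain ⟨z, hz, he⟩ := hs (f.toAlgHom x) (hH _)
    rw [hE] at he
    refine ⟨x - z, ?_, by rw [sub_sub_cancel, hz]⟩
    rw [LinearMap.mem_ker, AlgHom.toLinearMap_apply, map_sub, ← neg_sub, he, neg_zero]
  refine ⟨LinearMap.ker f.toAlgHom.toLinearMap, ?_, ?_, ?_, hsup, ?_⟩
  · intro i x hx
    rw [LinearMap.mem_ker, AlgHom.toLinearMap_apply] at hx ⊢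
    rw [map_pr, hx, map_zero]
  · intro a x hx
    rw [LinearMap.mem_ker, AlgHom.toLinearMap_apply] at hx ⊢
    rw [map_mul, hx, mul_zero]
  · intro x
    rw [LinearMap.mem_ker, AlgHom.toLinearMap_apply, f.comm_d, hH]
  · intro x hx hd
    rw [LinearMap.mem_ker, AlgHom.toLinearMap_apply] at hx
    obtain ⟨y, rfl⟩ := hi x hd ((hE _).mpr hx)
    obtain ⟨k, hk, hk'⟩ := hsup y
    exact ⟨k, hk, by rw [map_sub, sub_eq_zero] at hk'; exact hk'.symm⟩

namespace FreeOn

variable {C : CDGA} {ι : Type} {u : ι → C.A} {n : ι → ℕ}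

/-- The subalgebra generated by the generators of degree less than `k`. -/
def adj (u : ι → C.A) (n : ι → ℕ) (k : ℕ) : Subalgebra ℚ C.A :=
  Algebra.adjoin ℚ (u '' {i | n i < k})

lemma adj_mono {j k : ℕ} (h : j ≤ k) : adj u n j ≤ adj u n k :=
  Algebra.adjoin_mono (Set.image_mono fun _ hi => lt_of_lt_of_le hi h)

lemma mem_adj {i : ι} {k : ℕ} (h : n i < k) : u i ∈ adj u n k :=
  Algebra.subset_adjoin ⟨i, h, rfl⟩

lemma grading_le_adj (h : C.FreeOn u n) {k : ℕ} {x : C.A} (hx : x ∈ C.grading k) :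
    x ∈ adj u n (k + 1) :=
  (grading_eq_of_gen h.gen
    (fun k => C.grading k ⊓ Subalgebra.toSubmodule (adj u n (k + 1))) (fun _ => inf_le_left)
    ⟨C.one_deg, Subalgebra.one_mem _⟩
    (fun i j _ _ hx hy => ⟨C.mul_deg hx.1 hy.1, Subalgebra.mul_mem _
      (adj_mono (by omega) hx.2) (adj_mono (by omega) hy.2)⟩)
    (fun i => ⟨h.mem i, mem_adj (by omega)⟩) hx).2

lemma grading_one (h : C.FreeOn u n) (hn : ∀ i, 2 ≤ n i) {x : C.A} (hx : x ∈ C.grading 1) :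
    x = 0 := by
  have h1 := h.grading_le_adj hx
  have h2 : x ∈ C.grading 0 := by
    have : (u '' {i | n i < 1 + 1}) = ∅ := by
      rw [Set.image_eq_empty]
      ext i
      have := hn i
      simp; omega
    rw [adj, this, Algebra.adjoin_empty, Algebra.mem_bot] at h1
    obtain ⟨c, rfl⟩ := h1
    rw [Algebra.algebraMap_eq_smul_one]
    exact Submodule.smul_mem _ _ C.one_deg
  rw [← C.pr_of_mem hx, C.pr_of_mem_ne h2 (by omega)]

/-- A decomposable element of degree `k + 1` only involves generators of degree less than `k`. -/
lemma decomposable_mem_adj (h : C.FreeOn u n) (hn : ∀ i, 2 ≤ n i) {k : ℕ} {x : C.A}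
    (hx : x ∈ C.plus * C.plus) : C.pr (k + 1) x ∈ adj u n k := by
  refine Submodule.mul_induction_on hx ?_ ?_
  · intro a ha b hb
    obtain ⟨s, hs⟩ := C.exists_sum_pr a
    obtain ⟨t, ht⟩ := C.exists_sum_pr b
    rw [← hs, ← ht, Finset.sum_mul_sum, map_sum]
    refine Subalgebra.sum_mem _ fun i _ => ?_
    rw [map_sum]
    refine Subalgebra.sum_mem _ fun j _ => ?_
    rcases Nat.lt_or_ge i 2 with hi | hi
    · have : C.pr i a = 0 := by
        interval_cases i
        · exact ha
        · exact h.grading_one hn (C.pr_mem _ _)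
      rw [this, zero_mul, map_zero]
      exact Subalgebra.zero_mem _
    rcases Nat.lt_or_ge j 2 with hj | hj
    · have : C.pr j b = 0 := by
        interval_cases j
        · exact hb
        · exact h.grading_one hn (C.pr_mem _ _)
      rw [this, mul_zero, map_zero]
      exact Subalgebra.zero_mem _
    have hm := C.mul_deg (C.pr_mem i a) (C.pr_mem j b)
    by_cases hk : i + j = k + 1
    · rw [hk] at hm
      rw [C.pr_of_mem hm]
      exact Subalgebra.mul_mem _ (adj_mono (by omega) (h.grading_le_adj (C.pr_mem i a)))
        (adj_mono (by omega) (h.grading_le_adj (C.pr_mem j b)))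
    · rw [C.pr_of_mem_ne hm hk]
      exact Subalgebra.zero_mem _
  · intro a b ha hb
    rw [map_add]
    exact Subalgebra.add_mem _ ha hb

lemma d_gen_mem_adj (h : C.FreeOn u n) (hn : ∀ i, 2 ≤ n i)
    (hd : ∀ i, C.d (u i) ∈ C.plus * C.plus) (i : ι) : C.d (u i) ∈ adj u n (n i) := by
  have := h.decomposable_mem_adj hn (k := n i) (hd i)
  rwa [C.pr_of_mem (C.d_mem (h.mem i))] at this

lemma d_mem_adj (h : C.FreeOn u n) (hn : ∀ i, 2 ≤ n i)
    (hd : ∀ i, C.d (u i) ∈ C.plus * C.plus) {k : ℕ} {x : C.A} (hx : x ∈ adj u n k) :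
    C.d x ∈ adj u n k := by
  have hsg : ∀ y ∈ adj u n k, C.sg 1 y ∈ adj u n k := by
    intro y hy
    induction hy using Algebra.adjoin_induction with
    | mem x hx =>
      obtain ⟨i, hi, rfl⟩ := hx
      rw [C.sg_of_mem 1 (h.mem i)]
      exact Subalgebra.smul_mem _ (mem_adj hi) _
    | algebraMap r => rw [AlgHom.commutes]; exact Subalgebra.algebraMap_mem _ _
    | add x y _ _ hx hy => rw [map_add]; exact add_mem hx hy
    | mul x y _ _ hx hy => rw [map_mul]; exact mul_mem hx hy
  induction hx using Algebra.adjoin_induction with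
  | mem x hx =>
    obtain ⟨i, hi, rfl⟩ := hx
    exact adj_mono (le_of_lt hi) (h.d_gen_mem_adj hn hd i)
  | algebraMap r =>
    rw [Algebra.algebraMap_eq_smul_one, map_smul, C.d_one, smul_zero]
    exact zero_mem _
  | add x y _ _ hx hy => rw [map_add]; exact add_mem hx hy
  | mul x y hx' hy' hx hy =>
    rw [C.leib]; exact add_mem (mul_mem hx hy') (mul_mem (hsg _ hx') hy)

lemma low_zero {k : ℕ} : low C k 0 = C.grading k := by simp [low]

lemma isDer_comm_d {f : C.A →ₗ[ℚ] C.A} (hf : C.IsDer 0 f)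
    (hdeg : ∀ k a, a ∈ C.grading k → f a ∈ C.grading k) :
    C.IsDer 1 (C.d ∘ₗ f - f ∘ₗ C.d) := by
  have hs : ∀ a, f (C.sg 1 a) = C.sg 1 (f a) := by
    intro a
    refine C.homog_induction (p := fun a => f (C.sg 1 a) = C.sg 1 (f a)) ?_ ?_ a
    · intro i x hx
      rw [C.sg_of_mem 1 hx, C.sg_of_mem 1 (hdeg i x hx), map_smul]
    · intro x y hx hy
      simp only [map_add, hx, hy]
  intro a b
  simp only [LinearMap.sub_apply, LinearMap.comp_apply, hf _ _, C.leib, map_add, C.sg_zero, hs]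
  noncomm_ring

/-- The Euler-type derivation of a formal minimal model: a degree `0` derivation with values in
the acyclic ideal `K` satisfying `[d, ℓ] = d`. Its generalized eigenspaces give the lower grading of
the bigraded model. -/
theorem exists_euler [Finite ι] (h : C.FreeOn u n) (hn : ∀ i, 2 ≤ n i)
    (hd : ∀ i, C.d (u i) ∈ C.plus * C.plus) {K : Submodule ℚ C.A} (hK : C.FormalIdeal K) :
    ∃ f : C.A →ₗ[ℚ] C.A, C.IsDer 0 f ∧ (∀ k a, a ∈ C.grading k → f a ∈ C.grading k) ∧
      (∀ a, f a ∈ K) ∧ ∀ a, C.d (f a) = f (C.d a) + C.d a := by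
  classical
  have key : ∀ k : ℕ, ∃ f : C.A →ₗ[ℚ] C.A, C.IsDer 0 f ∧
      (∀ k a, a ∈ C.grading k → f a ∈ C.grading k) ∧
      ∀ a ∈ adj u n k, f a ∈ K ∧ C.d (f a) = f (C.d a) + C.d a := by
    intro k
    induction k with
    | zero =>
      refine ⟨0, fun a b => by simp, fun k a _ => by simp, fun a ha => ?_⟩
      have : u '' {i | n i < 0} = ∅ := by simp
      rw [adj, this, Algebra.adjoin_empty, Algebra.mem_bot] at ha
      obtain ⟨c, rfl⟩ := ha
      simp [Algebra.algebraMap_eq_smul_one, C.d_one]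
    | succ k ih =>
      obtain ⟨f, hf, hfd, hfK⟩ := ih
      have hex : ∀ i, n i = k → ∃ y ∈ K, y ∈ C.grading (n i) ∧
          C.d y = f (C.d (u i)) + C.d (u i) := by
        intro i hi
        have h1 := h.d_gen_mem_adj hn hd i
        rw [hi] at h1
        have h2 := hfK _ h1
        refine hK.acyc_homog (add_mem h2.1 (hK.d_mem _))
          (add_mem (hfd _ _ (C.d_mem (h.mem i))) (C.d_mem (h.mem i))) ?_
        rw [map_add, h2.2, C.d_sq, map_zero, add_zero, add_zero]
      choose! y hyK hyd hy using hex
      obtain ⟨g, hg, hgu, hgd⟩ := h.exists_deriv 0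
        (fun i => if n i < k then f (u i) else if n i = k then y i else 0) (by
          intro i
          rw [low_zero]
          split_ifs with h1 h2
          · exact hfd _ _ (h.mem i)
          · exact hyd i h2
          · exact zero_mem _)
      simp only [low_zero] at hgd
      have hfg : ∀ a ∈ adj u n k, g a = f a := by
        intro a ha
        have := (hg.sub hf).eq_zero_of_gen (s := u '' {i | n i < k}) (by
          rintro _ ⟨i, hi, rfl⟩
          rw [LinearMap.sub_apply, hgu, if_pos (show n i < k from hi), sub_self]) ha
        rwa [LinearMap.sub_apply, sub_eq_zero] at this
      refine ⟨g, hg, hgd, fun a ha => ⟨?_, ?_⟩⟩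
      · refine hg.mem_of_gen K hK.mul_left (fun a x hx => hK.mul_right a hx) ?_ ha
        rintro _ ⟨i, hi, rfl⟩
        rw [hgu]
        split_ifs with h1 h2
        · exact (hfK _ (mem_adj h1)).1
        · exact hyK i h2
        · exact zero_mem _
      · have := ((isDer_comm_d hg hgd).sub C.isDer_d).eq_zero_of_gen
          (s := u '' {i | n i < k + 1}) (by
            rintro _ ⟨i, hi, rfl⟩
            have hi' : n i < k + 1 := hi
            have hle : n i ≤ k := by omega
            have e1 := hfg _ (adj_mono hle (h.d_gen_mem_adj hn hd i))
            simp only [LinearMap.sub_apply, LinearMap.comp_apply, e1, hgu]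
            split_ifs with h1 h2
            · rw [(hfK _ (mem_adj h1)).2]; abel
            · rw [hy i h2]; abel
            · omega) ha
        simp only [LinearMap.sub_apply, LinearMap.comp_apply] at this
        rw [sub_sub, sub_eq_zero] at this
        exact this
  obtain ⟨N, hN⟩ : ∃ N, ∀ i, n i < N := by
    obtain ⟨N, hN⟩ := (Set.finite_range n).bddAbove
    exact ⟨N + 1, fun i => Nat.lt_succ_of_le (hN ⟨i, rfl⟩)⟩
  obtain ⟨f, h1, h2, h3⟩ := key N
  have htop : ∀ a, a ∈ adj u n N := by
    intro a
    have : u '' {i | n i < N} = Set.range u := by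
      simp [hN]
    rw [adj, this, h.gen]; trivial
  exact ⟨f, h1, h2, fun a => (h3 a (htop a)).1, fun a => (h3 a (htop a)).2⟩

end FreeOn

end CDGA

end RHT

end

/-! ### Projections of an internal direct sum -/

noncomputable section

namespace RHT

section Comp

variable {A : Type} [AddCommGroup A] [Module ℚ A] {E : ℕ → Submodule ℚ A}

lemma bij_coe (h : DirectSum.IsInternal E) :
    Function.Bijective (DirectSum.coeLinearMap E) := h

/-- The projection onto the `p`-th summand of an internal direct sum. -/
def comp (h : DirectSum.IsInternal E) (p : ℕ) : A →ₗ[ℚ] A :=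
  (E p).subtype ∘ₗ DirectSum.component ℚ ℕ (fun i => E i) p ∘ₗ
    (LinearEquiv.ofBijective (DirectSum.coeLinearMap E) (bij_coe h)).symm.toLinearMap

variable (h : DirectSum.IsInternal E)

lemma comp_mem (p : ℕ) (x : A) : comp h p x ∈ E p := Subtype.property _

lemma comp_symm {p : ℕ} {x : A} (hx : x ∈ E p) :
    (LinearEquiv.ofBijective (DirectSum.coeLinearMap E) (bij_coe h)).symm x
      = DirectSum.lof ℚ ℕ (fun i => E i) p ⟨x, hx⟩ := by
  rw [LinearEquiv.symm_apply_eq]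
  exact (DirectSum.coeLinearMap_lof E p ⟨x, hx⟩).symm

lemma comp_of_mem {p : ℕ} {x : A} (hx : x ∈ E p) : comp h p x = x := by
  simp [comp, comp_symm h hx, DirectSum.component.lof_self]

lemma comp_of_mem_ne {p q : ℕ} {x : A} (hx : x ∈ E p) (hpq : p ≠ q) : comp h q x = 0 := by
  simp [comp, comp_symm h hx, DirectSum.component.of, hpq]

include h in
theorem comp_induction {P : A → Prop} (h0 : ∀ p, ∀ x ∈ E p, P x)
    (ha : ∀ x y, P x → P y → P (x + y)) (x : A) : P x := by
  have hx : x ∈ ⨆ p, E p := by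
    rw [h.submodule_iSup_eq_top]; trivial
  exact Submodule.iSup_induction _ (motive := P) hx (fun p x hx => h0 p x hx)
    (h0 0 0 (zero_mem _)) ha

lemma exists_sum_comp (x : A) :
    ∃ m : ℕ, ∀ n, m ≤ n → ∑ p ∈ Finset.range n, comp h p x = x := by
  refine comp_induction h (P := fun x => ∃ m : ℕ, ∀ n, m ≤ n →
    ∑ p ∈ Finset.range n, comp h p x = x) ?_ ?_ x
  · intro p x hx
    refine ⟨p + 1, fun n hn => ?_⟩
    rw [Finset.sum_eq_single p, comp_of_mem h hx]
    · intro q _ hq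
      exact comp_of_mem_ne h hx hq.symm
    · intro hp
      simp at hp; omega
  · rintro x y ⟨m, hm⟩ ⟨m', hm'⟩
    refine ⟨max m m', fun n hn => ?_⟩
    simp only [map_add, Finset.sum_add_distrib]
    rw [hm n (by omega), hm' n (by omega)]

lemma comp_lin_ext {M : Type*} [AddCommMonoid M] [Module ℚ M] (h : DirectSum.IsInternal E)
    {f g : A →ₗ[ℚ] M} (hfg : ∀ p, ∀ x ∈ E p, f x = g x) : f = g := by
  ext x
  refine comp_induction h (P := fun x => f x = g x) hfg ?_ x
  intro x y hx hy
  rw [map_add, map_add, hx, hy]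

/-- A map shifting the summands down by one commutes with the projections. -/
lemma comp_shift {f : A →ₗ[ℚ] A} (h0 : ∀ x ∈ E 0, f x = 0)
    (hs : ∀ p, ∀ x ∈ E (p + 1), f x ∈ E p) (p : ℕ) (x : A) :
    comp h p (f x) = f (comp h (p + 1) x) := by
  refine LinearMap.congr_fun (f := comp h p ∘ₗ f) (g := f ∘ₗ comp h (p + 1))
    (comp_lin_ext h ?_) x
  intro q x hx
  simp only [LinearMap.comp_apply]
  cases q with
  | zero => rw [h0 x hx, comp_of_mem_ne h hx (by omega), map_zero, map_zero]
  | succ q =>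
    by_cases hq : q = p
    · subst hq
      rw [comp_of_mem h hx, comp_of_mem h (hs _ _ hx)]
    · rw [comp_of_mem_ne h hx (by omega), comp_of_mem_ne h (hs _ _ hx) hq, map_zero]

/-- A map preserving the summands commutes with the projections. -/
lemma comp_pres {f : A →ₗ[ℚ] A} (hs : ∀ p, ∀ x ∈ E p, f x ∈ E p) (p : ℕ) (x : A) :
    comp h p (f x) = f (comp h p x) := by
  refine LinearMap.congr_fun (f := comp h p ∘ₗ f) (g := f ∘ₗ comp h p)
    (comp_lin_ext h ?_) x
  intro q x hx
  simp only [LinearMap.comp_apply]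
  by_cases hq : q = p
  · subst hq
    rw [comp_of_mem h hx, comp_of_mem h (hs _ _ hx)]
  · rw [comp_of_mem_ne h hx hq, comp_of_mem_ne h (hs _ _ hx) hq, map_zero]

end Comp

end RHT

end

/-! ### The lower grading of a formal algebra -/

noncomputable section

namespace RHT

namespace CDGA

/-- The lower grading of the bigraded model of a formal space: a second grading by subspaces
`E p`, compatible with products and degrees, for which `d` lowers `p` by one, and such that the
cohomology is concentrated in `E 0`. -/
structure LowGrading (C : CDGA) (E : ℕ → Submodule ℚ C.A) : Prop where
  one : (1 : C.A) ∈ E 0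
  mul : ∀ {i j} {x y : C.A}, x ∈ E i → y ∈ E j → x * y ∈ E (i + j)
  internal : DirectSum.IsInternal E
  homog : ∀ p, C.Homog (E p)
  d_zero : ∀ {x}, x ∈ E 0 → C.d x = 0
  d_succ : ∀ {p x}, x ∈ E (p + 1) → C.d x ∈ E p
  acyc : ∀ {p x}, x ∈ E (p + 1) → C.d x = 0 → ∃ y ∈ E (p + 2), C.d y = x

namespace FreeOn

open Polynomial

variable {C : CDGA} {ι : Type} {u : ι → C.A} {n : ι → ℕ}

section eigen

variable (f : Module.End ℚ C.A)

lemma mem_G_step {μ : ℚ} {x : C.A} (hx : f x - μ • x ∈ f.maxGenEigenspace μ) : x ∈ f.maxGenEigenspace μ := by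
  rw [Module.End.mem_maxGenEigenspace] at hx ⊢
  obtain ⟨k, hk⟩ := hx
  refine ⟨k + 1, ?_⟩
  rw [pow_succ, Module.End.mul_apply]
  simpa using hk

/-- Induction along `f - μ` on a generalized eigenspace. -/
lemma G_induction {μ : ℚ} {p : C.A → Prop} (h0 : p 0)
    (hs : ∀ x ∈ f.maxGenEigenspace μ, p (f x - μ • x) → p x) {x : C.A} (hx : x ∈ f.maxGenEigenspace μ) : p x := by
  rw [Module.End.mem_maxGenEigenspace] at hx
  obtain ⟨k, hk⟩ := hx
  induction k generalizing x with
  | zero =>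
    simp at hk
    rwa [hk]
  | succ k ih =>
    refine hs x ((Module.End.mem_maxGenEigenspace _ _ _).mpr ⟨k + 1, hk⟩) (ih ?_)
    rw [pow_succ, Module.End.mul_apply] at hk
    simpa using hk

lemma G_step_mem {μ : ℚ} {x : C.A} (hx : x ∈ f.maxGenEigenspace μ) : f x - μ • x ∈ f.maxGenEigenspace μ := by
  have h := (f.mapsTo_maxGenEigenspace_of_comm (Commute.refl f) μ) hx
  exact Submodule.sub_mem _ h (Submodule.smul_mem _ _ hx)

lemma G_mul (hf : C.IsDer 0 f) {μ ν : ℚ} {x y : C.A} (hx : x ∈ f.maxGenEigenspace μ) (hy : y ∈ f.maxGenEigenspace ν) :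
    x * y ∈ f.maxGenEigenspace (μ + ν) := by
  refine G_induction f (p := fun x => ∀ y ∈ f.maxGenEigenspace ν, x * y ∈ f.maxGenEigenspace (μ + ν)) ?_ ?_ hx y hy
  · intro y _; rw [zero_mul]; exact zero_mem _
  · intro x _ ih y hy
    refine G_induction f (p := fun y => x * y ∈ f.maxGenEigenspace (μ + ν)) ?_ ?_ hy
    · rw [mul_zero]; exact zero_mem _
    · intro y hy ih'
      refine mem_G_step f ?_
      have h1 := add_mem (ih y hy) ih'
      rw [hf, C.sg_zero]
      convert h1 using 1
      rw [sub_mul, mul_sub, add_smul, smul_mul_assoc, mul_smul_comm]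
      abel

lemma G_one (hf : C.IsDer 0 f) : (1 : C.A) ∈ f.maxGenEigenspace 0 := by
  refine mem_G_step f ?_
  rw [hf.one]; simp

/-- `f - μ` is surjective on the generalized eigenspaces for other eigenvalues. -/
lemma G_surj {μ ν : ℚ} (h : ν ≠ μ) {x : C.A} (hx : x ∈ f.maxGenEigenspace ν) :
    ∃ y ∈ f.maxGenEigenspace ν, f y - μ • y = x := by
  refine G_induction f (p := fun x => ∃ y ∈ f.maxGenEigenspace ν, f y - μ • y = x) ⟨0, zero_mem _, by simp⟩ ?_ hx
  rintro x hx ⟨y, hy, he⟩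
  have h' : ν - μ ≠ 0 := sub_ne_zero.mpr h
  refine ⟨(ν - μ)⁻¹ • (x - y), Submodule.smul_mem _ _ (sub_mem hx hy), ?_⟩
  have e1 : f (x - y) - μ • (x - y) = (ν - μ) • x := by
    have : f x - f y - μ • (x - y) = (f x - ν • x) - (f y - μ • y) + (ν - μ) • x := by
      rw [smul_sub, sub_smul]; abel
    rw [map_sub, this, he, sub_self, zero_add]
  rw [map_smul, smul_comm μ, ← smul_sub, e1, smul_smul, inv_mul_cancel₀ h', one_smul]

/-- The sum of the generalized eigenspaces for natural eigenvalues. -/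
def natSum : Submodule ℚ C.A := ⨆ p : ℕ, f.maxGenEigenspace (p : ℚ)

/-- The operator `f - p` maps the sum of the eigenspaces onto itself up to the eigenspace of `p`, so
that this sum is saturated under `f - p`. -/
lemma mem_natSum_of_step (p : ℕ) {x : C.A} (hx : f x - (p : ℚ) • x ∈ natSum f) :
    x ∈ natSum f := by
  have key : ∀ w ∈ natSum f, ∃ s ∈ natSum f, w - (f s - (p : ℚ) • s) ∈ f.maxGenEigenspace (p : ℚ) := by
    intro w hw
    refine Submodule.iSup_induction _ (motive := fun w => ∃ s ∈ natSum f,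
      w - (f s - (p : ℚ) • s) ∈ f.maxGenEigenspace (p : ℚ)) hw ?_ ?_ ?_
    · intro q w hw
      by_cases h : q = p
      · subst h
        exact ⟨0, zero_mem _, by simpa using hw⟩
      · obtain ⟨y, hy, rfl⟩ := G_surj f (μ := p) (ν := q) (by exact_mod_cast h) hw
        exact ⟨y, Submodule.mem_iSup_of_mem q hy, by simp⟩
    · exact ⟨0, zero_mem _, by simp⟩
    · rintro a b ⟨s, hs, h1⟩ ⟨t, ht, h2⟩
      refine ⟨s + t, add_mem hs ht, ?_⟩
      convert add_mem h1 h2 using 1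
      rw [map_add, smul_add]; abel
  obtain ⟨s, hs, he⟩ := key _ hx
  have : x - s ∈ f.maxGenEigenspace (p : ℚ) := by
    refine mem_G_step f ?_
    convert he using 1
    rw [map_sub, smul_sub]; abel
  have h2 := add_mem (Submodule.mem_iSup_of_mem (p := fun p : ℕ => f.maxGenEigenspace (p : ℚ)) p this) hs
  rwa [sub_add_cancel] at h2

lemma exists_annihilator {x : C.A} (hx : x ∈ natSum f) :
    ∃ s : Multiset ℕ, aeval f (s.map fun p : ℕ => (X - Polynomial.C (p : ℚ))).prod x = 0 := by
  refine Submodule.iSup_induction _ (motive := fun x => ∃ s : Multiset ℕ,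
    aeval f (s.map fun p : ℕ => (X - Polynomial.C (p : ℚ))).prod x = 0) hx ?_ ?_ ?_
  · intro q x hx
    obtain ⟨k, hk⟩ := (Module.End.mem_maxGenEigenspace _ _ _).mp hx
    refine ⟨Multiset.replicate k q, ?_⟩
    rw [Multiset.map_replicate, Multiset.prod_replicate, map_pow, map_sub, aeval_X, aeval_C]
    exact hk
  · exact ⟨0, by simp⟩
  · rintro a b ⟨s, hs⟩ ⟨t, ht⟩
    refine ⟨s + t, ?_⟩
    rw [Multiset.map_add, Multiset.prod_add, map_add]
    nth_rewrite 1 [mul_comm]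
    rw [map_mul, map_mul, Module.End.mul_apply, Module.End.mul_apply, hs, ht, map_zero, map_zero,
      add_zero]

end eigen

/-- A formal minimal model with finitely many generators carries a lower grading. -/
theorem exists_lowGrading [Finite ι] (h : C.FreeOn u n) (hn : ∀ i, 2 ≤ n i)
    (hd : ∀ i, C.d (u i) ∈ C.plus * C.plus) {K : Submodule ℚ C.A} (hK : C.FormalIdeal K) :
    ∃ E, C.LowGrading E := by
  obtain ⟨f, hf, hfd, hfK, hfc⟩ := h.exists_euler hn hd hK
  -- all generators lie in the sum of the eigenspaces for natural eigenvalues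
  have hgen : ∀ k : ℕ, ∀ i, n i < k → u i ∈ natSum f := by
    intro k
    induction k with
    | zero => intro i hi; omega
    | succ k ih =>
      have hadj : ∀ x ∈ adj u n k, x ∈ natSum f := by
        intro x hx
        induction hx using Algebra.adjoin_induction with
        | mem x hx =>
          obtain ⟨i, hi, rfl⟩ := hx
          exact ih i hi
        | algebraMap r =>
          rw [Algebra.algebraMap_eq_smul_one]
          have := G_one f hf
          rw [← Nat.cast_zero] at this
          exact Submodule.smul_mem _ _ (Submodule.mem_iSup_of_mem 0 this)
        | add x y _ _ hx hy => exact add_mem hx hy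
        | mul x y _ _ hx hy =>
          refine Submodule.iSup_induction _ (motive := fun x => x * y ∈ natSum f) hx ?_ ?_ ?_
          · intro p x hx
            refine Submodule.iSup_induction _ (motive := fun y => x * y ∈ natSum f) hy ?_ ?_ ?_
            · intro q y hy
              have := G_mul f hf hx hy
              rw [← Nat.cast_add] at this
              exact Submodule.mem_iSup_of_mem (p + q) this
            · rw [mul_zero]; exact zero_mem _
            · intro a b ha hb; rw [mul_add]; exact add_mem ha hb
          · rw [zero_mul]; exact zero_mem _
          · intro a b ha hb; rw [add_mul]; exact add_mem ha hb
      have hcoc : ∀ z ∈ C.grading k, C.d z = 0 → z ∈ natSum f := by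
        intro z hz hdz
        rcases Nat.eq_zero_or_pos k with rfl | hk
        · obtain ⟨c, rfl⟩ := h.grading_zero (fun i => by have := hn i; omega) hz
          exact hadj _ (Subalgebra.smul_mem _ (Subalgebra.one_mem _) _)
        obtain ⟨k, rfl⟩ := Nat.exists_eq_succ_of_ne_zero hk.ne'
        obtain ⟨a, -, ha, hda⟩ := hK.acyc_homog (hfK z) (hfd _ _ hz) (by rw [hfc, hdz]; simp)
        refine mem_natSum_of_step f 0 ?_
        rw [Nat.cast_zero, zero_smul, sub_zero, ← hda]
        exact hadj _ (h.d_mem_adj hn hd (h.grading_le_adj ha))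
      -- peel off the factors of a polynomial annihilating `d v`
      have hstep : ∀ s : Multiset ℕ, ∀ v ∈ C.grading k,
          aeval f (s.map fun p : ℕ => (X - Polynomial.C (p : ℚ))).prod (C.d v) = 0 →
          v ∈ natSum f := by
        intro s
        induction s using Multiset.induction_on with
        | empty => intro v hv hz; exact hcoc v hv (by simpa using hz)
        | cons p s ihs =>
          intro v hv hz
          refine mem_natSum_of_step f (p + 1) (ihs _ ?_ ?_)
          · exact sub_mem (hfd _ _ hv) (Submodule.smul_mem _ _ hv)
          · rw [Multiset.map_cons, Multiset.prod_cons, mul_comm, map_mul, Module.End.mul_apply] at hz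
            convert hz using 2
            rw [map_sub, map_smul, hfc, map_sub, aeval_X, aeval_C, LinearMap.sub_apply,
              Module.algebraMap_end_apply, Nat.cast_succ, add_smul, one_smul]
            abel
      intro i hi
      rcases Nat.lt_or_ge (n i) k with hlt | hge
      · exact ih i hlt
      have hik : n i = k := by omega
      have hdu := hadj _ (hik ▸ h.d_gen_mem_adj hn hd i)
      obtain ⟨s, hs⟩ := exists_annihilator f hdu
      exact hstep s _ (hik ▸ h.mem i) hs
  have htop : ∀ x, x ∈ natSum f := by
    intro x
    have hx : x ∈ Algebra.adjoin ℚ (Set.range u) := by rw [h.gen]; trivial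
    induction hx using Algebra.adjoin_induction with
    | mem x hx =>
      obtain ⟨i, rfl⟩ := hx
      exact hgen _ i (Nat.lt_succ_self _)
    | algebraMap r =>
      rw [Algebra.algebraMap_eq_smul_one]
      have := G_one f hf
      rw [← Nat.cast_zero] at this
      exact Submodule.smul_mem _ _ (Submodule.mem_iSup_of_mem 0 this)
    | add x y _ _ hx hy => exact add_mem hx hy
    | mul x y _ _ hx hy =>
      refine Submodule.iSup_induction _ (motive := fun x => x * y ∈ natSum f) hx ?_ ?_ ?_
      · intro p x hx
        refine Submodule.iSup_induction _ (motive := fun y => x * y ∈ natSum f) hy ?_ ?_ ?_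
        · intro q y hy
          have := G_mul f hf hx hy
          rw [← Nat.cast_add] at this
          exact Submodule.mem_iSup_of_mem (p + q) this
        · rw [mul_zero]; exact zero_mem _
        · intro a b ha hb; rw [mul_add]; exact add_mem ha hb
      · rw [zero_mul]; exact zero_mem _
      · intro a b ha hb; rw [add_mul]; exact add_mem ha hb
  have hind := Module.End.independent_maxGenEigenspace f
  -- `d` shifts eigenvalues by one
  have hshift : ∀ (μ : ℚ) (x : C.A), x ∈ Module.End.maxGenEigenspace f (μ + 1) →
      C.d x ∈ Module.End.maxGenEigenspace f μ := by
    intro μ x hx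
    refine G_induction f (p := fun x => C.d x ∈ Module.End.maxGenEigenspace f μ) ?_ ?_ hx
    · rw [map_zero]; exact zero_mem _
    · intro x _ ih
      refine mem_G_step f ?_
      convert ih using 1
      rw [map_sub, map_smul, hfc, add_smul, one_smul]
      abel
  have hInt : DirectSum.IsInternal fun p : ℕ => Module.End.maxGenEigenspace f (p : ℚ) := by
    rw [DirectSum.isInternal_submodule_iff_iSupIndep_and_iSup_eq_top]
    exact ⟨hind.comp (f := fun p : ℕ => (p : ℚ)) Nat.cast_injective,
      eq_top_iff.mpr fun x _ => htop x⟩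
  have hK' : ∀ (p : ℕ) (x : C.A), x ∈ Module.End.maxGenEigenspace f ((p : ℚ) + 1) → x ∈ K := by
    intro p x hx
    refine G_induction f (p := fun x => x ∈ K) (zero_mem _) ?_ hx
    intro x _ ih
    have hne : (p : ℚ) + 1 ≠ 0 := by positivity
    have h1 := sub_mem (hfK x) ih
    rw [sub_sub_cancel] at h1
    simpa [smul_smul, hne] using Submodule.smul_mem _ ((p : ℚ) + 1)⁻¹ h1
  have hz : ∀ {x : C.A}, x ∈ Module.End.maxGenEigenspace f ((0 : ℕ) : ℚ) → C.d x = 0 := by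
    intro x hx
    have h1 : C.d x ∈ Module.End.maxGenEigenspace f (-1 : ℚ) := hshift _ _ (by simpa using hx)
    have h2 : C.d x ∈ ⨆ (μ : ℚ) (_ : μ ≠ -1), Module.End.maxGenEigenspace f μ := by
      refine (iSup_le fun p : ℕ => ?_ : natSum f ≤ _) (htop _)
      refine le_iSup₂_of_le (p : ℚ) ?_ le_rfl
      have : (0 : ℚ) ≤ p := by positivity
      linarith
    exact (Submodule.disjoint_def.mp (hind (-1))) _ h1 h2
  refine ⟨fun p : ℕ => Module.End.maxGenEigenspace f (p : ℚ), ?_, ?_, hInt, ?_, ?_, ?_, ?_⟩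
  · simpa using G_one f hf
  · intro i j x y hx hy
    have := G_mul f hf hx hy
    rwa [← Nat.cast_add] at this
  · intro p i x hx
    have hpf : ∀ x, f (C.pr i x) = C.pr i (f x) := by
      intro x
      refine C.homog_induction (p := fun x => f (C.pr i x) = C.pr i (f x)) ?_ ?_ x
      · intro j x hx
        by_cases hj : j = i
        · subst hj
          rw [C.pr_of_mem hx, C.pr_of_mem (hfd _ _ hx)]
        · rw [C.pr_of_mem_ne hx hj, C.pr_of_mem_ne (hfd _ _ hx) hj, map_zero]
      · intro x y hx hy
        simp only [map_add, hx, hy]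
    refine G_induction f (p := fun x => C.pr i x ∈ Module.End.maxGenEigenspace f (p : ℚ)) ?_ ?_ hx
    · rw [map_zero]; exact zero_mem _
    · intro x _ ih
      refine mem_G_step f ?_
      rwa [hpf, ← map_smul, ← map_sub]
  · exact hz
  · intro p x hx
    exact hshift _ _ (by simpa using hx)
  · intro p x hx hdx
    obtain ⟨y, -, rfl⟩ := hK.acyc x (hK' p x (by simpa using hx)) hdx
    refine ⟨comp hInt (p + 2) y, comp_mem hInt _ _, ?_⟩
    rw [← comp_shift hInt (f := C.d) (fun x hx => hz hx)
      (fun p x hx => hshift _ _ (by simpa using hx)), comp_of_mem hInt hx]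

end FreeOn

end CDGA

end RHT

end

/-! ### Decomposables -/

noncomputable section

namespace RHT

namespace CDGA

lemma plus_sq_mul_left {C : CDGA} (a : C.A) {x : C.A} (hx : x ∈ C.plus * C.plus) :
    a * x ∈ C.plus * C.plus := by
  refine Submodule.mul_induction_on hx ?_ ?_
  · intro x hx y hy
    rw [← mul_assoc]
    exact Submodule.mul_mem_mul (C.plus_mul_left a hx) hy
  · intro x y hx hy
    rw [mul_add]; exact add_mem hx hy

lemma plus_sq_mul_right {C : CDGA} (a : C.A) {x : C.A} (hx : x ∈ C.plus * C.plus) :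
    x * a ∈ C.plus * C.plus := by
  refine Submodule.mul_induction_on hx ?_ ?_
  · intro x hx y hy
    rw [mul_assoc]
    exact Submodule.mul_mem_mul hx (C.plus_mul_right a hy)
  · intro x y hx hy
    rw [add_mul]; exact add_mem hx hy

lemma plus_sq_le {C : CDGA} : C.plus * C.plus ≤ C.plus :=
  Submodule.mul_le.mpr fun a _ _ hb => C.plus_mul_left a hb

lemma IsDer.plus_sq {C : CDGA} {m : ℕ} {f : C.A →ₗ[ℚ] C.A} (hf : C.IsDer m f) {x : C.A}
    (hx : x ∈ C.plus * C.plus) : f x ∈ C.plus := by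
  refine Submodule.mul_induction_on hx ?_ ?_
  · intro x hx y hy
    rw [hf]
    exact add_mem (C.plus_mul_left _ hy) (C.plus_mul_right _ (C.homog_plus.sg m hx))
  · intro x y hx hy
    rw [map_add]; exact add_mem hx hy

namespace FreeOn

variable {C : CDGA} {ι : Type} {u : ι → C.A} {n : ι → ℕ}

lemma mem_plus (h : C.FreeOn u n) (hn : ∀ i, n i ≠ 0) (i : ι) : u i ∈ C.plus :=
  C.mem_plus_of_mem (hn i) (h.mem i)

lemma exists_const_add (h : C.FreeOn u n) (hn : ∀ i, n i ≠ 0) (x : C.A) :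
    ∃ c : ℚ, ∃ y ∈ Submodule.span ℚ (Set.range u) ⊔ C.plus * C.plus, x = c • 1 + y := by
  have hle : Submodule.span ℚ (Set.range u) ⊔ C.plus * C.plus ≤ C.plus := by
    refine sup_le (Submodule.span_le.mpr ?_) plus_sq_le
    rintro _ ⟨i, rfl⟩
    exact h.mem_plus hn i
  have hx : x ∈ Algebra.adjoin ℚ (Set.range u) := by rw [h.gen]; trivial
  induction hx using Algebra.adjoin_induction with
  | mem x hx => exact ⟨0, x, Submodule.mem_sup_left (Submodule.subset_span hx), by simp⟩
  | algebraMap r => exact ⟨r, 0, zero_mem _, by rw [Algebra.algebraMap_eq_smul_one, add_zero]⟩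
  | add x y _ _ hx hy =>
    obtain ⟨c, a, ha, rfl⟩ := hx
    obtain ⟨e, b, hb, rfl⟩ := hy
    exact ⟨c + e, a + b, add_mem ha hb, by rw [add_smul]; abel⟩
  | mul x y _ _ hx hy =>
    obtain ⟨c, a, ha, rfl⟩ := hx
    obtain ⟨e, b, hb, rfl⟩ := hy
    refine ⟨c * e, c • b + e • a + a * b, add_mem (add_mem (Submodule.smul_mem _ _ hb)
      (Submodule.smul_mem _ _ ha)) (Submodule.mem_sup_right
        (Submodule.mul_mem_mul (hle ha) (hle hb))), ?_⟩
    simp only [add_mul, mul_add, smul_mul_assoc, mul_smul_comm, one_mul, mul_one, mul_smul,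
      smul_add, smul_comm e c]
    abel

/-- The derivation `∂/∂u_i`. -/
lemma exists_partial (h : C.FreeOn u n) [DecidableEq ι] (i : ι) : ∃ f : C.A →ₗ[ℚ] C.A,
    C.IsDer (n i) f ∧ f (u i) = 1 ∧ (∀ j, j ≠ i → f (u j) = 0) ∧
      ∀ k a, a ∈ C.grading k → f a ∈ low C k (n i) := by
  obtain ⟨f, h1, h2, h3⟩ := h.exists_deriv (n i) (fun j => if j = i then 1 else 0) (by
    intro j
    by_cases hj : j = i
    · subst hj
      simp [low, C.one_deg]
    · simp [hj])
  exact ⟨f, h1, by simp [h2], fun j hj => by simp [h2, hj], h3⟩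

/-- The projection of `C⁺` onto its indecomposables, in the coordinates given by free generators. -/
lemma exists_linPart [Finite ι] [DecidableEq ι] (h : C.FreeOn u n) (hn : ∀ i, n i ≠ 0) :
    ∃ Λ : C.A →ₗ[ℚ] (ι → ℚ), (∀ i, Λ (u i) = Pi.single i 1) ∧
      (∀ x ∈ C.plus * C.plus, Λ x = 0) ∧
      (∀ k x, x ∈ C.grading k → ∀ i, n i ≠ k → Λ x i = 0) ∧
      ∀ x ∈ C.plus, Λ x = 0 → x ∈ C.plus * C.plus := by
  have := h.nontrivial
  cases nonempty_fintype ι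
  choose f hf h1 h2 h3 using fun i => h.exists_partial i
  obtain ⟨g, hg⟩ : ∃ g : C.A →ₗ[ℚ] ℚ, g 1 = 1 := by
    obtain ⟨g, hg⟩ := Module.Projective.exists_dual_ne_zero ℚ (one_ne_zero (α := C.A))
    exact ⟨(g 1)⁻¹ • g, by simp [hg]⟩
  let Λ : C.A →ₗ[ℚ] (ι → ℚ) := LinearMap.pi fun i => g ∘ₗ C.pr 0 ∘ₗ f i
  have hΛ : ∀ x i, Λ x i = g (C.pr 0 (f i x)) := fun x i => rfl
  have hu : ∀ i, Λ (u i) = Pi.single i 1 := by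
    intro i
    funext j
    rw [hΛ]
    by_cases hj : j = i
    · subst hj
      rw [h1, C.pr_of_mem C.one_deg, hg]; simp
    · rw [h2 _ _ (Ne.symm hj)]; simp [hj]
  have hsq : ∀ x ∈ C.plus * C.plus, Λ x = 0 := by
    intro x hx
    funext i
    rw [hΛ, C.mem_plus.mp ((hf i).plus_sq hx), map_zero]; rfl
  refine ⟨Λ, hu, hsq, ?_, ?_⟩
  · intro k x hx i hi
    have := h3 i k x hx
    rw [hΛ]
    unfold low at this
    split_ifs at this with hk
    · rw [C.pr_of_mem_ne this (by omega), map_zero]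
    · rw [(Submodule.mem_bot ℚ).mp this]; simp
  · intro x hx hx0
    obtain ⟨c, y, hy, rfl⟩ := h.exists_const_add hn x
    have hle : Submodule.span ℚ (Set.range u) ⊔ C.plus * C.plus ≤ C.plus := by
      refine sup_le (Submodule.span_le.mpr ?_) plus_sq_le
      rintro _ ⟨i, rfl⟩
      exact h.mem_plus hn i
    have hc : c = 0 := by
      by_contra hc
      have h4 := sub_mem hx (hle hy)
      rw [add_sub_cancel_right] at h4
      have := Submodule.smul_mem _ c⁻¹ h4
      rw [smul_smul, inv_mul_cancel₀ hc, one_smul] at this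
      exact C.one_notMem_plus this
    subst hc
    rw [zero_smul, zero_add] at hx0 ⊢
    obtain ⟨a, ha, b, hb, rfl⟩ := Submodule.mem_sup.mp hy
    rw [map_add, hsq b hb, add_zero] at hx0
    obtain ⟨c, rfl⟩ := (Submodule.mem_span_range_iff_exists_fun ℚ).mp ha
    have : ∀ i, c i = 0 := by
      intro i
      have h5 := congrFun hx0 i
      simp only [map_sum, map_smul, hu] at h5
      simpa [Finset.sum_apply, Pi.single_apply] using h5
    simp [this, hb]

end FreeOn

end CDGA

end RHT

end

/-! ### Indecomposables -/

noncomputable section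

namespace RHT

namespace CDGA

lemma plus_pow_pr {C : CDGA} (k : ℕ) : ∀ x ∈ C.plus ^ k, ∀ i < k, C.pr i x = 0 := by
  induction k with
  | zero => intro x _ i hi; omega
  | succ k ih =>
    intro x hx i hi
    rw [pow_succ] at hx
    refine Submodule.mul_induction_on hx ?_ ?_
    · intro a ha b hb
      obtain ⟨s, hs⟩ := C.exists_sum_pr a
      obtain ⟨t, ht⟩ := C.exists_sum_pr b
      rw [← hs, ← ht, Finset.sum_mul_sum, map_sum]
      refine Finset.sum_eq_zero fun p _ => ?_
      rw [map_sum]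
      refine Finset.sum_eq_zero fun q _ => ?_
      by_cases hp : p < k
      · rw [ih a ha p hp, zero_mul, map_zero]
      by_cases hq : q = 0
      · subst hq
        rw [C.mem_plus.mp hb, mul_zero, map_zero]
      · exact C.pr_of_mem_ne (C.mul_deg (C.pr_mem p a) (C.pr_mem q b)) (by omega)
    · intro x y hx hy
      rw [map_add, hx, hy, add_zero]

lemma alg_map_pr {C : CDGA} (α : C.A →ₐ[ℚ] C.A)
    (hdeg : ∀ k x, x ∈ C.grading k → α x ∈ C.grading k) (i : ℕ) (x : C.A) :
    C.pr i (α x) = α (C.pr i x) := by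
  refine C.homog_induction (p := fun x => C.pr i (α x) = α (C.pr i x)) ?_ ?_ x
  · intro j x hx
    by_cases h : j = i
    · subst h
      rw [C.pr_of_mem hx, C.pr_of_mem (hdeg _ _ hx)]
    · rw [C.pr_of_mem_ne hx h, C.pr_of_mem_ne (hdeg _ _ hx) h, map_zero]
  · intro x y hx hy
    rw [map_add, map_add, map_add, map_add, hx, hy]

/-- A degree-preserving endomorphism inducing the identity on indecomposables is bijective. -/
lemma FreeOn.unip_bijective {C : CDGA} {ι : Type} {u : ι → C.A} {n : ι → ℕ}
    (h : C.FreeOn u n) (hn : ∀ i, n i ≠ 0) (α : C.A →ₐ[ℚ] C.A)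
    (hdeg : ∀ k x, x ∈ C.grading k → α x ∈ C.grading k)
    (hα : ∀ i, α (u i) - u i ∈ C.plus * C.plus) : Function.Bijective α := by
  have := h.nontrivial
  have hplus : ∀ x ∈ C.plus, α x ∈ C.plus := by
    intro x hx
    rw [C.mem_plus, alg_map_pr α hdeg, C.mem_plus.mp hx, map_zero]
  have ha : ∀ x ∈ C.plus, α x - x ∈ C.plus * C.plus := by
    intro x hx
    have hsq : ∀ x ∈ C.plus * C.plus, α x ∈ C.plus * C.plus := by
      intro x hx
      refine Submodule.mul_induction_on hx ?_ ?_
      · intro a ha b hb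
        rw [map_mul]
        exact Submodule.mul_mem_mul (hplus a ha) (hplus b hb)
      · intro x y hx hy; rw [map_add]; exact add_mem hx hy
    obtain ⟨c, y, hy, rfl⟩ := h.exists_const_add hn x
    have : α (c • 1 + y) - (c • 1 + y) = α y - y := by
      rw [map_add, map_smul, map_one]; abel
    rw [this]
    obtain ⟨a, ha, b, hb, rfl⟩ := Submodule.mem_sup.mp hy
    have : α (a + b) - (a + b) = (α a - a) + (α b - b) := by rw [map_add]; abel
    rw [this]
    refine add_mem ?_ (sub_mem (hsq b hb) hb)
    refine Submodule.span_induction (p := fun a _ => α a - a ∈ C.plus * C.plus) ?_ ?_ ?_ ?_ ha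
    · rintro _ ⟨i, rfl⟩; exact hα i
    · simp
    · intro a b _ _ h1 h2
      have : α (a + b) - (a + b) = (α a - a) + (α b - b) := by rw [map_add]; abel
      rw [this]; exact add_mem h1 h2
    · intro c a _ h1
      rw [map_smul, ← smul_sub]; exact Submodule.smul_mem _ _ h1
  have hb : ∀ k, ∀ x ∈ C.plus ^ (k + 1), α x - x ∈ C.plus ^ (k + 2) := by
    intro k
    induction k with
    | zero => intro x hx; rw [zero_add, pow_two]; exact ha x (by simpa using hx)
    | succ k ih =>
      intro x hx
      rw [pow_succ] at hx
      refine Submodule.mul_induction_on hx ?_ ?_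
      · intro a haa b hbb
        have : α (a * b) - a * b = (α a - a) * α b + a * (α b - b) := by
          rw [map_mul, sub_mul, mul_sub]; abel
        rw [this]
        refine add_mem ?_ ?_
        · rw [pow_succ]
          exact Submodule.mul_mem_mul (ih a haa) (hplus b hbb)
        · rw [show k + 1 + 2 = (k + 1) + 2 from rfl, pow_add _ (k + 1) 2 (M := Submodule ℚ C.A),
            pow_two]
          exact Submodule.mul_mem_mul haa (ha b hbb)
      · intro x y h1 h2
        have : α (x + y) - (x + y) = (α x - x) + (α y - y) := by rw [map_add]; abel
        rw [this]; exact add_mem h1 h2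
  constructor
  · have inj0 : ∀ i, ∀ x ∈ C.grading i, α x = 0 → x = 0 := by
      intro i x hx h0
      rcases Nat.eq_zero_or_pos i with rfl | hi
      · obtain ⟨c, rfl⟩ := h.grading_zero hn hx
        rwa [map_smul, map_one] at h0
      have hk : ∀ k, x ∈ C.plus ^ (k + 1) := by
        intro k
        induction k with
        | zero => simpa using C.mem_plus_of_mem hi.ne' hx
        | succ k ih =>
          have := hb k x ih
          rw [h0, zero_sub, neg_mem_iff] at this
          exact this
      have := plus_pow_pr _ x (hk i) i (Nat.lt_succ_self i)
      rwa [C.pr_of_mem hx] at this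
    rw [injective_iff_map_eq_zero]
    intro x hx
    refine C.ext_pr fun i => ?_
    rw [map_zero]
    refine inj0 i _ (C.pr_mem i x) ?_
    rw [← alg_map_pr α hdeg, hx, map_zero]
  · have sur0 : ∀ i, ∀ m k x, i < k + 1 + m → x ∈ C.grading i → x ∈ C.plus ^ (k + 1) →
        ∃ y, α y = x := by
      intro i m
      induction m with
      | zero =>
        intro k x hk hx hxk
        refine ⟨0, ?_⟩
        have := plus_pow_pr _ x hxk i (by omega)
        rw [C.pr_of_mem hx] at this
        rw [this, map_zero]
      | succ m ih =>
        intro k x hk hx hxk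
        obtain ⟨y, hy⟩ := ih (k + 1) (α x - x) (by omega) (sub_mem (hdeg _ _ hx) hx) (hb k x hxk)
        exact ⟨x - y, by rw [map_sub, hy, sub_sub_cancel]⟩
    intro x
    refine C.homog_induction (p := fun x => ∃ y, α y = x) ?_ ?_ x
    · intro i x hx
      rcases Nat.eq_zero_or_pos i with rfl | hi
      · obtain ⟨c, rfl⟩ := h.grading_zero hn hx
        exact ⟨c • 1, by rw [map_smul, map_one]⟩
      exact sur0 i i 0 x (by omega) hx (by simpa using C.mem_plus_of_mem hi.ne' hx)
    · rintro x y ⟨a, rfl⟩ ⟨b, rfl⟩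
      exact ⟨a + b, map_add _ _ _⟩

end CDGA

end RHT

end

/-! ### Bihomogeneous generators -/

noncomputable section

namespace RHT

namespace CDGA

/-- Free generators of `C` which are bihomogeneous for the lower grading `E`, in degrees `n i ≥ 2`
and lower degrees `p i`, with decomposable differentials. -/
structure BiFree (C : CDGA) (E : ℕ → Submodule ℚ C.A) {ι : Type} (u : ι → C.A) (n p : ι → ℕ) :
    Prop extends C.FreeOn u n where
  lowmem : ∀ i, u i ∈ E (p i)
  two_le : ∀ i, 2 ≤ n i
  dec : ∀ i, C.d (u i) ∈ C.plus * C.plus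

lemma FreeOn.d_dec {C : CDGA} {ι : Type} {u : ι → C.A} {n : ι → ℕ} (h : C.FreeOn u n)
    (hn : ∀ i, n i ≠ 0) (hd : ∀ i, C.d (u i) ∈ C.plus * C.plus) (x : C.A) :
    C.d x ∈ C.plus * C.plus := by
  obtain ⟨c, y, hy, rfl⟩ := h.exists_const_add hn x
  rw [map_add, map_smul, C.d_one, smul_zero, zero_add]
  obtain ⟨a, ha, b, hb, rfl⟩ := Submodule.mem_sup.mp hy
  rw [map_add]
  refine add_mem ?_ ?_
  · refine Submodule.span_induction (p := fun a _ => C.d a ∈ C.plus * C.plus) ?_ ?_ ?_ ?_ ha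
    · rintro _ ⟨i, rfl⟩; exact hd i
    · simp
    · intro a b _ _ h1 h2; rw [map_add]; exact add_mem h1 h2
    · intro c a _ h1
      rw [map_smul]; exact Submodule.smul_mem _ _ h1
  · refine Submodule.mul_induction_on hb ?_ ?_
    · intro x hx y hy
      rw [C.leib]
      exact add_mem (Submodule.mul_mem_mul (C.d_mem_plus x) hy)
        (Submodule.mul_mem_mul (C.homog_plus.sg 1 hx) (C.d_mem_plus y))
    · intro x y h1 h2; rw [map_add]; exact add_mem h1 h2

lemma span_bihomog {C : CDGA} {E : ℕ → Submodule ℚ C.A} (hE : C.LowGrading E) (x : C.A) :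
    x ∈ Submodule.span ℚ {y | ∃ k p, y ∈ C.grading k ∧ y ∈ E p} := by
  refine comp_induction hE.internal
    (P := fun x => x ∈ Submodule.span ℚ {y | ∃ k p, y ∈ C.grading k ∧ y ∈ E p}) ?_ ?_ x
  · intro p x hx
    obtain ⟨s, hs⟩ := C.exists_sum_pr x
    rw [← hs]
    exact Submodule.sum_mem _ fun i _ => Submodule.subset_span
      ⟨i, p, C.pr_mem i x, hE.homog p i x hx⟩
  · intro x y hx hy; exact add_mem hx hy

/-- Free generators can be made bihomogeneous: the indecomposables have a basis represented by
bihomogeneous elements, and the endomorphism carrying the given generators to the corresponding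
linear combinations of these elements is unipotent, hence bijective. -/
theorem FreeOn.exists_biFree {C : CDGA} {ι : Type} [Finite ι] {u : ι → C.A} {n : ι → ℕ}
    (h : C.FreeOn u n) (hn : ∀ i, 2 ≤ n i) (hd : ∀ i, C.d (u i) ∈ C.plus * C.plus)
    {E : ℕ → Submodule ℚ C.A} (hE : C.LowGrading E) :
    ∃ (κ : Type) (_ : Finite κ) (x : κ → C.A) (n' p : κ → ℕ), C.BiFree E x n' p := by
  classical
  cases nonempty_fintype ι
  have hn0 : ∀ i, n i ≠ 0 := fun i => by have := hn i; omega
  obtain ⟨Λ, hu, hsq, hdeg, hker⟩ := h.exists_linPart hn0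
  set S : Set (ι → ℚ) := Λ '' {y | ∃ k p, y ∈ C.grading k ∧ y ∈ E p} with hS
  have hspan : Submodule.span ℚ S = ⊤ := by
    rw [hS, ← Submodule.map_span, eq_top_iff, ← (Pi.basisFun ℚ ι).span_eq, Submodule.span_le]
    rintro _ ⟨i, rfl⟩
    rw [Pi.basisFun_apply, ← hu i]
    exact ⟨u i, span_bihomog hE _, rfl⟩
  obtain ⟨s, hsS, hs, hli⟩ := exists_linearIndependent ℚ S
  let b : Module.Basis s ℚ (ι → ℚ) := Module.Basis.mk hli (by
    rw [Subtype.range_coe_subtype, Set.ofPred_mem_eq, hs, hspan])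
  have hb : ∀ k : s, b k = k := fun k => Module.Basis.mk_apply _ _ k
  have hfin : Finite s := Module.Finite.finite_basis b
  cases nonempty_fintype s
  choose x hx hxk using fun k : s => hsS k.2
  choose n' p hx1 hx2 using hx
  have hbx : ∀ k, Λ (x k) = b k := fun k => by rw [hxk, hb]
  have hn'ι : ∀ k : s, ∃ i, n i = n' k := by
    intro k
    by_contra! hc
    refine b.ne_zero k ?_
    rw [← hbx]
    funext i
    exact hdeg _ _ (hx1 k) i (hc i)
  have hn' : ∀ k, 2 ≤ n' k := fun k => by
    obtain ⟨i, hi⟩ := hn'ι k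
    rw [← hi]; exact hn i
  -- the transition matrix preserves degrees
  let M : ι → s → ℚ := fun i k => b.repr (Pi.single i 1) k
  have hMdeg : ∀ i k, n' k ≠ n i → M i k = 0 := by
    intro i k hk
    let π : (ι → ℚ) →ₗ[ℚ] (ι → ℚ) := LinearMap.pi fun j =>
      if n j = n i then LinearMap.proj j else 0
    have hπ : ∀ v j, π v j = if n j = n i then v j else 0 := by
      intro v j
      simp only [π, LinearMap.pi_apply]
      split_ifs <;> simp
    have h1 : π (Pi.single i 1) = Pi.single i 1 := by
      funext j
      rw [hπ]
      by_cases hj : j = i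
      · subst hj; simp
      · simp [hj]
    have h2 : ∀ k, π (b k) = if n' k = n i then b k else 0 := by
      intro k
      funext j
      rw [hπ]
      have := hdeg _ _ (hx1 k) j
      rw [hbx] at this
      split_ifs with h3 h4 h4
      · rfl
      · exact this (by rw [h3]; exact Ne.symm h4)
      · exact (this (by rw [h4]; exact h3)).symm
      · rfl
    have h3 : (Pi.single i 1 : ι → ℚ) = ∑ k, (if n' k = n i then M i k else 0) • b k := by
      conv_lhs => rw [← h1, ← b.sum_repr (Pi.single i 1), map_sum]
      refine Finset.sum_congr rfl fun k _ => ?_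
      rw [map_smul, h2]
      split_ifs <;> simp [M]
    have h4 := congrArg (fun v => b.repr v k) h3
    simp only [b.repr_sum_self] at h4
    rw [if_neg hk] at h4
    exact h4
  have hMsum : ∀ i, ∑ k, M i k • b k = Pi.single i 1 := fun i => b.sum_repr _
  have hmemgen : ∀ (R : Type) [Ring R] [Algebra ℚ R] (𝒞 : ℕ → Submodule ℚ R) (c : s → R),
      (∀ k, c k ∈ 𝒞 (n' k)) → ∀ i, ∑ k, M i k • c k ∈ 𝒞 (n i) := by
    intro R _ _ 𝒞 c hc i
    refine Submodule.sum_mem _ fun k _ => ?_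
    by_cases hk : n' k = n i
    · rw [← hk]; exact Submodule.smul_mem _ _ (hc k)
    · rw [hMdeg i k hk, zero_smul]; exact zero_mem _
  have hNM : ∀ (R : Type) [Ring R] [Algebra ℚ R] (c : s → R) (k : s),
      ∑ i, b k i • ∑ l, M i l • c l = c k := by
    intro R _ _ c k
    have h1 : ∀ l, ∑ i, b k i * M i l = if l = k then 1 else 0 := by
      intro l
      have h2 : b k = ∑ i, b k i • (Pi.single i 1 : ι → ℚ) := by
        rw [pi_eq_sum_univ' (b k)]
        simp [Pi.single_apply, Finset.sum_apply]
      have h3 : b.repr (b k) l = ∑ i, b k i * M i l := by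
        conv_lhs => rw [h2, map_sum, Finsupp.finsetSum_apply]
        simp [M]
      rw [← h3, b.repr_self, Finsupp.single_apply]
      simp only [eq_comm]
    simp only [Finset.smul_sum, smul_smul]
    rw [Finset.sum_comm]
    simp only [← Finset.sum_smul, h1]
    simp
  obtain ⟨α, hα⟩ := h.lift C.A C.grading C.one_deg (fun i j x y => C.mul_deg)
    (fun i j x y hx hy => C.gcomm hx hy) (fun i => ∑ k, M i k • x k)
    (hmemgen C.A C.grading x hx1)
  have hαdeg : ∀ k y, y ∈ C.grading k → α y ∈ C.grading k := fun k y hy =>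
    h.map_mem C.grading C.one_deg (fun i j x y => C.mul_deg) α
      (fun i => by rw [hα]; exact hmemgen C.A C.grading x hx1 i) hy
  have hxplus : ∀ k, x k ∈ C.plus := fun k =>
    C.mem_plus_of_mem (by have := hn' k; omega) (hx1 k)
  have hαb : Function.Bijective α := by
    refine h.unip_bijective hn0 α hαdeg fun i => hker _ ?_ ?_
    · refine sub_mem ?_ (h.mem_plus hn0 i)
      rw [hα]
      exact Submodule.sum_mem _ fun k _ => Submodule.smul_mem _ _ (hxplus k)
    · rw [hα, map_sub, hu, map_sum]
      simp only [map_smul, hbx, hMsum, sub_self]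
  let e : C.A ≃ₐ[ℚ] C.A := AlgEquiv.ofBijective α hαb
  have hxα : ∀ k, x k = α (∑ i, b k i • u i) := by
    intro k
    rw [map_sum]
    simp only [map_smul, hα]
    exact (hNM C.A x k).symm
  refine ⟨s, hfin, x, n', p, ⟨⟨hx1, ?_, ?_⟩, hx2, hn', fun k => h.d_dec hn0 hd _⟩⟩
  · rw [eq_top_iff]
    rintro y -
    obtain ⟨y, rfl⟩ := hαb.2 y
    have hy : y ∈ Algebra.adjoin ℚ (Set.range u) := by rw [h.gen]; trivial
    induction hy using Algebra.adjoin_induction with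
    | mem y hy =>
      obtain ⟨i, rfl⟩ := hy
      rw [hα]
      exact Subalgebra.sum_mem _ fun k _ =>
        Subalgebra.smul_mem _ (Algebra.subset_adjoin (Set.mem_range_self k)) _
    | algebraMap r => rw [AlgHom.commutes]; exact Subalgebra.algebraMap_mem _ _
    | add a b _ _ ha hb => rw [map_add]; exact add_mem ha hb
    | mul a b _ _ ha hb => rw [map_mul]; exact mul_mem ha hb
  · intro R _ _ 𝒞 h1 hmul hcomm c hc
    obtain ⟨φ, hφ⟩ := h.lift R 𝒞 h1 hmul hcomm (fun i => ∑ k, M i k • c k) (hmemgen R 𝒞 c hc)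
    refine ⟨φ.comp e.symm.toAlgHom, fun k => ?_⟩
    have he : e.symm (x k) = ∑ i, b k i • u i := by
      rw [AlgEquiv.symm_apply_eq]
      exact hxα k
    have : φ (e.symm (x k)) = c k := by
      rw [he, map_sum]
      simp only [map_smul, hφ]
      exact hNM R c k
    simpa using this

lemma BiFree.reindex {C : CDGA} {E : ℕ → Submodule ℚ C.A} {ι κ : Type} {u : ι → C.A}
    {n p : ι → ℕ} (h : C.BiFree E u n p) (e : κ ≃ ι) :
    C.BiFree E (u ∘ e) (n ∘ e) (p ∘ e) where
  mem i := h.mem _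
  gen := by rw [e.surjective.range_comp, h.gen]
  lift R _ _ 𝒞 h1 hm hc c hcm := by
    obtain ⟨φ, hφ⟩ := h.lift R 𝒞 h1 hm hc (c ∘ e.symm) (fun i => by
      have := hcm (e.symm i)
      simpa using this)
    exact ⟨φ, fun i => by simpa using hφ (e i)⟩
  lowmem i := h.lowmem _
  two_le i := h.two_le _
  dec i := h.dec _

/-- The key by which the generators are ordered: by lower degree, with the odd generators of lower
degree `1` before the even ones. -/
def key (n p : ℕ) : ℕ := if p = 0 then 0 else if p = 1 ∧ Odd n then 1 else p + 1

/-- The generators can be ordered so that the differential of each one lies in the ideal of its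
predecessors, see `BiFree.d_gen_mem`. -/
lemma BiFree.exists_sorted {C : CDGA} {E : ℕ → Submodule ℚ C.A} {κ : Type} [Finite κ]
    {u : κ → C.A} {n p : κ → ℕ} (h : C.BiFree E u n p) :
    ∃ (r : ℕ) (x : Fin r → C.A) (n' p' : Fin r → ℕ), C.BiFree E x n' p' ∧
      Monotone fun i => key (n' i) (p' i) := by
  have h1 := h.reindex (Finite.equivFin κ).symm
  let K : Fin (Nat.card κ) → ℕ := fun i =>
    key (n ((Finite.equivFin κ).symm i)) (p ((Finite.equivFin κ).symm i))
  exact ⟨_, _, _, _, h1.reindex (Tuple.sort K), Tuple.monotone_sort K⟩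

end CDGA

end RHT

end

/-! ### Quotients by generators -/

noncomputable section

namespace RHT

namespace CDGA

/-- The ideal generated by the `u i` with `i ∈ s`. -/
def idl {C : CDGA} {ι : Type} (u : ι → C.A) (s : Set ι) : Submodule ℚ C.A :=
  Submodule.span ℚ {x | ∃ i ∈ s, ∃ a, x = a * u i}

section idl

variable {C : CDGA} {ι : Type} {u : ι → C.A} {n : ι → ℕ} {s t : Set ι}

lemma mem_idl {i : ι} (hi : i ∈ s) (a : C.A) : a * u i ∈ idl u s :=
  Submodule.subset_span ⟨i, hi, a, rfl⟩

lemma gen_mem_idl {i : ι} (hi : i ∈ s) : u i ∈ idl u s := by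
  simpa using mem_idl hi (1 : C.A)

lemma idl_induction {P : C.A → Prop} (h0 : P 0) (hg : ∀ i ∈ s, ∀ a, P (a * u i))
    (hadd : ∀ x y, P x → P y → P (x + y)) {x : C.A} (hx : x ∈ idl u s) : P x := by
  have h := Submodule.span_induction (p := fun x _ => ∀ c : ℚ, P (c • x)) ?_ (by simpa using h0)
    ?_ ?_ hx
  · simpa using h 1
  · rintro _ ⟨i, hi, a, rfl⟩ c
    rw [← smul_mul_assoc]; exact hg i hi _
  · intro x y _ _ hx hy c
    rw [smul_add]; exact hadd _ _ (hx c) (hy c)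
  · intro e x _ hx c
    rw [smul_smul]; exact hx _

lemma idl_mono (h : s ⊆ t) : idl u s ≤ idl u t :=
  Submodule.span_mono (by rintro _ ⟨i, hi, a, rfl⟩; exact ⟨i, h hi, a, rfl⟩)

lemma idl_empty : idl u (∅ : Set ι) = ⊥ := by
  rw [idl, Submodule.span_eq_bot]
  rintro _ ⟨i, hi, -⟩
  exact hi.elim

lemma idl_mul_left (a : C.A) {x : C.A} (hx : x ∈ idl u s) : a * x ∈ idl u s := by
  refine idl_induction (P := fun x => a * x ∈ idl u s) ?_ ?_ ?_ hx
  · rw [mul_zero]; exact zero_mem _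
  · intro i hi b; rw [← mul_assoc]; exact mem_idl hi _
  · intro x y hx hy; rw [mul_add]; exact add_mem hx hy

lemma idl_homog (hu : ∀ i, u i ∈ C.grading (n i)) : C.Homog (idl u s) := by
  intro k x hx
  refine idl_induction (P := fun x => C.pr k x ∈ idl u s) ?_ ?_ ?_ hx
  · rw [map_zero]; exact zero_mem _
  · intro i hi a
    obtain ⟨t, ht⟩ := C.exists_sum_pr a
    rw [← ht, Finset.sum_mul, map_sum]
    refine Submodule.sum_mem _ fun j _ => ?_
    have hm := C.mul_deg (C.pr_mem j a) (hu i)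
    by_cases h : j + n i = k
    · rw [← h, C.pr_of_mem hm]; exact mem_idl hi _
    · rw [C.pr_of_mem_ne hm h]; exact zero_mem _
  · intro x y hx hy; rw [map_add]; exact add_mem hx hy

lemma idl_mul_right (hu : ∀ i, u i ∈ C.grading (n i)) (a : C.A) {x : C.A} (hx : x ∈ idl u s) :
    x * a ∈ idl u s :=
  (idl_homog hu).mul_right (fun a _ hx => idl_mul_left a hx) a hx

lemma idl_sg (hu : ∀ i, u i ∈ C.grading (n i)) (m : ℕ) {x : C.A} (hx : x ∈ idl u s) :
    C.sg m x ∈ idl u s := (idl_homog hu).sg m hx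

lemma idl_insert (hu : ∀ i, u i ∈ C.grading (n i)) {j : ι} {x : C.A}
    (hx : x ∈ idl u (insert j s)) : ∃ a ∈ idl u s, ∃ b, x = a + u j * b := by
  refine idl_induction (P := fun x => ∃ a ∈ idl u s, ∃ b, x = a + u j * b) ?_ ?_ ?_ hx
  · exact ⟨0, zero_mem _, 0, by simp⟩
  · rintro i (rfl | hi) a
    · refine ⟨0, zero_mem _, C.sg (n i) a, ?_⟩
      rw [C.comm_left (hu i), C.sg_self, zero_add]
    · exact ⟨_, mem_idl hi a, 0, by simp⟩
  · rintro _ _ ⟨a, ha, b, rfl⟩ ⟨a', ha', b', rfl⟩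
    exact ⟨a + a', add_mem ha ha', b + b', by rw [mul_add]; abel⟩

lemma mul_mem_insert (hu : ∀ i, u i ∈ C.grading (n i)) {j : ι} (b : C.A) :
    u j * b ∈ idl u (insert j s) :=
  idl_mul_right hu b (gen_mem_idl (Set.mem_insert _ _))

lemma le_insert {j : ι} : idl u s ≤ idl u (insert j s) := idl_mono (Set.subset_insert _ _)

lemma idl_insert_homog (hu : ∀ i, u i ∈ C.grading (n i)) {j : ι} {k : ℕ} {x : C.A}
    (hx : x ∈ idl u (insert j s)) (hk : x ∈ C.grading (n j + k)) :
    ∃ a ∈ idl u s, ∃ b ∈ C.grading k, x = a + u j * b := by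
  obtain ⟨a, ha, b, rfl⟩ := idl_insert hu hx
  refine ⟨C.pr (n j + k) a, idl_homog hu _ _ ha, C.pr k b, C.pr_mem _ _, ?_⟩
  rw [← C.pr_mul_left (hu j), ← map_add, C.pr_of_mem hk]

lemma IsDer.idl_mem {m : ℕ} {f : C.A →ₗ[ℚ] C.A}
    (hf : C.IsDer m f) (h : ∀ i ∈ s, f (u i) ∈ idl u s) {x : C.A} (hx : x ∈ idl u s) :
    f x ∈ idl u s := by
  refine idl_induction (P := fun x => f x ∈ idl u s) ?_ ?_ ?_ hx
  · rw [map_zero]; exact zero_mem _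
  · intro i hi a
    rw [hf]
    exact add_mem (mem_idl hi _) (idl_mul_left _ (h i hi))
  · intro x y hx hy; rw [map_add]; exact add_mem hx hy

lemma idl_le_plus (hu : ∀ i, u i ∈ C.grading (n i)) (hn : ∀ i, n i ≠ 0) :
    idl u s ≤ C.plus := by
  intro x hx
  refine idl_induction (P := fun x => x ∈ C.plus) (zero_mem _) ?_ ?_ hx
  · intro i _ a
    exact C.plus_mul_left a (C.mem_plus_of_mem (hn i) (hu i))
  · intro x y hx hy; exact add_mem hx hy

/-- Modulo the ideal of the other generators, an odd generator annihilates only its multiples. -/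
lemma FreeOn.regular_odd (h : C.FreeOn u n) {j : ι} (hj : j ∉ s) {a : C.A}
    (ha : u j * a ∈ idl u s) : a ∈ idl u (insert j s) := by
  classical
  obtain ⟨f, hf, h1, h2, -⟩ := h.exists_partial j
  have h3 : f (u j * a) ∈ idl u s := hf.idl_mem (fun i hi => by
    rw [h2 i (fun e => hj (e ▸ hi))]; exact zero_mem _) ha
  rw [hf, h1, one_mul, C.sg_of_mem _ (h.mem j), smul_mul_assoc] at h3
  have h4 := sub_mem (le_insert (j := j) h3) (Submodule.smul_mem _ ((-1 : ℚ) ^ (n j * n j))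
    (mul_mem_insert (s := s) h.mem (j := j) (f a)))
  simpa using h4

/-- An even generator is regular modulo the ideal generated by other generators. -/
lemma FreeOn.regular_even (h : C.FreeOn u n) (hn : ∀ i, n i ≠ 0) {j : ι} (hj : j ∉ s)
    (he : Even (n j)) {a : C.A} (ha : u j * a ∈ idl u s) : a ∈ idl u s := by
  classical
  obtain ⟨f, hf, h1, h2, h3⟩ := h.exists_partial j
  have hfs : ∀ x ∈ idl u s, f x ∈ idl u s := fun x hx => hf.idl_mem (fun i hi => by
    rw [h2 i (fun e => hj (e ▸ hi))]; exact zero_mem _) hx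
  have hder : ∀ x, f (u j * x) = x + u j * f x := by
    intro x
    rw [hf, h1, one_mul, C.sg_even he]
  -- the derivation is locally nilpotent because it lowers degrees
  have hnil0 : ∀ k, ∀ x ∈ C.grading k, (f ^ (k + 1)) x = 0 := by
    intro k
    induction k using Nat.strong_induction_on with
    | _ k ih =>
      intro x hx
      have hx' := h3 k x hx
      unfold low at hx'
      split_ifs at hx' with hk
      · have h4 := ih (k - n j) (by have := hn j; omega) _ hx'
        rw [pow_succ, Module.End.mul_apply]
        obtain ⟨e, he⟩ := Nat.exists_eq_add_of_le (show k - n j + 1 ≤ k by have := hn j; omega)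
        rw [he, add_comm, pow_add, Module.End.mul_apply, h4, map_zero]
      · rw [pow_succ, Module.End.mul_apply, (Submodule.mem_bot ℚ).mp hx', map_zero]
  have hnil : ∀ x, ∃ m, (f ^ m) x = 0 := by
    intro x
    refine C.homog_induction (p := fun x => ∃ m, (f ^ m) x = 0) ?_ ?_ x
    · intro i x hx; exact ⟨_, hnil0 i x hx⟩
    · rintro x y ⟨p, hp⟩ ⟨q, hq⟩
      refine ⟨p + q, ?_⟩
      have e1 : (f ^ (p + q)) x = 0 := by
        rw [add_comm, pow_add, Module.End.mul_apply, hp, map_zero]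
      have e2 : (f ^ (p + q)) y = 0 := by rw [pow_add, Module.End.mul_apply, hq, map_zero]
      rw [map_add, e1, e2, add_zero]
  have key : ∀ m : ℕ, ((m : ℚ) + 1) • (f ^ m) a + u j * (f ^ (m + 1)) a ∈ idl u s := by
    intro m
    induction m with
    | zero => simpa [hder] using hfs _ ha
    | succ m ih =>
      have := hfs _ ih
      rw [map_add, map_smul, hder, ← Module.End.mul_apply, ← Module.End.mul_apply, ← pow_succ',
        ← pow_succ'] at this
      convert this using 1
      rw [Nat.cast_succ, add_smul _ (1 : ℚ), one_smul]
      abel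
  obtain ⟨m, hm⟩ := hnil a
  have hdown : ∀ m, (f ^ m) a ∈ idl u s → a ∈ idl u s := by
    intro m
    induction m with
    | zero => intro h; simpa using h
    | succ m ih =>
      intro h4
      refine ih ?_
      have h5 := sub_mem (key m) (idl_mul_left (u j) h4)
      rw [add_sub_cancel_right] at h5
      have h6 := Submodule.smul_mem _ ((m : ℚ) + 1)⁻¹ h5
      rwa [smul_smul, inv_mul_cancel₀ (by positivity), one_smul] at h6
  exact hdown m (by rw [hm]; exact zero_mem _)

end idl

end CDGA

end RHT

end

/-! ### Killing a generator -/

noncomputable section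

namespace RHT

namespace CDGA

/-- The elements which are coboundaries modulo the ideal generated by the `u i`, `i ∈ s`. -/
def exm {C : CDGA} {ι : Type} (u : ι → C.A) (s : Set ι) : Submodule ℚ C.A :=
  idl u s ⊔ LinearMap.range C.d

/-- The cohomology of the quotient by the ideal generated by the `u i`, `i ∈ s`, vanishes in large
degrees. -/
def CohBdd {C : CDGA} {ι : Type} (u : ι → C.A) (s : Set ι) : Prop :=
  ∃ N : ℕ, ∀ k, N < k → ∀ z ∈ C.grading k, C.d z ∈ idl u s → z ∈ exm u s

section

variable {C : CDGA} {ι : Type} {u : ι → C.A} {n : ι → ℕ} {s : Set ι}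

lemma mem_exm {x : C.A} : x ∈ exm u s ↔ ∃ a ∈ idl u s, ∃ c, x = a + C.d c := by
  constructor
  · intro hx
    obtain ⟨a, ha, _, ⟨c, rfl⟩, rfl⟩ := Submodule.mem_sup.mp hx
    exact ⟨a, ha, c, rfl⟩
  · rintro ⟨a, ha, c, rfl⟩
    exact Submodule.add_mem_sup ha ⟨c, rfl⟩

lemma idl_le_exm : idl u s ≤ exm u s := le_sup_left

lemma d_mem_exm (x : C.A) : C.d x ∈ exm u s := Submodule.mem_sup_right ⟨x, rfl⟩

lemma exm_mono {t : Set ι} (h : s ⊆ t) : exm u s ≤ exm u t := sup_le_sup_right (idl_mono h) _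

lemma exm_homog (hu : ∀ i, u i ∈ C.grading (n i)) : C.Homog (exm u s) :=
  (idl_homog hu).sup C.homog_range_d

lemma d_even (hu : ∀ i, u i ∈ C.grading (n i)) {j : ι} (hj : Even (n j)) (x : C.A) :
    C.d (u j * x) = C.d (u j) * x + u j * C.d x := by
  rw [C.leib, C.sg_of_mem _ (hu j), one_mul, hj.neg_one_pow, one_smul]

lemma d_odd (hu : ∀ i, u i ∈ C.grading (n i)) {j : ι} (hj : Odd (n j)) (x : C.A) :
    C.d (u j * x) = C.d (u j) * x - u j * C.d x := by
  rw [C.leib, C.sg_of_mem _ (hu j), one_mul, hj.neg_one_pow, neg_smul, one_smul, neg_mul,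
    sub_eq_add_neg]

lemma d_idl (hs : ∀ i ∈ s, C.d (u i) ∈ idl u s) {x : C.A} (hx : x ∈ idl u s) :
    C.d x ∈ idl u s := C.isDer_d.idl_mem hs hx

lemma closed_insert {j : ι} (hs : ∀ i ∈ s, C.d (u i) ∈ idl u s) (hj : C.d (u j) ∈ idl u s) :
    ∀ i ∈ insert j s, C.d (u i) ∈ idl u (insert j s) := by
  rintro i (rfl | hi)
  · exact le_insert hj
  · exact le_insert (hs i hi)

lemma exm_insert (hu : ∀ i, u i ∈ C.grading (n i)) {j : ι} {x : C.A}
    (hx : x ∈ exm u (insert j s)) :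
    ∃ a ∈ idl u s, ∃ b c, x = a + u j * b + C.d c := by
  obtain ⟨a, ha, c, rfl⟩ := mem_exm.mp hx
  obtain ⟨a', ha', b, hb⟩ := idl_insert hu ha
  exact ⟨a', ha', b, c, by rw [hb]⟩

lemma mul_d_mem_exm_even (hu : ∀ i, u i ∈ C.grading (n i)) {j : ι} (hj : Even (n j))
    (hdj : C.d (u j) ∈ idl u s) {x : C.A} (hx : x ∈ exm u s) : u j * x ∈ exm u s := by
  obtain ⟨a, ha, c, rfl⟩ := mem_exm.mp hx
  refine mem_exm.mpr ⟨u j * a - C.d (u j) * c, sub_mem (idl_mul_left _ ha)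
    (idl_mul_right hu c hdj), u j * c, ?_⟩
  rw [d_even hu hj, mul_add]; abel

/-- Even step: bounded cohomology is inherited when an even generator is killed. -/
lemma FreeOn.cohBdd_even (h : C.FreeOn u n) (hn : ∀ i, 2 ≤ n i) {j : ι} (hj : j ∉ s)
    (he : Even (n j)) (hs : ∀ i ∈ s, C.d (u i) ∈ idl u s) (hdj : C.d (u j) ∈ idl u s)
    (hb : CohBdd u s) : CohBdd u (insert j s) := by
  have hn0 : ∀ i, n i ≠ 0 := fun i => by have := hn i; omega
  obtain ⟨N, hN⟩ := hb
  refine ⟨N + n j, fun k hk z hz hdz => ?_⟩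
  obtain ⟨a, ha, b, hb, hab⟩ := idl_insert_homog h.mem hdz (k := k + 1 - n j) (by
    rw [show n j + (k + 1 - n j) = k + 1 by omega]; exact C.d_mem hz)
  have h1 : C.d b ∈ idl u s := by
    refine h.regular_even hn0 hj he ?_
    have h2 := C.d_sq z
    rw [hab, map_add, d_even h.mem he] at h2
    have : u j * C.d b = 0 - (C.d a + C.d (u j) * b) := by rw [← h2]; abel
    rw [this, zero_sub]
    exact neg_mem (add_mem (d_idl hs ha) (idl_mul_right h.mem b hdj))
  obtain ⟨a', ha', c, rfl⟩ := mem_exm.mp (hN _ (by omega) b hb h1)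
  have h2 : C.d (z - u j * c) ∈ idl u s := by
    rw [map_sub, hab, d_even h.mem he]
    have : a + u j * (a' + C.d c) - (C.d (u j) * c + u j * C.d c)
        = a + u j * a' - C.d (u j) * c := by rw [mul_add]; abel
    rw [this]
    exact sub_mem (add_mem ha (idl_mul_left _ ha')) (idl_mul_right h.mem c hdj)
  have h3 := hN k (by omega) _ (C.pr_mem k (z - u j * c))
    (by rw [← C.pr_d]; exact idl_homog h.mem _ _ h2)
  rw [map_sub, C.pr_of_mem hz] at h3
  have h4 := add_mem (exm_mono (Set.subset_insert j s) h3)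
    (idl_le_exm (idl_homog h.mem k _ (mul_mem_insert h.mem (s := s) (j := j) c)))
  rwa [sub_add_cancel] at h4

lemma plus_pow_mul_left {K : ℕ} (a : C.A) {x : C.A} (hx : x ∈ C.plus ^ (K + 1)) :
    a * x ∈ C.plus ^ (K + 1) := by
  rw [pow_succ'] at hx ⊢
  refine Submodule.mul_induction_on hx ?_ ?_
  · intro x hx y hy
    rw [← mul_assoc]
    exact Submodule.mul_mem_mul (C.plus_mul_left a hx) hy
  · intro x y hx hy
    rw [mul_add]; exact add_mem hx hy

lemma plus_pow_anti {K m : ℕ} (hm : K + 1 ≤ m) : C.plus ^ m ≤ C.plus ^ (K + 1) := by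
  obtain ⟨e, rfl⟩ := Nat.exists_eq_add_of_le hm
  rw [add_comm (K + 1) e]
  rcases Nat.eq_zero_or_pos e with rfl | he
  · rw [zero_add]
  rw [pow_add _ _ _ , Submodule.mul_le]
  intro a _ b hb
  exact plus_pow_mul_left a hb

/-- With generators in degrees at most `N`, elements of degree at least `K N` are sums of products
of `K` elements of positive degree. -/
lemma FreeOn.mem_plus_pow (h : C.FreeOn u n) (hn : ∀ i, n i ≠ 0) {N : ℕ} (hN : ∀ i, n i ≤ N)
    (hN0 : 0 < N) {K k : ℕ} (hk : (K + 1) * N ≤ k) {x : C.A} (hx : x ∈ C.grading k) :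
    x ∈ C.plus ^ (K + 1) := by
  have key := grading_eq_of_gen h.gen
    (fun k => ⨆ m, ⨆ (_ : k ≤ m * N), C.plus ^ m ⊓ C.grading k)
    (fun k => iSup₂_le fun m _ => inf_le_right)
    (Submodule.mem_iSup_of_mem 0 (Submodule.mem_iSup_of_mem (by simp)
      ⟨by rw [pow_zero]; exact Submodule.one_le.mp le_rfl, C.one_deg⟩))
    (by
      intro i j x y hx hy
      refine Submodule.iSup_induction _ (motive := fun x => x * y ∈ _) hx ?_
        (by rw [zero_mul]; exact zero_mem _) (fun a b ha hb => by rw [add_mul]; exact add_mem ha hb)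
      intro m x hx
      obtain ⟨hm, hx⟩ | hx : (i ≤ m * N ∧ x ∈ C.plus ^ m ⊓ C.grading i) ∨ x = 0 := by
        by_cases hm : i ≤ m * N
        · left; refine ⟨hm, ?_⟩; simpa [hm] using hx
        · right; simpa [hm] using hx
      swap
      · rw [hx, zero_mul]; exact zero_mem _
      refine Submodule.iSup_induction _ (motive := fun y => x * y ∈ _) hy ?_
        (by rw [mul_zero]; exact zero_mem _) (fun a b ha hb => by rw [mul_add]; exact add_mem ha hb)
      intro m' y hy
      obtain ⟨hm', hy⟩ | hy : (j ≤ m' * N ∧ y ∈ C.plus ^ m' ⊓ C.grading j) ∨ y = 0 := by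
        by_cases hm : j ≤ m' * N
        · left; refine ⟨hm, ?_⟩; simpa [hm] using hy
        · right; simpa [hm] using hy
      swap
      · rw [hy, mul_zero]; exact zero_mem _
      refine Submodule.mem_iSup_of_mem (m + m') (Submodule.mem_iSup_of_mem (by
        rw [add_mul]; omega) ⟨?_, C.mul_deg hx.2 hy.2⟩)
      rcases Nat.eq_zero_or_pos m with rfl | hm0
      · rw [zero_add]
        rcases Nat.eq_zero_or_pos m' with rfl | hm0'
        · have := Submodule.mul_mem_mul hx.1 hy.1
          rwa [pow_zero, one_mul] at this
        · obtain ⟨e, rfl⟩ := Nat.exists_eq_add_of_le' hm0'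
          exact plus_pow_mul_left x hy.1
      · rw [pow_add C.plus m m' (M := Submodule ℚ C.A)]
        exact Submodule.mul_mem_mul hx.1 hy.1)
    (fun i => Submodule.mem_iSup_of_mem 1 (Submodule.mem_iSup_of_mem (by simpa using hN i)
      ⟨by rw [pow_one]; exact h.mem_plus hn i, h.mem i⟩)) hx
  refine (iSup₂_le fun m hm => inf_le_left.trans (plus_pow_anti ?_) :
    (⨆ m, ⨆ (_ : k ≤ m * N), C.plus ^ m ⊓ C.grading k) ≤ C.plus ^ (K + 1)) key
  exact Nat.le_of_mul_le_mul_right (hk.trans hm) hN0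

end

end CDGA

end RHT

end

/-! ### Boundedness of the cohomology of quotients -/

noncomputable section

namespace RHT

namespace CDGA

section

variable {C : CDGA} {ι : Type} {u : ι → C.A} {n : ι → ℕ} {s : Set ι}

/-- The graded commutator of `d` with an odd derivation lowering degrees by `m` is an even
derivation. -/
lemma isDer_anticomm_d {m : ℕ} (hm : Odd m) {f : C.A →ₗ[ℚ] C.A} (hf : C.IsDer m f)
    (hdeg : ∀ k a, a ∈ C.grading k → f a ∈ FreeOn.low C k m) :
    C.IsDer 0 (C.d ∘ₗ f + f ∘ₗ C.d) := by
  have hs : ∀ a, f (C.sg 1 a) = - C.sg 1 (f a) := by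
    intro a
    refine C.homog_induction (p := fun a => f (C.sg 1 a) = - C.sg 1 (f a)) ?_ ?_ a
    · intro i x hx
      have h1 := hdeg i x hx
      unfold FreeOn.low at h1
      split_ifs at h1 with h
      · obtain ⟨e, rfl⟩ := Nat.exists_eq_add_of_le h
        rw [add_tsub_cancel_left] at h1
        rw [C.sg_of_mem 1 hx, C.sg_of_mem 1 h1, map_smul, ← neg_smul, one_mul, one_mul, pow_add,
          hm.neg_one_pow, neg_one_mul]
      · rw [C.sg_of_mem 1 hx, map_smul, (Submodule.mem_bot ℚ).mp h1]; simp
    · intro x y hx hy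
      rw [map_add, map_add, hx, hy, map_add, map_add]; abel
  intro a b
  simp only [LinearMap.add_apply, LinearMap.comp_apply, hf _ _, C.leib, map_add, C.sg_zero, hs,
    C.sg_odd hm, C.d_sg, C.sg_sg]
  rw [C.sg_even (by decide : Even (1 + 1))]
  simp only [pow_one, neg_smul, one_smul]
  noncomm_ring

/-- Odd step: bounded cohomology is inherited when an odd generator `u j` is killed.  The
derivation `θ = [d, ∂ⱼ]` strictly lowers degrees, and an induction on degrees reduces a cocycle `z`
to `θ z`; high word length makes the induction terminate. -/
lemma FreeOn.cohBdd_odd [Finite ι] (h : C.FreeOn u n) (hn : ∀ i, 2 ≤ n i)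
    (hdec : ∀ i, C.d (u i) ∈ C.plus * C.plus) {j : ι} (hj : j ∉ s)
    (ho : Odd (n j)) (hs : ∀ i ∈ s, C.d (u i) ∈ idl u s) (hdj : C.d (u j) ∈ idl u s)
    (hb : CohBdd u s) : CohBdd u (insert j s) := by
  classical
  have hn0 : ∀ i, n i ≠ 0 := fun i => by have := hn i; omega
  obtain ⟨N, hN⟩ := hb
  obtain ⟨f, hf, h1, h2, h3⟩ := h.exists_partial j
  have hfs : ∀ x ∈ idl u s, f x ∈ idl u s := fun x hx => hf.idl_mem (fun i hi => by
    rw [h2 i (fun e => hj (e ▸ hi))]; exact zero_mem _) hx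
  have hder : ∀ x, f (u j * x) = x - u j * f x := by
    intro x
    rw [hf, h1, one_mul, C.sg_of_mem _ (h.mem j), (ho.mul ho).neg_one_pow, neg_smul, one_smul,
      neg_mul, sub_eq_add_neg]
  have hsq : ∀ x, u j * (u j * x) = 0 := by
    intro x
    rw [← mul_assoc, C.odd_sq ho (h.mem j), zero_mul]
  obtain ⟨θ, hθd, hθ⟩ : ∃ θ : C.A →ₗ[ℚ] C.A, C.IsDer 0 θ ∧ ∀ x, θ x = C.d (f x) + f (C.d x) :=
    ⟨_, isDer_anticomm_d ho hf h3, fun _ => rfl⟩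
  have hθplus : ∀ x, θ x ∈ C.plus := by
    intro x
    refine hθd.mem_of_gen C.plus (fun a x hx => C.plus_mul_left a hx)
      (fun a x hx => C.plus_mul_right a hx) (s := Set.range u) ?_ (by rw [h.gen]; trivial)
    rintro _ ⟨i, rfl⟩
    rw [hθ]
    refine add_mem ?_ (hf.plus_sq (hdec i))
    by_cases hi : i = j
    · rw [hi, h1, C.d_one]; exact zero_mem _
    · rw [h2 i hi, map_zero]; exact zero_mem _
  have hθpow : ∀ K : ℕ, ∀ x ∈ C.plus ^ K, θ x ∈ C.plus ^ K := by
    intro K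
    induction K with
    | zero =>
      intro x hx
      rw [pow_zero] at hx ⊢
      obtain ⟨c, rfl⟩ := Submodule.mem_one.mp hx
      rw [Algebra.algebraMap_eq_smul_one, map_smul, hθd.one, smul_zero]; exact zero_mem _
    | succ K ih =>
      intro x hx
      rw [pow_succ'] at hx ⊢
      refine Submodule.mul_induction_on hx ?_ ?_
      · intro x hx y hy
        rw [hθd, C.sg_zero]
        exact add_mem (Submodule.mul_mem_mul (hθplus x) hy) (Submodule.mul_mem_mul hx (ih y hy))
      · intro x y hx hy
        rw [map_add]; exact add_mem hx hy
  have key : ∀ k, ∀ z ∈ C.grading k, z ∈ C.plus ^ (N + 1) → C.d z ∈ idl u (insert j s) →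
      z ∈ exm u (insert j s) := by
    intro k
    induction k using Nat.strong_induction_on with
    | _ k ih =>
      intro z hz hzp hdz
      by_cases hk : k ≤ N
      · have := plus_pow_pr (N + 1) z hzp k (by omega)
        rw [C.pr_of_mem hz] at this
        rw [this]; exact zero_mem _
      push Not at hk
      obtain ⟨a1, ha1, b, hab⟩ := idl_insert h.mem hdz
      have hθz : θ z = f a1 + b - u j * f b + C.d (f z) := by
        rw [hθ, hab, map_add,
          hder]; abel
      have hdb : C.d b ∈ idl u (insert j s) := by
        refine h.regular_odd hj ?_
        have h4 := C.d_sq z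
        rw [hab, map_add, d_odd h.mem ho] at h4
        have : u j * C.d b = C.d a1 + C.d (u j) * b := by
          rw [← sub_eq_zero, ← neg_eq_zero, ← h4]; abel
        rw [this]
        exact add_mem (d_idl hs ha1) (idl_mul_right h.mem b hdj)
      have hθzm : θ z ∈ exm u (insert j s) := by
        have hj2 := hn j
        have hj3 : n j ≠ 2 := by rintro e; rw [e] at ho; exact absurd ho (by decide)
        by_cases hkj : n j ≤ k + 1
        · refine ih (k + 1 - n j) (by omega) _ ?_ (hθpow _ _ hzp) ?_
          · rw [hθ]
            refine add_mem ?_ ?_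
            · have := h3 k z hz
              unfold low at this
              split_ifs at this with hle
              · rw [show k + 1 - n j = k - n j + 1 by omega]; exact C.d_mem this
              · rw [(Submodule.mem_bot ℚ).mp this, map_zero]; exact zero_mem _
            · have := h3 _ _ (C.d_mem hz)
              unfold low at this
              rwa [if_pos hkj] at this
          · rw [hθz]
            simp only [map_add, map_sub, C.d_sq, add_zero]
            refine sub_mem (add_mem (le_insert (d_idl hs (hfs _ ha1))) hdb) ?_
            exact d_idl (closed_insert hs hdj) (mul_mem_insert h.mem _)
        · have e1 := h3 k z hz
          have e2 := h3 _ _ (C.d_mem hz)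
          unfold low at e1 e2
          rw [if_neg (by omega)] at e1 e2
          rw [hθ, (Submodule.mem_bot ℚ).mp e1, (Submodule.mem_bot ℚ).mp e2, map_zero, add_zero]
          exact zero_mem _
      obtain ⟨a, ha, e, y, hy⟩ := exm_insert h.mem hθzm
      have hb : b = (a - f a1) + u j * (e + f b) + C.d (y - f z) := by
        have := hθz.symm.trans hy
        rw [map_sub, mul_add]
        calc b = (f a1 + b - u j * f b + C.d (f z)) - f a1 + u j * f b - C.d (f z) := by abel
          _ = _ := by rw [this]; abel
      have hc : C.d (z + u j * (y - f z)) ∈ idl u s := by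
        set c := y - f z
        rw [map_add, hab, d_odd h.mem ho]
        have : a1 + u j * b + (C.d (u j) * c - u j * C.d c)
            = a1 + u j * (a - f a1) + C.d (u j) * c := by
          conv_lhs => rw [hb]
          rw [mul_add, mul_add, hsq]; abel
        rw [this]
        exact add_mem (add_mem ha1 (idl_mul_left _ (sub_mem ha (hfs _ ha1))))
          (idl_mul_right h.mem c hdj)
      have h5 := hN k hk _ (C.pr_mem k (z + u j * (y - f z)))
        (by rw [← C.pr_d]; exact idl_homog h.mem _ _ hc)
      rw [map_add, C.pr_of_mem hz] at h5
      have h6 := sub_mem (exm_mono (Set.subset_insert j s) h5)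
        (idl_le_exm (idl_homog h.mem k _ (mul_mem_insert h.mem (s := s) (j := j) (y - f z))))
      rwa [add_sub_cancel_right] at h6
  have := Fintype.ofFinite ι
  have hM : ∀ i, n i ≤ ∑ i, n i := fun i =>
    Finset.single_le_sum (f := n) (fun _ _ => Nat.zero_le _) (Finset.mem_univ i)
  refine ⟨(N + 1) * ∑ i, n i, fun k hk z hz hdz => key k z hz ?_ hdz⟩
  exact h.mem_plus_pow hn0 hM ((Nat.pos_of_ne_zero (hn0 j)).trans_le (hM j)) hk.le hz

end

end CDGA

end RHT

end

/-! ### The top class -/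

noncomputable section

namespace RHT

namespace CDGA

section

variable {C : CDGA} {ι : Type} {u : ι → C.A} {n p : ι → ℕ} {s : Set ι}
  {E : ℕ → Submodule ℚ C.A}

namespace LowGrading

variable (hE : C.LowGrading E)
include hE

lemma comp_mul {q : ℕ} {a : C.A} (ha : a ∈ E q) (m : ℕ) (x : C.A) :
    comp hE.internal (q + m) (a * x) = a * comp hE.internal m x := by
  refine LinearMap.congr_fun
    (f := comp hE.internal (q + m) ∘ₗ LinearMap.mulLeft ℚ a)
    (g := LinearMap.mulLeft ℚ a ∘ₗ comp hE.internal m) (comp_lin_ext hE.internal ?_) x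
  intro t x hx
  simp only [LinearMap.comp_apply, LinearMap.mulLeft_apply]
  by_cases h : t = m
  · subst h
    rw [comp_of_mem _ hx, comp_of_mem _ (hE.mul ha hx)]
  · rw [comp_of_mem_ne _ hx h, comp_of_mem_ne _ (hE.mul ha hx) (by omega), mul_zero]

lemma comp_mul_lt {q m : ℕ} {a : C.A} (ha : a ∈ E q) (hm : m < q) (x : C.A) :
    comp hE.internal m (a * x) = 0 := by
  refine LinearMap.congr_fun
    (f := comp hE.internal m ∘ₗ LinearMap.mulLeft ℚ a) (g := 0)
    (comp_lin_ext hE.internal ?_) x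
  intro t x hx
  simp only [LinearMap.comp_apply, LinearMap.mulLeft_apply, LinearMap.zero_apply]
  rw [comp_of_mem_ne _ (hE.mul ha hx) (by omega)]

lemma comp_mul_right {q : ℕ} {a : C.A} (ha : a ∈ E q) (m : ℕ) (x : C.A) :
    comp hE.internal (m + q) (x * a) = comp hE.internal m x * a := by
  refine LinearMap.congr_fun
    (f := comp hE.internal (m + q) ∘ₗ LinearMap.mulRight ℚ a)
    (g := LinearMap.mulRight ℚ a ∘ₗ comp hE.internal m) (comp_lin_ext hE.internal ?_) x
  intro t x hx
  simp only [LinearMap.comp_apply, LinearMap.mulRight_apply]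
  by_cases h : t = m
  · subst h
    rw [comp_of_mem _ hx, comp_of_mem _ (hE.mul hx ha)]
  · rw [comp_of_mem_ne _ hx h, comp_of_mem_ne _ (hE.mul hx ha) (by omega), zero_mul]

lemma comp_mul_right_lt {q m : ℕ} {a : C.A} (ha : a ∈ E q) (hm : m < q) (x : C.A) :
    comp hE.internal m (x * a) = 0 := by
  refine LinearMap.congr_fun
    (f := comp hE.internal m ∘ₗ LinearMap.mulRight ℚ a) (g := 0)
    (comp_lin_ext hE.internal ?_) x
  intro t x hx
  simp only [LinearMap.comp_apply, LinearMap.mulRight_apply, LinearMap.zero_apply]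
  rw [comp_of_mem_ne _ (hE.mul hx ha) (by omega)]

lemma comp_d (q : ℕ) (x : C.A) :
    comp hE.internal q (C.d x) = C.d (comp hE.internal (q + 1) x) :=
  comp_shift hE.internal (fun _ hx => hE.d_zero hx) (fun _ _ hx => hE.d_succ hx) q x

lemma comp_homog (q : ℕ) (i : ℕ) (x : C.A) :
    C.pr i (comp hE.internal q x) = comp hE.internal q (C.pr i x) :=
  (comp_pres hE.internal (f := C.pr i) (fun t x hx => hE.homog t i x hx) q x).symm

/-- The component of lower degree `q` of an element of the ideal only involves generators of lower
degree at most `q`. -/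
lemma comp_idl (hu : ∀ i, u i ∈ E (p i)) (q : ℕ) {x : C.A} (hx : x ∈ idl u s) :
    comp hE.internal q x ∈ idl u (s ∩ {i | p i ≤ q}) := by
  refine idl_induction (P := fun x => comp hE.internal q x ∈ idl u (s ∩ {i | p i ≤ q})) ?_ ?_ ?_ hx
  · rw [map_zero]; exact zero_mem _
  · intro i hi a
    by_cases h : p i ≤ q
    · obtain ⟨e, rfl⟩ := Nat.exists_eq_add_of_le' h
      rw [hE.comp_mul_right (hu i)]
      exact mem_idl (Set.mem_inter hi h) _
    · rw [hE.comp_mul_right_lt (hu i) (by omega)]; exact zero_mem _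
  · intro x y hx hy; rw [map_add]; exact add_mem hx hy

lemma comp_idl' (hu : ∀ i, u i ∈ E (p i)) (q : ℕ) {x : C.A} (hx : x ∈ idl u s) :
    comp hE.internal q x ∈ idl u s :=
  idl_mono Set.inter_subset_left (hE.comp_idl hu q hx)

end LowGrading

lemma exm_insert_homog (hu : ∀ i, u i ∈ C.grading (n i)) {j : ι} {k : ℕ} {x : C.A}
    (hx : x ∈ exm u (insert j s)) (hk : x ∈ C.grading (n j + k)) :
    ∃ a ∈ idl u s, ∃ b ∈ C.grading k, ∃ c, x = a + u j * b + C.d c := by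
  obtain ⟨a, ha, b, c, rfl⟩ := exm_insert hu hx
  refine ⟨C.pr (n j + k) a, idl_homog hu _ _ ha, C.pr k b, C.pr_mem _ _, ?_⟩
  obtain ⟨c', hc'⟩ := C.homog_range_d (n j + k) _ ⟨c, rfl⟩
  refine ⟨c', ?_⟩
  rw [hc', ← C.pr_mul_left (hu j), ← map_add, ← map_add, C.pr_of_mem hk]

lemma exm_homog_primitive (hu : ∀ i, u i ∈ C.grading (n i)) {k : ℕ} {x : C.A}
    (hx : x ∈ exm u s) (hk : x ∈ C.grading (k + 1)) :
    ∃ a ∈ idl u s, ∃ c ∈ C.grading k, x = a + C.d c := by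
  obtain ⟨a, ha, c, rfl⟩ := mem_exm.mp hx
  refine ⟨C.pr (k + 1) a, idl_homog hu _ _ ha, C.pr k c, C.pr_mem _ _, ?_⟩
  rw [← C.pr_d, ← map_add, C.pr_of_mem hk]

lemma mul_mem_exm_odd (hu : ∀ i, u i ∈ C.grading (n i)) {j : ι} (ho : Odd (n j))
    (hdj : C.d (u j) ∈ idl u s) {x : C.A} (hx : x ∈ exm u (insert j s)) : u j * x ∈ exm u s := by
  obtain ⟨a, ha, b, c, rfl⟩ := exm_insert hu hx
  refine mem_exm.mpr ⟨u j * a + C.d (u j) * c, add_mem (idl_mul_left _ ha)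
    (idl_mul_right hu c hdj), - (u j * c), ?_⟩
  rw [map_neg, d_odd hu ho, mul_add, mul_add, ← mul_assoc, C.odd_sq ho (hu j), zero_mul]; abel

/-- The cohomology of the quotient by the ideal generated by `u i`, `i ∈ s`, has a
one-dimensional top degree `N`, and its top class has lower degree `P`. -/
def TopClass (h : DirectSum.IsInternal E) (u : ι → C.A) (s : Set ι) (P : ℤ) (N : ℕ) : Prop :=
  ∃ ω ∈ C.grading N, C.d ω ∈ idl u s ∧ ω ∉ exm u s ∧
    (∀ i, N < i → ∀ a ∈ C.grading i, C.d a ∈ idl u s → a ∈ exm u s) ∧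
    (∀ a ∈ C.grading N, C.d a ∈ idl u s → ∃ c : ℚ, a - c • ω ∈ exm u s) ∧
    ∀ q : ℕ, (q : ℤ) ≠ P → comp h q ω ∈ exm u s

lemma BiFree.topClass_odd (h : C.BiFree E u n p) (hE : C.LowGrading E) {j : ι} (hj : j ∉ s)
    (ho : Odd (n j)) (hs : ∀ i ∈ s, C.d (u i) ∈ idl u s) (hdj : C.d (u j) ∈ idl u s)
    {P : ℤ} {N : ℕ} (hT : TopClass hE.internal u (insert j s) P N) :
    TopClass hE.internal u s (P + p j) (n j + N) := by
  obtain ⟨w, hw, hdw, hwn, htop, hN, hc⟩ := hT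
  have hj2 := h.two_le j
  have hsq : ∀ x, u j * (u j * x) = 0 := fun x => by
    rw [← mul_assoc, C.odd_sq ho (h.mem j), zero_mul]
  -- a cocycle of degree `n j + k` equals `u j * b` modulo coboundaries
  have hred : ∀ k, N < n j + k → ∀ a ∈ C.grading (n j + k), C.d a ∈ idl u s →
      ∃ b ∈ C.grading k, C.d b ∈ idl u (insert j s) ∧ a - u j * b ∈ exm u s := by
    intro k hk a ha hda
    obtain ⟨a0, ha0, b, hb, c, rfl⟩ := exm_insert_homog h.mem (htop _ hk a ha (le_insert hda)) ha
    refine ⟨b, hb, ?_, ?_⟩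
    · refine h.regular_odd hj ?_
      rw [map_add, map_add, C.d_sq, add_zero, d_odd h.mem ho] at hda
      have := sub_mem (add_mem (d_idl hs ha0) (idl_mul_right h.mem b hdj)) hda
      convert this using 1; abel
    · exact mem_exm.mpr ⟨a0, ha0, c, by abel⟩
  refine ⟨u j * w, C.mul_deg (h.mem j) hw, ?_, ?_, ?_, ?_, ?_⟩
  · obtain ⟨a, ha, b, hab⟩ := idl_insert h.mem hdw
    rw [d_odd h.mem ho, hab, mul_add, hsq, add_zero]
    exact sub_mem (idl_mul_right h.mem _ hdj) (idl_mul_left _ ha)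
  · intro hx
    refine hwn ?_
    obtain ⟨a, ha, c, hcd, hac⟩ := exm_homog_primitive h.mem (k := n j + N - 1) hx (by
      rw [show n j + N - 1 + 1 = n j + N by omega]; exact C.mul_deg (h.mem j) hw)
    have h1 : C.d c ∈ idl u (insert j s) := by
      have := sub_mem (mul_mem_insert (s := s) h.mem (j := j) w) (le_insert (j := j) ha)
      rwa [hac, add_sub_cancel_left] at this
    obtain ⟨a1, ha1, e, y, rfl⟩ := exm_insert h.mem (htop _ (by omega) c hcd h1)
    have h2 : u j * (w + C.d e) ∈ idl u s := by
      have : u j * (w + C.d e) = a + C.d a1 + C.d (u j) * e := by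
        rw [mul_add, hac, map_add, map_add, C.d_sq, d_odd h.mem ho]; abel
      rw [this]
      exact add_mem (add_mem ha (d_idl hs ha1)) (idl_mul_right h.mem e hdj)
    have h3 := h.regular_odd hj h2
    exact mem_exm.mpr ⟨_, h3, -e, by rw [map_neg]; abel⟩
  · intro i hi a ha hda
    obtain ⟨k, rfl⟩ := Nat.exists_eq_add_of_le (show n j ≤ i by omega)
    obtain ⟨b, hb, hdb, hab⟩ := hred k (by omega) a ha hda
    have := mul_mem_exm_odd h.mem ho hdj (htop k (by omega) b hb hdb)
    simpa using add_mem hab this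
  · intro a ha hda
    obtain ⟨b, hb, hdb, hab⟩ := hred N (by omega) a ha hda
    obtain ⟨c, hc⟩ := hN b hb hdb
    refine ⟨c, ?_⟩
    have := add_mem hab (mul_mem_exm_odd h.mem ho hdj hc)
    rw [mul_sub, mul_smul_comm] at this
    convert this using 1; abel
  · intro q hq
    by_cases hqp : q < p j
    · rw [hE.comp_mul_lt (h.lowmem j) hqp]; exact zero_mem _
    · obtain ⟨m, rfl⟩ := Nat.exists_eq_add_of_le (show p j ≤ q by omega)
      rw [hE.comp_mul (h.lowmem j)]
      exact mul_mem_exm_odd h.mem ho hdj (hc m (by push_cast at hq; omega))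

lemma BiFree.one_notMem_exm (h : C.BiFree E u n p) : (1 : C.A) ∉ exm u s := by
  intro h1
  have hn0 : ∀ i, n i ≠ 0 := fun i => by have := h.two_le i; omega
  have := h.toFreeOn.nontrivial
  refine C.one_notMem_plus ?_
  obtain ⟨a, ha, c, hac⟩ := mem_exm.mp h1
  rw [hac]
  exact add_mem (idl_le_plus h.mem hn0 ha) (C.d_mem_plus c)

lemma BiFree.topClass_even (h : C.BiFree E u n p) (hE : C.LowGrading E) {j : ι} (hj : j ∉ s)
    (he : Even (n j)) (hs : ∀ i ∈ s, C.d (u i) ∈ idl u s) (hdj : C.d (u j) ∈ idl u s)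
    (hb : CohBdd u s)
    {P : ℤ} {N : ℕ} (hT : TopClass hE.internal u (insert j s) P N) :
    ∃ N', TopClass hE.internal u s (P - 1 - p j) N' := by
  obtain ⟨w, hw, hdw, hwn, htop, hN, hc⟩ := hT
  have hj2 := h.two_le j
  have hn0 : ∀ i, n i ≠ 0 := fun i => by have := h.two_le i; omega
  obtain ⟨M, hM⟩ := hb
  -- downward induction on the degree, started by the boundedness of the cohomology
  have hclaim' : ∀ t i, M < i + t → N + 1 < i + n j → ∀ a ∈ C.grading i, C.d a ∈ idl u s →
      a ∈ exm u s := by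
    intro t
    induction t with
    | zero => intro i hi _ a ha hda; exact hM i hi a ha hda
    | succ t ih =>
      intro i hi hiN a ha hda
      have h1 : u j * a ∈ exm u s := by
        refine ih (n j + i) (by omega) (by omega) _ (C.mul_deg (h.mem j) ha) ?_
        rw [d_even h.mem he]
        exact add_mem (idl_mul_right h.mem _ hdj) (idl_mul_left _ hda)
      obtain ⟨a0, ha0, c, hcd, hac⟩ := exm_homog_primitive h.mem (k := n j + i - 1) h1 (by
        rw [show n j + i - 1 + 1 = n j + i by omega]; exact C.mul_deg (h.mem j) ha)
      have h2 : C.d c ∈ idl u (insert j s) := by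
        have := sub_mem (mul_mem_insert (s := s) h.mem (j := j) a) (le_insert (j := j) ha0)
        rwa [hac, add_sub_cancel_left] at this
      obtain ⟨a1, ha1, e, y, rfl⟩ := exm_insert h.mem (htop _ (by omega) c hcd h2)
      have h3 : u j * (a - C.d e) ∈ idl u s := by
        have : u j * (a - C.d e) = a0 + C.d a1 + C.d (u j) * e := by
          rw [mul_sub, hac, map_add, map_add, C.d_sq, d_even h.mem he]; abel
        rw [this]
        exact add_mem (add_mem ha0 (d_idl hs ha1)) (idl_mul_right h.mem e hdj)
      exact mem_exm.mpr ⟨_, h.regular_even hn0 hj he h3, e, by abel⟩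
  have hclaim : ∀ i, N + 1 < i + n j → ∀ a ∈ C.grading i, C.d a ∈ idl u s → a ∈ exm u s :=
    fun i hi => hclaim' (M + 1) i (by omega) hi
  have hle : n j ≤ N + 1 := by
    by_contra hlt
    refine h.one_notMem_exm (s := s) (hclaim 0 (by omega) 1 C.one_deg ?_)
    rw [C.d_one]; exact zero_mem _
  obtain ⟨N', hN'⟩ := Nat.exists_eq_add_of_le hle
  obtain ⟨a, ha, η, hη, hab⟩ := idl_insert_homog h.mem hdw (k := N') (hN' ▸ C.d_mem hw)
  refine ⟨N', η, hη, ?_, ?_, ?_, ?_, ?_⟩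
  · refine h.regular_even hn0 hj he ?_
    have h2 := C.d_sq w
    rw [hab, map_add, d_even h.mem he] at h2
    have : u j * C.d η = 0 - (C.d a + C.d (u j) * η) := by rw [← h2]; abel
    rw [this, zero_sub]
    exact neg_mem (add_mem (d_idl hs ha) (idl_mul_right h.mem η hdj))
  · intro hx
    obtain ⟨a1, ha1, c, rfl⟩ := mem_exm.mp hx
    have h1 : C.d (w - u j * c) ∈ idl u s := by
      have : C.d (w - u j * c) = a + u j * a1 - C.d (u j) * c := by
        rw [map_sub, hab, d_even h.mem he, mul_add]; abel
      rw [this]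
      exact sub_mem (add_mem ha (idl_mul_left _ ha1)) (idl_mul_right h.mem c hdj)
    have h3 := hclaim N (by omega) _ (C.pr_mem N (w - u j * c))
      (by rw [← C.pr_d]; exact idl_homog h.mem _ _ h1)
    rw [map_sub, C.pr_of_mem hw] at h3
    have h4 := add_mem (exm_mono (Set.subset_insert j s) h3)
      (idl_le_exm (idl_homog h.mem N _ (mul_mem_insert h.mem (s := s) (j := j) c)))
    rw [sub_add_cancel] at h4
    exact hwn h4
  · intro i hi; exact hclaim i (by omega)
  · intro b hbd hdb
    have hmem : u j * b ∈ C.grading (N + 1) := hN' ▸ C.mul_deg (h.mem j) hbd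
    have h1 : u j * b ∈ exm u s := by
      refine hclaim (N + 1) (by omega) _ hmem ?_
      rw [d_even h.mem he]
      exact add_mem (idl_mul_right h.mem _ hdj) (idl_mul_left _ hdb)
    obtain ⟨a0, ha0, c, hcd, hac⟩ := exm_homog_primitive h.mem h1 hmem
    have h2 : C.d c ∈ idl u (insert j s) := by
      have := sub_mem (mul_mem_insert (s := s) h.mem (j := j) b) (le_insert (j := j) ha0)
      rwa [hac, add_sub_cancel_left] at this
    obtain ⟨l, hl⟩ := hN c hcd h2
    obtain ⟨a1, ha1, e, y, hy⟩ := exm_insert h.mem hl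
    have hcc : c = l • w + (a1 + u j * e + C.d y) := by rw [← hy]; abel
    refine ⟨l, ?_⟩
    have h3 : u j * (b - l • η - C.d e) ∈ idl u s := by
      have : u j * (b - l • η - C.d e) = a0 + l • a + C.d a1 + C.d (u j) * e := by
        rw [mul_sub, mul_sub, hac, hcc, map_add, map_smul, hab, map_add, map_add, C.d_sq,
          d_even h.mem he, mul_smul_comm, smul_add]; abel
      rw [this]
      exact add_mem (add_mem (add_mem ha0 (Submodule.smul_mem _ _ ha)) (d_idl hs ha1))
        (idl_mul_right h.mem e hdj)
    exact mem_exm.mpr ⟨_, h.regular_even hn0 hj he h3, e, by abel⟩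
  · intro q hq
    obtain ⟨a1, ha1, e, y, hy⟩ := exm_insert h.mem (hc (p j + q + 1) (by push_cast; omega))
    have h1 := hE.comp_d (p j + q) w
    rw [hab, map_add, hE.comp_mul (h.lowmem j), hy, map_add, map_add, C.d_sq, d_even h.mem he,
      add_zero] at h1
    have h3 : u j * (comp hE.internal q η - C.d e) ∈ idl u s := by
      have : u j * (comp hE.internal q η - C.d e)
          = C.d a1 + C.d (u j) * e - comp hE.internal (p j + q) a := by
        rw [mul_sub, sub_eq_sub_iff_add_eq_add, add_comm, h1]; abel
      rw [this]
      exact sub_mem (add_mem (d_idl hs ha1) (idl_mul_right h.mem e hdj))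
        (hE.comp_idl' h.lowmem _ ha)
    exact mem_exm.mpr ⟨_, h.regular_even hn0 hj he h3, e, by abel⟩

end

end CDGA

end RHT

end

/-! ### Height of polynomial ideals -/

noncomputable section

namespace RHT

open MvPolynomial in
/-- The homogeneous maximal ideal of a polynomial ring in `r` variables has height at least `r`: the
kernels of the maps killing the first `k` variables form a chain of primes. -/
lemma le_height_ker (r : ℕ) :
    (r : ℕ∞) ≤ (RingHom.ker (aeval (R := ℚ) (fun _ : Fin r => (0 : ℚ)))).height := by
  let φ : ℕ → MvPolynomial (Fin r) ℚ →ₐ[ℚ] MvPolynomial (Fin r) ℚ := fun k =>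
    aeval (fun i => if i.val < k then 0 else X i)
  have hp : ∀ k, (RingHom.ker (φ k)).IsPrime := fun k => RingHom.ker_isPrime _
  have h1 : ∀ k : ℕ, k ≤ r → (k : ℕ∞) ≤ (RingHom.ker (φ k)).height := by
    intro k
    induction k with
    | zero => intro _; simp
    | succ k ih =>
      intro hk
      have hlt : RingHom.ker (φ k) < RingHom.ker (φ (k + 1)) := by
        refine lt_of_le_of_ne ?_ ?_
        · intro x hx
          have hc : φ (k + 1) = (φ (k + 1)).comp (φ k) := by
            refine MvPolynomial.algHom_ext fun i => ?_
            simp only [φ, AlgHom.comp_apply, aeval_X]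
            by_cases h : i.val < k
            · simp [h, h.trans (Nat.lt_succ_self k)]
            · simp [h]
          rw [RingHom.mem_ker] at hx ⊢
          rw [hc, AlgHom.comp_apply, hx, map_zero]
        · intro he
          have h2 : (X ⟨k, hk⟩ : MvPolynomial (Fin r) ℚ) ∈ RingHom.ker (φ (k + 1)) := by
            simp [RingHom.mem_ker, φ]
          rw [← he, RingHom.mem_ker] at h2
          simp [φ] at h2
      calc ((k + 1 : ℕ) : ℕ∞) = (k : ℕ∞) + 1 := by push_cast; rfl
        _ ≤ (RingHom.ker (φ k)).height + 1 := by gcongr; exact ih (by omega)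
        _ ≤ _ := Ideal.height_add_one_le_of_lt_of_isPrime hlt
  refine (h1 r le_rfl).trans (Ideal.height_mono ?_)
  intro x hx
  rw [RingHom.mem_ker] at hx ⊢
  have hc : aeval (R := ℚ) (fun _ : Fin r => (0 : ℚ))
      = (aeval (R := ℚ) (fun _ : Fin r => (0 : ℚ))).comp (φ r) := by
    refine MvPolynomial.algHom_ext fun i => ?_
    simp [φ]
  rw [hc, AlgHom.comp_apply, hx, map_zero]

open MvPolynomial in
/-- If polynomials without constant term generate an ideal containing a power of every variable,
then there are at least as many of them as there are variables. -/
lemma card_le_of_pow_mem {σ κ : Type} [Fintype σ] [Fintype κ] (f : κ → MvPolynomial σ ℚ)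
    (h0 : ∀ k, aeval (R := ℚ) (fun _ : σ => (0 : ℚ)) (f k) = 0)
    (hpow : ∀ i, ∃ m : ℕ, (X i : MvPolynomial σ ℚ) ^ m ∈ Ideal.span (Set.range f)) :
    Fintype.card σ ≤ Fintype.card κ := by
  classical
  -- transfer to the variables `Fin r`
  let e := Fintype.equivFin σ
  let ρ := (renameEquiv ℚ e).toAlgHom
  let g : κ → MvPolynomial (Fin (Fintype.card σ)) ℚ := fun k => ρ (f k)
  let M := RingHom.ker (aeval (R := ℚ) (fun _ : Fin (Fintype.card σ) => (0 : ℚ)))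
  have hM : M.IsPrime := RingHom.ker_isPrime _
  have hmin : M ∈ (Ideal.span (Set.range g)).minimalPrimes := by
    refine ⟨⟨hM, ?_⟩, ?_⟩
    · rw [Ideal.span_le]
      rintro _ ⟨k, rfl⟩
      have hc : (aeval (R := ℚ) (fun _ : Fin (Fintype.card σ) => (0 : ℚ))).comp ρ
          = aeval (R := ℚ) (fun _ : σ => (0 : ℚ)) :=
        MvPolynomial.algHom_ext fun i => by simp [ρ]
      have := h0 k
      rw [← hc] at this
      exact this
    · rintro q ⟨hq, hqJ⟩ - x hx
      have hX : ∀ i, (X i : MvPolynomial (Fin (Fintype.card σ)) ℚ) ∈ q := by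
        intro i
        obtain ⟨m, hm⟩ := hpow (e.symm i)
        refine hq.mem_of_pow_mem m (hqJ ?_)
        have := Ideal.mem_map_of_mem ρ.toRingHom hm
        rw [Ideal.map_span, ← Set.range_comp] at this
        have hX' : ρ.toRingHom (X (e.symm i) ^ m) = X i ^ m := by simp [ρ]
        rw [hX'] at this
        exact this
      have hx' : aeval (R := ℚ) (fun _ : Fin (Fintype.card σ) => (0 : ℚ)) x = 0 := hx
      -- modulo the variables, `x` equals its constant term
      have hc : (Ideal.Quotient.mkₐ ℚ q) = (Algebra.ofId ℚ _).comp
          (aeval (R := ℚ) (fun _ : Fin (Fintype.card σ) => (0 : ℚ))) :=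
        MvPolynomial.algHom_ext fun i => by
          simpa using Ideal.Quotient.eq_zero_iff_mem.mpr (hX i)
      have h2 := DFunLike.congr_fun hc x
      rw [AlgHom.comp_apply, hx', map_zero] at h2
      exact Ideal.Quotient.eq_zero_iff_mem.mp h2
  have h1 := (le_height_ker (Fintype.card σ)).trans
    (Ideal.height_le_card_of_mem_minimalPrimes_span (Set.finite_range g) hmin)
  have h2 : (Set.range g).ncard ≤ Fintype.card κ := by
    rw [show Set.range g = ↑(Finset.univ.image g) by simp, Set.ncard_coe_finset]
    exact Finset.card_image_le
  exact (by exact_mod_cast h1 : Fintype.card σ ≤ (Set.range g).ncard).trans h2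

end RHT

end

/-! ### Lower degree of the top class -/

noncomputable section

namespace RHT

namespace CDGA

section

variable {C : CDGA} {ι : Type} {u : ι → C.A} {n p : ι → ℕ} {s : Set ι}
  {E : ℕ → Submodule ℚ C.A}

lemma FreeOn.exists_const_idl (h : C.FreeOn u n) (x : C.A) :
    ∃ c : ℚ, ∃ y ∈ idl u Set.univ, x = c • 1 + y := by
  have hx : x ∈ Algebra.adjoin ℚ (Set.range u) := by rw [h.gen]; trivial
  induction hx using Algebra.adjoin_induction with
  | mem x hx =>
    obtain ⟨i, rfl⟩ := hx
    exact ⟨0, _, gen_mem_idl (Set.mem_univ i), by simp⟩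
  | algebraMap r => exact ⟨r, 0, zero_mem _, by rw [Algebra.algebraMap_eq_smul_one, add_zero]⟩
  | add x y _ _ hx hy =>
    obtain ⟨c, a, ha, rfl⟩ := hx
    obtain ⟨e, b, hb, rfl⟩ := hy
    exact ⟨c + e, a + b, add_mem ha hb, by rw [add_smul]; abel⟩
  | mul x y _ _ hx hy =>
    obtain ⟨c, a, ha, rfl⟩ := hx
    obtain ⟨e, b, hb, rfl⟩ := hy
    refine ⟨e * c, c • b + (e • a + a * b),
      add_mem (Submodule.smul_mem _ c hb)
        (add_mem (Submodule.smul_mem _ e ha) (idl_mul_left a hb)), ?_⟩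
    simp only [add_mul, mul_add, smul_mul_assoc, mul_smul_comm, one_mul, mul_one, smul_add,
      smul_smul]
    abel

lemma FreeOn.mem_idl_univ (h : C.FreeOn u n) {k : ℕ} (hk : k ≠ 0) {x : C.A}
    (hx : x ∈ C.grading k) : x ∈ idl u Set.univ := by
  obtain ⟨c, y, hy, hxy⟩ := h.exists_const_idl x
  have h1 := congrArg (C.pr k) hxy
  rw [C.pr_of_mem hx, map_add, map_smul, C.pr_of_mem_ne C.one_deg (Ne.symm hk), smul_zero,
    zero_add] at h1
  rw [h1]
  exact idl_homog h.mem k y hy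

lemma BiFree.mem_idl_low (h : C.BiFree E u n p) (hE : C.LowGrading E) {k q : ℕ} (hk : k ≠ 0)
    {x : C.A} (hx : x ∈ C.grading k) (hxq : x ∈ E q) : x ∈ idl u {i | p i ≤ q} := by
  have := hE.comp_idl h.lowmem q (h.mem_idl_univ hk hx)
  rwa [comp_of_mem _ hxq, Set.univ_inter] at this

lemma BiFree.topClass_univ (h : C.BiFree E u n p) (hE : C.LowGrading E) :
    TopClass hE.internal u Set.univ 0 0 := by
  have hn0 : ∀ i, n i ≠ 0 := fun i => by have := h.two_le i; omega
  refine ⟨1, C.one_deg, ?_, h.one_notMem_exm, ?_, ?_, ?_⟩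
  · rw [C.d_one]; exact zero_mem _
  · intro i hi a ha _
    exact idl_le_exm (h.mem_idl_univ hi.ne' ha)
  · intro a ha _
    obtain ⟨c, hc⟩ := h.grading_zero hn0 ha
    exact ⟨c, by rw [hc, sub_self]; exact zero_mem _⟩
  · intro q hq
    rw [comp_of_mem_ne _ hE.one (by omega)]; exact zero_mem _

section sorted

variable {r : ℕ} {u : Fin r → C.A} {n p : Fin r → ℕ}

/-- The change of the lower degree of the top class when one more generator is added. -/
def wt (n p : Fin r → ℕ) (i : Fin r) : ℤ := if Odd (n i) then (p i : ℤ) else -1 - p i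

/-- The differential of a generator of lower degree `q + 1` has lower degree `q`, so it lies in the
ideal of the generators of lower degree at most `q`, which come earlier. -/
lemma BiFree.d_gen_mem (h : C.BiFree E u n p) (hE : C.LowGrading E)
    (hk : Monotone fun i => key (n i) (p i)) (j : Fin r) :
    C.d (u j) ∈ idl u {i | i.val < j.val} := by
  rcases hp : p j with _ | q
  · rw [hE.d_zero (hp ▸ h.lowmem j)]; exact zero_mem _
  · refine idl_mono ?_ (h.mem_idl_low hE (Nat.succ_ne_zero (n j)) (C.d_mem (h.mem j))
      (hE.d_succ (hp ▸ h.lowmem j)))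
    intro i hi
    have hi' : p i ≤ q := hi
    have h1 : key (n i) (p i) < key (n j) (p j) := by
      rcases hi0 : p i with _ | t
      · have : key (n i) 0 = 0 := by simp [key]
        have h2 : 0 < key (n j) (q + 1) := by
          unfold key
          rw [if_neg (Nat.succ_ne_zero q)]
          by_cases c : q + 1 = 1 ∧ Odd (n j)
          · rw [if_pos c]; exact one_pos
          · rw [if_neg c]; exact Nat.succ_pos _
        rw [hp, this]; exact h2
      · have h2 : key (n i) (t + 1) ≤ t + 2 := by unfold key; split_ifs <;> omega
        have h3 : key (n j) (q + 1) = q + 2 := by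
          unfold key
          rw [if_neg (by omega), if_neg (by omega)]
        rw [hp, h3]; omega
    change i < j
    by_contra hle
    exact absurd (hk (not_lt.mp hle)) (not_le.mpr h1)

lemma set_succ {k : ℕ} (hk : k < r) :
    {i : Fin r | i.val < k + 1} = insert ⟨k, hk⟩ {i : Fin r | i.val < k} := by
  ext i
  simp only [Set.mem_ofPred_eq, Set.mem_insert_iff, Fin.ext_iff]
  omega

lemma BiFree.closed (h : C.BiFree E u n p) (hE : C.LowGrading E)
    (hk : Monotone fun i => key (n i) (p i)) (k : ℕ) :
    ∀ i ∈ {i : Fin r | i.val < k}, C.d (u i) ∈ idl u {i | i.val < k} := by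
  intro i hi
  refine idl_mono ?_ (h.d_gen_mem hE hk i)
  intro j hj
  have hi' : i.val < k := hi
  have hj' : j.val < i.val := hj
  exact lt_trans hj' hi'

lemma BiFree.cohBdd (h : C.BiFree E u n p) (hE : C.LowGrading E)
    (hk : Monotone fun i => key (n i) (p i)) (hb : CohBdd u ∅) :
    ∀ k ≤ r, CohBdd u {i | i.val < k} := by
  intro k
  induction k with
  | zero => intro _; simpa using hb
  | succ k ih =>
    intro hkr
    rw [set_succ hkr]
    rcases Nat.even_or_odd (n ⟨k, hkr⟩) with he | ho
    · exact h.cohBdd_even h.two_le (by simp) he (h.closed hE hk k) (h.d_gen_mem hE hk ⟨k, hkr⟩)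
        (ih (by omega))
    · exact h.cohBdd_odd h.two_le h.dec (by simp) ho (h.closed hE hk k)
        (h.d_gen_mem hE hk ⟨k, hkr⟩) (ih (by omega))

/-- The top class of the quotient by the first `k` generators, by descending induction from the
quotient `ℚ` by all generators. -/
lemma BiFree.topClass (h : C.BiFree E u n p) (hE : C.LowGrading E)
    (hk : Monotone fun i => key (n i) (p i)) (hb : CohBdd u ∅) (t : ℕ) :
    ∀ k, k + t = r → ∃ N, TopClass hE.internal u {i | i.val < k}
      (∑ i with k ≤ i.val, wt n p i) N := by
  induction t with
  | zero =>
    intro k hkr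
    refine ⟨0, ?_⟩
    have h1 : {i : Fin r | i.val < k} = Set.univ := by
      ext i; simp only [Set.mem_ofPred_eq, Set.mem_univ, iff_true]; omega
    have h2 : (Finset.univ.filter fun i : Fin r => k ≤ i.val) = ∅ := by
      ext i; simp only [Finset.mem_filter, Finset.mem_univ, true_and, Finset.notMem_empty,
        iff_false]; omega
    rw [h1, h2, Finset.sum_empty]
    exact h.topClass_univ hE
  | succ t ih =>
    intro k hkr
    have hk' : k < r := by omega
    obtain ⟨N, hN⟩ := ih (k + 1) (by omega)
    have h2 : (Finset.univ.filter fun i : Fin r => k ≤ i.val)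
        = insert ⟨k, hk'⟩ (Finset.univ.filter fun i : Fin r => k + 1 ≤ i.val) := by
      ext i
      simp only [Finset.mem_filter, Finset.mem_univ, true_and, Finset.mem_insert, Fin.ext_iff]
      omega
    rw [h2, Finset.sum_insert (by simp)]
    rw [set_succ hk'] at hN
    rcases Nat.even_or_odd (n ⟨k, hk'⟩) with he | ho
    · obtain ⟨N', hN'⟩ := h.topClass_even hE (by simp) he (h.closed hE hk k)
        (h.d_gen_mem hE hk ⟨k, hk'⟩) (h.cohBdd hE hk hb k hk'.le) hN
      refine ⟨N', ?_⟩
      rw [wt, if_neg (Nat.not_odd_iff_even.mpr he)]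
      convert hN' using 1; ring
    · have hN' := h.topClass_odd hE (by simp) ho (h.closed hE hk k)
        (h.d_gen_mem hE hk ⟨k, hk'⟩) hN
      refine ⟨n ⟨k, hk'⟩ + N, ?_⟩
      rw [wt, if_pos ho]
      convert hN' using 1; ring

/-- The top class of an elliptic formal algebra has lower degree zero, since cohomology is
concentrated in lower degree zero. -/
lemma BiFree.sum_wt_eq_zero (h : C.BiFree E u n p) (hE : C.LowGrading E)
    (hk : Monotone fun i => key (n i) (p i)) (hb : CohBdd u ∅) : ∑ i, wt n p i = 0 := by
  obtain ⟨N, w, hw, hdw, hwn, -, -, hc⟩ := h.topClass hE hk hb r 0 (by omega)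
  have h0 : {i : Fin r | i.val < 0} = ∅ := by ext i; simp
  have h1 : (Finset.univ.filter fun i : Fin r => 0 ≤ i.val) = Finset.univ := by ext i; simp
  rw [h0] at hdw hwn hc
  rw [h1] at hc
  rw [idl_empty, Submodule.mem_bot] at hdw
  by_contra hne
  refine hwn ?_
  obtain ⟨m, hm⟩ := exists_sum_comp hE.internal w
  rw [← hm m le_rfl]
  refine Submodule.sum_mem _ fun q _ => ?_
  rcases q with _ | q
  · exact hc 0 (by simpa using Ne.symm hne)
  · have h2 := hE.comp_d q w
    rw [hdw, map_zero] at h2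
    obtain ⟨y, -, hy⟩ := hE.acyc (comp_mem hE.internal (q + 1) w) h2.symm
    rw [← hy]; exact d_mem_exm y

/-- A generator is never a coboundary modulo the ideal of other generators. -/
lemma BiFree.gen_notMem_exm {ι : Type} {u : ι → C.A} {n p : ι → ℕ} {s : Set ι}
    (h : C.BiFree E u n p) {j : ι} (hj : j ∉ s) :
    u j ∉ exm u s := by
  classical
  have hn0 : ∀ i, n i ≠ 0 := fun i => by have := h.two_le i; omega
  have := h.toFreeOn.nontrivial
  intro hu
  obtain ⟨a, ha, c, hac⟩ := mem_exm.mp hu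
  obtain ⟨f, hf, h1, h2, -⟩ := h.exists_partial j
  refine C.one_notMem_plus ?_
  rw [← h1, hac, map_add]
  refine add_mem (idl_le_plus h.mem hn0 (hf.idl_mem (s := s) (fun i hi => ?_) ha))
    (hf.plus_sq (h.d_dec hn0 h.dec c))
  rw [h2 i (fun e => hj (e ▸ hi))]; exact zero_mem _

/-- The generators of lower degree at least two (and the even ones of lower degree one), if any,
contribute positively to the lower degree of the top class. -/
lemma BiFree.sum_wt_pos (h : C.BiFree E u n p) (hE : C.LowGrading E)
    (hk : Monotone fun i => key (n i) (p i)) (hb : CohBdd u ∅) {j : Fin r}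
    (hj : 1 < key (n j) (p j)) :
    0 < ∑ i with 1 < key (n i) (p i), wt n p i := by
  -- the generators with key at most one are the first `k`
  obtain ⟨k, hkr, hset⟩ : ∃ k ≤ r, ∀ i : Fin r, 1 < key (n i) (p i) ↔ k ≤ i.val := by
    have hex : ∃ k, ∃ hk : k < r, 1 < key (n ⟨k, hk⟩) (p ⟨k, hk⟩) := ⟨j.val, j.isLt, hj⟩
    classical
    obtain ⟨k, ⟨hlt, hkk⟩, hmin⟩ : ∃ k, (∃ hk : k < r, 1 < key (n ⟨k, hk⟩) (p ⟨k, hk⟩)) ∧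
        ∀ i : Fin r, 1 < key (n i) (p i) → k ≤ i.val :=
      ⟨Nat.find hex, Nat.find_spec hex, fun i hi => Nat.find_min' hex ⟨i.isLt, hi⟩⟩
    refine ⟨k, hlt.le, fun i => ⟨hmin i, fun hi => ?_⟩⟩
    have h2 : key (n ⟨k, hlt⟩) (p ⟨k, hlt⟩) ≤ key (n i) (p i) :=
      hk (a := ⟨k, hlt⟩) (b := i) (Fin.le_def.mpr hi)
    omega
  have hjk := (hset j).mp hj
  obtain ⟨N, w, hw, hdw, hwn, htop, -, hc⟩ := h.topClass hE hk hb (r - k) k (by omega)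
  rw [Finset.filter_congr (fun i _ => hset i)]
  by_contra hle
  -- the first remaining generator is a nontrivial class of positive degree
  have hN : N ≠ 0 := by
    intro hN
    have hk' : k < r := by omega
    have h2 := h.two_le ⟨k, hk'⟩
    have h3 : N < n ⟨k, hk'⟩ := by omega
    have hmem : (⟨k, hk'⟩ : Fin r) ∉ {i : Fin r | i.val < k} := by simp
    have h4 := h.d_gen_mem hE hk ⟨k, hk'⟩
    have h5 := htop (n ⟨k, hk'⟩) h3 (u ⟨k, hk'⟩) (h.mem ⟨k, hk'⟩) h4
    exact h.gen_notMem_exm hmem h5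
  -- the component of lower degree zero lies in the ideal of the generators of lower degree zero,
  -- all of which are divided out
  refine hwn ?_
  obtain ⟨m, hm⟩ := exists_sum_comp hE.internal w
  rw [← hm m le_rfl]
  refine Submodule.sum_mem _ fun q _ => ?_
  rcases q with _ | q
  · refine idl_le_exm (idl_mono ?_ (h.mem_idl_low hE hN ?_ (comp_mem hE.internal 0 w)))
    · intro i hi
      have hi' : p i ≤ 0 := hi
      by_contra hik
      have := (hset i).mpr (not_lt.mp hik)
      rw [key, if_pos (by omega)] at this
      omega
    · have := hE.comp_homog 0 N w
      rw [C.pr_of_mem hw] at this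
      rw [← this]; exact C.pr_mem _ _
  · exact hc (q + 1) (by push_cast; omega)

end sorted

end

end CDGA

end RHT

end

/-! ### Even generators of lower degree zero -/

noncomputable section

namespace RHT

namespace CDGA

open MvPolynomial

section

variable {C : CDGA} {ι : Type} {u : ι → C.A} {n p : ι → ℕ}
  {E : ℕ → Submodule ℚ C.A}

lemma LowGrading.pow_mem (hE : C.LowGrading E) {x : C.A} (hx : x ∈ E 0) (m : ℕ) :
    x ^ m ∈ E 0 := by
  induction m with
  | zero => simpa using hE.one
  | succ m ih => rw [pow_succ]; exact hE.mul ih hx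

lemma pow_deg {k : ℕ} {x : C.A} (hx : x ∈ C.grading k) (m : ℕ) :
    x ^ m ∈ C.grading (m * k) := by
  induction m with
  | zero => simpa using C.one_deg
  | succ m ih => rw [pow_succ, Nat.succ_mul]; exact C.mul_deg ih hx

/-- In an elliptic formal algebra there are at most as many even generators of lower degree zero as
odd generators of lower degree one: killing all generators except the former turns the
differentials of the latter into a system of polynomials with only the trivial zero. -/
lemma BiFree.card_le [Fintype ι] [DecidableEq ι] (h : C.BiFree E u n p) (hE : C.LowGrading E)
    (hb : CohBdd u ∅) [DecidablePred fun i => p i = 0 ∧ Even (n i)]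
    [DecidablePred fun i => p i = 1 ∧ Odd (n i)] :
    Fintype.card {i // p i = 0 ∧ Even (n i)} ≤ Fintype.card {i // p i = 1 ∧ Odd (n i)} := by
  let R := MvPolynomial {i // p i = 0 ∧ Even (n i)} ℚ
  let 𝒞 : ℕ → Submodule ℚ R := fun k => if Even k then ⊤ else ⊥
  have hev : ∀ {k}, Even k → ∀ x : R, x ∈ 𝒞 k := fun {k} hk x => by
    simp only [𝒞, if_pos hk]; trivial
  have hod : ∀ {k}, ¬ Even k → ∀ {x : R}, x ∈ 𝒞 k → x = 0 := fun {k} hk x hx => by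
    simpa only [𝒞, if_neg hk, Submodule.mem_bot] using hx
  have h1 : (1 : R) ∈ 𝒞 0 := hev Even.zero 1
  have hmul : ∀ i j (x y : R), x ∈ 𝒞 i → y ∈ 𝒞 j → x * y ∈ 𝒞 (i + j) := by
    intro i j x y hx hy
    by_cases hi : Even i
    · by_cases hj : Even j
      · exact hev (hi.add hj) _
      · rw [hod hj hy, mul_zero]; exact zero_mem _
    · rw [hod hi hx, zero_mul]; exact zero_mem _
  have hcomm : ∀ i j (x y : R), x ∈ 𝒞 i → y ∈ 𝒞 j →
      x * y = ((-1 : ℚ) ^ (i * j)) • (y * x) := by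
    intro i j x y hx hy
    by_cases hi : Even i
    · rw [(hi.mul_right j).neg_one_pow, one_smul, mul_comm]
    · rw [hod hi hx, zero_mul, mul_zero, smul_zero]
  let c : ι → R := fun i => if hi : p i = 0 ∧ Even (n i) then X ⟨i, hi⟩ else 0
  have hc : ∀ i, c i ∈ 𝒞 (n i) := by
    intro i
    by_cases hi : p i = 0 ∧ Even (n i)
    · exact hev hi.2 _
    · simp only [c, dif_neg hi]; exact zero_mem _
  obtain ⟨τ, hτ⟩ := h.lift R 𝒞 h1 hmul hcomm c hc
  have hτodd : ∀ {k x}, x ∈ C.grading k → ¬ Even k → τ x = 0 := fun {k x} hx hk =>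
    hod hk (h.map_mem 𝒞 h1 hmul τ (fun i => by rw [hτ]; exact hc i) hx)
  -- `τ` vanishes in positive lower degrees
  have hτlow : ∀ x : C.A, ∀ q, τ (comp hE.internal (q + 1) x) = 0 := by
    intro x
    have hx : x ∈ Algebra.adjoin ℚ (Set.range u) := by rw [h.gen]; trivial
    induction hx using Algebra.adjoin_induction with
    | mem x hx =>
      obtain ⟨i, rfl⟩ := hx
      intro q
      by_cases hq : p i = q + 1
      · rw [comp_of_mem _ (hq ▸ h.lowmem i), hτ]
        have : ¬ (p i = 0 ∧ Even (n i)) := by omega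
        simp only [c, dif_neg this]
      · rw [comp_of_mem_ne _ (h.lowmem i) hq, map_zero]
    | algebraMap r =>
      intro q
      rw [Algebra.algebraMap_eq_smul_one, map_smul, comp_of_mem_ne _ hE.one (by omega), smul_zero,
        map_zero]
    | add x y _ _ hx hy => intro q; rw [map_add, map_add, hx, hy, add_zero]
    | mul x y _ _ hx hy =>
      intro q
      obtain ⟨m, hm⟩ := exists_sum_comp hE.internal x
      have hxy : x * y = ∑ a ∈ Finset.range m, comp hE.internal a x * y := by
        rw [← Finset.sum_mul, hm m le_rfl]
      rw [hxy, map_sum, map_sum]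
      refine Finset.sum_eq_zero fun a _ => ?_
      by_cases ha : a ≤ q + 1
      · obtain ⟨b, hab⟩ := Nat.exists_eq_add_of_le ha
        rw [hab, hE.comp_mul (comp_mem _ a x) b y, map_mul]
        rcases a with _ | a
        · obtain rfl : b = q + 1 := by omega
          rw [hy, mul_zero]
        · rw [hx, zero_mul]
      · rw [hE.comp_mul_lt (comp_mem _ a x) (by omega), map_zero]
  let f : {i // p i = 1 ∧ Odd (n i)} → R := fun j => τ (C.d (u j))
  have hJ : ∀ x, τ (C.d x) ∈ Ideal.span (Set.range f) := by
    intro x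
    have hx : x ∈ Algebra.adjoin ℚ (Set.range u) := by rw [h.gen]; trivial
    induction hx using Algebra.adjoin_induction with
    | mem x hx =>
      obtain ⟨i, rfl⟩ := hx
      rcases hp : p i with _ | q
      · rw [hE.d_zero (hp ▸ h.lowmem i), map_zero]; exact zero_mem _
      · rcases q with _ | q
        · by_cases ho : Odd (n i)
          · exact Ideal.subset_span ⟨⟨i, hp, ho⟩, rfl⟩
          · rw [hτodd (C.d_mem (h.mem i)) (by
              rw [Nat.not_even_iff_odd]; exact (Nat.not_odd_iff_even.mp ho).add_one)]
            exact zero_mem _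
        · have h2 := hτlow (C.d (u i)) q
          rw [comp_of_mem _ (hE.d_succ (hp ▸ h.lowmem i))] at h2
          rw [h2]; exact zero_mem _
    | algebraMap r =>
      rw [Algebra.algebraMap_eq_smul_one, map_smul, C.d_one, smul_zero, map_zero]
      exact zero_mem _
    | add x y _ _ hx hy => rw [map_add, map_add]; exact add_mem hx hy
    | mul x y _ _ hx hy =>
      rw [C.leib, map_add, map_mul, map_mul]
      exact add_mem (Ideal.mul_mem_right _ _ hx) (Ideal.mul_mem_left _ _ hy)
  refine card_le_of_pow_mem f (fun k => ?_) (fun i => ?_)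
  · have h2 := h.mem_idl_univ (Nat.succ_ne_zero (n k)) (C.d_mem (h.mem k))
    refine idl_induction (P := fun x => aeval (R := ℚ) (fun _ => (0 : ℚ)) (τ x) = 0) ?_ ?_ ?_ h2
    · rw [map_zero, map_zero]
    · intro i _ a
      rw [map_mul, map_mul, hτ]
      have : aeval (R := ℚ) (fun _ => (0 : ℚ)) (c i) = 0 := by
        by_cases hi : p i = 0 ∧ Even (n i)
        · simp [c, dif_pos hi]
        · simp [c, dif_neg hi]
      rw [this, mul_zero]
    · intro x y hx hy; rw [map_add, map_add, hx, hy, add_zero]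
  · obtain ⟨N, hN⟩ := hb
    refine ⟨N + 1, ?_⟩
    have h0 : u i ∈ E 0 := by have := h.lowmem i; rwa [i.2.1] at this
    have h2 := hN _ (by have := h.two_le i; nlinarith) _ (pow_deg (h.mem i) (N + 1)) (by
      rw [hE.d_zero (hE.pow_mem h0 _)]; exact zero_mem _)
    obtain ⟨a, ha, b, hab⟩ := mem_exm.mp h2
    rw [idl_empty, Submodule.mem_bot] at ha
    rw [ha, zero_add] at hab
    have h3 := hJ b
    rw [← hab, map_pow, hτ] at h3
    simpa only [c, dif_pos i.2] using h3

end

section sorted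

variable {C : CDGA} {r : ℕ} {u : Fin r → C.A} {n p : Fin r → ℕ}
  {E : ℕ → Submodule ℚ C.A}

/-- The bigraded model of an elliptic formal algebra has no generators of lower degree `≥ 2`. -/
lemma BiFree.low_le_one (h : C.BiFree E u n p) (hE : C.LowGrading E)
    (hk : Monotone fun i => key (n i) (p i)) (hb : CohBdd u ∅) (j : Fin r) : p j ≤ 1 := by
  classical
  by_contra hj
  have hj' : 1 < key (n j) (p j) := by
    rw [key, if_neg (by omega), if_neg (by omega)]; omega
  have hpos := h.sum_wt_pos hE hk hb hj'
  have hzero := h.sum_wt_eq_zero hE hk hb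
  have hcard := h.card_le hE hb
  rw [Fintype.card_subtype, Fintype.card_subtype] at hcard
  rw [← Finset.sum_filter_add_sum_filter_not Finset.univ (fun i => 1 < key (n i) (p i))] at hzero
  have hrest : ∑ i with ¬ 1 < key (n i) (p i), wt n p i
      = ((Finset.univ.filter fun i => p i = 1 ∧ Odd (n i)).card : ℤ)
        - ((Finset.univ.filter fun i => p i = 0 ∧ Even (n i)).card : ℤ) := by
    rw [Finset.card_filter, Finset.card_filter, Finset.sum_filter]
    push_cast
    rw [← Finset.sum_sub_distrib]
    refine Finset.sum_congr rfl fun i _ => ?_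
    rcases Nat.even_or_odd (n i) with he | ho
    · have hno := Nat.not_odd_iff_even.mpr he
      by_cases h0 : p i = 0
      · simp [key, wt, h0, hno, he]
      · simp [key, h0, hno]
    · have hne := Nat.not_even_iff_odd.mpr ho
      by_cases h0 : p i = 0
      · simp [key, wt, h0, ho]
      · by_cases h1 : p i = 1
        · simp [key, wt, h1, ho]
        · simp [key, h0, h1]
  omega

end sorted

end CDGA

end RHT

end

/-! ### The two-stage model -/

noncomputable section

namespace RHT

open CDGA

/-- The bigraded model of a formal elliptic space: it is free on finitely many bihomogeneous
generators of lower degree at most one. -/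
lemma Sullivan.exists_biFree (S : Sullivan) (hmin : S.Minimal) (hf : Formal S.toCDGA)
    (hell : S.Elliptic) :
    ∃ (E : ℕ → Submodule ℚ S.A) (r : ℕ) (u : Fin r → S.A) (n p : Fin r → ℕ),
      S.toCDGA.LowGrading E ∧ S.toCDGA.BiFree E u n p ∧ ∀ i, p i ≤ 1 := by
  obtain ⟨hfin, -, N, hN⟩ := hell
  have := Sullivan.finite_idx hfin
  obtain ⟨K, hK⟩ := exists_formalIdeal hf
  obtain ⟨E, hE⟩ := S.freeOn.exists_lowGrading S.two_le hmin.d_bas hK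
  obtain ⟨κ, _, x, n, p, hx⟩ := S.freeOn.exists_biFree S.two_le hmin.d_bas hE
  obtain ⟨r, y, n', p', hy, hk⟩ := hx.exists_sorted
  refine ⟨E, r, y, n', p', hE, hy, hy.low_le_one hE hk ⟨N, fun k hk z hz hdz => ?_⟩⟩
  rw [idl_empty, Submodule.mem_bot] at hdz
  have hs := hN k hk.le
  have h1 : (⟨z, hz, hdz⟩ : S.toCDGA.cocycles k) ∈
      Submodule.comap (S.toCDGA.cocycles k).subtype (S.toCDGA.coboundaries k) :=
    (Submodule.Quotient.mk_eq_zero _).mp (Subsingleton.elim _ _)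
  obtain ⟨y, hy⟩ := h1.2
  have hy' : S.d y = z := hy
  rw [← hy']
  exact d_mem_exm y

end RHT

end

/-! ### Formality from an ideal -/

noncomputable section

namespace RHT

lemma isInternal_of_proj {M : Type*} [AddCommGroup M] [Module ℚ M] (E : ℕ → Submodule ℚ M)
    (π : ℕ → M →ₗ[ℚ] M) (h1 : ∀ i, ∀ x ∈ E i, π i x = x) (h2 : ∀ i j, i ≠ j → ∀ x ∈ E i, π j x = 0)
    (hsup : ∀ x, x ∈ ⨆ i, E i) : DirectSum.IsInternal E := by
  have key : ∀ (x : DirectSum ℕ fun i => E i) j, π j (DirectSum.coeLinearMap E x) = x j := by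
    intro x j
    induction x using DirectSum.induction_on with
    | zero => simp
    | of i x =>
      have hc : DirectSum.coeLinearMap E (DirectSum.of (fun i => E i) i x) = x :=
        DirectSum.coeLinearMap_of E i x
      rw [hc]
      by_cases hij : i = j
      · subst hij
        rw [h1 i _ x.2, DirectSum.of_eq_same]
      · rw [h2 i j hij _ x.2, DirectSum.of_eq_of_ne _ _ _ (Ne.symm hij)]; rfl
    | add x y hx hy => rw [map_add, map_add, hx, hy]; rfl
  constructor
  · intro x y hxy
    have hxy' : DirectSum.coeLinearMap E x = DirectSum.coeLinearMap E y := hxy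
    refine DFinsupp.ext fun j => Subtype.ext ?_
    have hx := key x j
    rw [hxy', key y j] at hx
    exact hx.symm
  · intro y
    have hy := hsup y
    rw [Submodule.iSup_eq_range_dfinsupp_lsum] at hy
    obtain ⟨x, hx⟩ := hy
    exact ⟨x, hx⟩

namespace CDGA

variable {C : CDGA}

/-- Formality from an ideal `L`: if `L` and the cocycles span the algebra and all cocycles in `L`
are coboundaries, then the projection to the quotient by `L + im d` is a quasi-isomorphism to an
algebra with zero differential. -/
lemma formal_of_ideal {L : Submodule ℚ C.A} (hL : C.Homog L) (hmul : ∀ a, ∀ x ∈ L, a * x ∈ L)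
    (hsup : ∀ x, ∃ l ∈ L, C.d (x - l) = 0) (hac : ∀ x ∈ L, C.d x = 0 → ∃ y, C.d y = x) :
    Formal C := by
  have hJ : C.Homog (L ⊔ LinearMap.range C.d) := hL.sup C.homog_range_d
  have hJmul : ∀ a, ∀ x ∈ L ⊔ LinearMap.range C.d, a * x ∈ L ⊔ LinearMap.range C.d := by
    intro a x hx
    obtain ⟨y, hy, _, ⟨t, rfl⟩, rfl⟩ := Submodule.mem_sup.mp hx
    rw [mul_add]
    refine add_mem (Submodule.mem_sup_left (hmul a y hy)) ?_
    obtain ⟨l, hl, hz⟩ := hsup a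
    obtain ⟨z, rfl⟩ : ∃ z, a = l + z := ⟨a - l, by abel⟩
    rw [add_sub_cancel_left] at hz
    rw [add_mul]
    refine add_mem (Submodule.mem_sup_left (hL.mul_right hmul _ hl)) (Submodule.mem_sup_right ?_)
    refine ⟨C.sg 1 z * t, ?_⟩
    rw [C.leib, C.d_sg, hz, map_zero, smul_zero, zero_mul, zero_add, C.sg_self]
  let J : Ideal C.A :=
    { carrier := (L ⊔ LinearMap.range C.d : Submodule ℚ C.A)
      add_mem' := fun ha hb => add_mem ha hb
      zero_mem' := zero_mem _
      smul_mem' := fun a x hx => hJmul a x hx }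
  have hmemJ : ∀ {x}, x ∈ J ↔ x ∈ L ⊔ LinearMap.range C.d := Iff.rfl
  have hts : J.IsTwoSided := ⟨fun {a} b ha => hJ.mul_right hJmul b ha⟩
  let q : C.A →ₐ[ℚ] C.A ⧸ J := Ideal.Quotient.mkₐ ℚ J
  have hq0 : ∀ {x}, q x = 0 ↔ x ∈ L ⊔ LinearMap.range C.d := fun {x} =>
    Ideal.Quotient.eq_zero_iff_mem
  have hqs : Function.Surjective q := Ideal.Quotient.mkₐ_surjective ℚ J
  let G : ℕ → Submodule ℚ (C.A ⧸ J) := fun i => (C.grading i).map q.toLinearMap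
  have hG : ∀ {i x}, x ∈ C.grading i → q x ∈ G i := fun {i x} hx => ⟨x, hx, rfl⟩
  let π : ℕ → (C.A ⧸ J) →ₗ[ℚ] (C.A ⧸ J) := fun i =>
    (((LinearMap.ker q.toLinearMap).liftQ (q.toLinearMap ∘ₗ C.pr i) (fun x hx => by
      have hx' : q x = 0 := hx
      exact hq0.mpr (hJ i x (hq0.mp hx')))) ∘ₗ
      (q.toLinearMap.quotKerEquivOfSurjective hqs).symm.toLinearMap)
  have hπ : ∀ i x, π i (q x) = q (C.pr i x) := by
    intro i x
    have : (q.toLinearMap.quotKerEquivOfSurjective hqs).symm (q x)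
        = (LinearMap.ker q.toLinearMap).mkQ x := by
      rw [LinearEquiv.symm_apply_eq]; rfl
    simp only [π, LinearMap.comp_apply, LinearEquiv.coe_coe, this]
    rfl
  have hInt : DirectSum.IsInternal G := by
    refine isInternal_of_proj G π ?_ ?_ ?_
    · rintro i _ ⟨x, hx, rfl⟩
      rw [AlgHom.toLinearMap_apply, hπ, C.pr_of_mem hx]
    · rintro i j hij _ ⟨x, hx, rfl⟩
      rw [AlgHom.toLinearMap_apply, hπ, C.pr_of_mem_ne hx hij, map_zero]
    · intro y
      obtain ⟨x, rfl⟩ := hqs y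
      obtain ⟨s, hs⟩ := C.exists_sum_pr x
      rw [← hs, map_sum]
      exact Submodule.sum_mem _ fun i _ => Submodule.mem_iSup_of_mem i (hG (C.pr_mem i x))
  have hgm : SetLike.GradedMonoid G :=
    { one_mem := ⟨1, C.one_deg, map_one q⟩
      mul_mem := by
        rintro i j _ _ ⟨x, hx, rfl⟩ ⟨y, hy, rfl⟩
        exact ⟨x * y, C.mul_deg hx hy, map_mul q x y⟩ }
  let inst : GradedAlgebra G := { hgm, hInt.chooseDecomposition with }
  let H : CDGA :=
    { A := C.A ⧸ J
      grading := G
      gradedA := inst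
      gcomm := by
        rintro i j _ _ ⟨x, hx, rfl⟩ ⟨y, hy, rfl⟩
        have h := congrArg q (C.gcomm hx hy)
        rw [map_smul, map_mul, map_mul] at h
        exact h
      d := 0
      d_mem := fun _ => zero_mem _
      d_sq := fun _ => rfl
      leibniz := fun x y _ => by simp }
  let f : Hom C H :=
    { toAlgHom := q
      map_grading := hG
      comm_d := fun x => hq0.mpr (Submodule.mem_sup_right ⟨x, rfl⟩) }
  refine ⟨H, f, fun _ => rfl, fun y _ => ?_, fun x hx hex => ?_⟩
  · obtain ⟨x, rfl⟩ := hqs y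
    obtain ⟨l, hl, hd⟩ := hsup x
    refine ⟨x - l, hd, 0, ?_⟩
    have h0 : q l = 0 := hq0.mpr (Submodule.mem_sup_left hl)
    change 0 = q (x - l) - q x
    rw [map_sub, h0, sub_zero, sub_self]
  · obtain ⟨y, hy⟩ := hex
    have hy' : q x = 0 := hy.symm
    obtain ⟨l, hl, _, ⟨t, rfl⟩, rfl⟩ := Submodule.mem_sup.mp (hq0.mp hy')
    rw [map_add, C.d_sq, add_zero] at hx
    obtain ⟨y, rfl⟩ := hac l hl hx
    exact ⟨y + t, map_add _ _ _⟩

end CDGA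

end RHT

end

/-! ### Filtrations and contracting homotopies -/

noncomputable section

namespace RHT

lemma exists_pseudo_inverse {M N : Type*} [AddCommGroup M] [Module ℚ M] [AddCommGroup N]
    [Module ℚ N] (f : M →ₗ[ℚ] N) : ∃ σ : N →ₗ[ℚ] M, ∀ x, f (σ (f x)) = f x := by
  obtain ⟨g, hg⟩ := LinearMap.exists_rightInverse_of_surjective f.rangeRestrict
    (LinearMap.range_eq_top.mpr f.surjective_rangeRestrict)
  obtain ⟨σ, hσ⟩ := LinearMap.exists_extend g
  refine ⟨σ, fun x => ?_⟩
  have h1 : σ (f x) = g (f.rangeRestrict x) := LinearMap.congr_fun hσ (f.rangeRestrict x)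
  rw [h1]
  exact congrArg Subtype.val (LinearMap.congr_fun hg (f.rangeRestrict x))

/-- Linear maps can be prescribed on the summands of a direct sum decomposition. -/
lemma exists_comp_glue {A : Type} {M : Type*} [AddCommGroup A] [Module ℚ A] [AddCommGroup M] [Module ℚ M]
    {E : ℕ → Submodule ℚ A} (h : DirectSum.IsInternal E) (g : ℕ → A →ₗ[ℚ] M) :
    ∃ f : A →ₗ[ℚ] M, ∀ i, ∀ x ∈ E i, f x = g i x := by
  refine ⟨DirectSum.toModule ℚ ℕ M (fun i => g i ∘ₗ (E i).subtype) ∘ₗ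
    (LinearEquiv.ofBijective (DirectSum.coeLinearMap E) (bij_coe h)).symm.toLinearMap,
    fun i x hx => ?_⟩
  rw [LinearMap.comp_apply, LinearEquiv.coe_coe, comp_symm h hx, DirectSum.toModule_lof]
  rfl

/-- The part of a family of subspaces in indices `≥ q`. -/
def ge {A : Type*} [AddCommGroup A] [Module ℚ A] (E : ℕ → Submodule ℚ A) (q : ℕ) :
    Submodule ℚ A := ⨆ j, E (q + j)

section ge

variable {A : Type*} [AddCommGroup A] [Module ℚ A] {E : ℕ → Submodule ℚ A}

lemma mem_ge {q j : ℕ} (h : q ≤ j) {x : A} (hx : x ∈ E j) : x ∈ ge E q := by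
  obtain ⟨k, rfl⟩ := Nat.exists_eq_add_of_le h
  exact Submodule.mem_iSup_of_mem k hx

lemma ge_induction {q : ℕ} {P : A → Prop} (h : ∀ j, q ≤ j → ∀ x ∈ E j, P x) (h0 : P 0)
    (ha : ∀ x y, P x → P y → P (x + y)) {x : A} (hx : x ∈ ge E q) : P x :=
  Submodule.iSup_induction (fun j => E (q + j)) (motive := P) hx
    (fun j x hx => h _ (Nat.le_add_right q j) x hx) h0 ha

lemma ge_le {q : ℕ} {S : Submodule ℚ A} (h : ∀ j, q ≤ j → E j ≤ S) : ge E q ≤ S :=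
  iSup_le fun j => h _ (Nat.le_add_right q j)

lemma ge_anti {p q : ℕ} (h : p ≤ q) : ge E q ≤ ge E p :=
  ge_le fun _ hj _ hx => mem_ge (h.trans hj) hx

end ge

namespace CDGA

variable {C : CDGA}

lemma internal (C : CDGA) : DirectSum.IsInternal C.grading :=
  DirectSum.Decomposition.isInternal C.grading

lemma ge_zero (C : CDGA) : ge C.grading 0 = ⊤ := by
  rw [eq_top_iff]
  intro x _
  obtain ⟨s, hs⟩ := C.exists_sum_pr x
  rw [← hs]
  exact Submodule.sum_mem _ fun i _ => mem_ge (Nat.zero_le i) (C.pr_mem i x)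

lemma ge_mul {p q : ℕ} {x y : C.A} (hx : x ∈ ge C.grading p) (hy : y ∈ ge C.grading q) :
    x * y ∈ ge C.grading (p + q) := by
  refine ge_induction (P := fun x => x * y ∈ ge C.grading (p + q)) ?_ ?_ ?_ hx
  · intro i hi x hx
    refine ge_induction (P := fun y => x * y ∈ ge C.grading (p + q)) ?_ ?_ ?_ hy
    · intro j hj y hy; exact mem_ge (add_le_add hi hj) (C.mul_deg hx hy)
    · rw [mul_zero]; exact zero_mem _
    · intro a b ha hb; rw [mul_add]; exact add_mem ha hb
  · rw [zero_mul]; exact zero_mem _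
  · intro a b ha hb; rw [add_mul]; exact add_mem ha hb

lemma ge_d {q : ℕ} {x : C.A} (hx : x ∈ ge C.grading q) : C.d x ∈ ge C.grading (q + 1) := by
  refine (ge_le fun j hj x hx => ?_ :
    ge C.grading q ≤ (ge C.grading (q + 1)).comap C.d) hx
  exact mem_ge (Nat.succ_le_succ hj) (C.d_mem hx)

lemma ge_sg {q : ℕ} (m : ℕ) {x : C.A} (hx : x ∈ ge C.grading q) : C.sg m x ∈ ge C.grading q := by
  refine ge_induction (E := C.grading) (P := fun x => C.sg m x ∈ ge C.grading q) ?_ ?_ ?_ hx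
  · intro j hj x hx
    exact mem_ge (E := C.grading) hj (C.sg_mem m hx)
  · rw [map_zero]; exact zero_mem _
  · intro x y hx hy; rw [map_add]; exact add_mem hx hy

lemma ge_pr {q : ℕ} {x : C.A} (hx : x ∈ ge C.grading q) :
    x - C.pr q x ∈ ge C.grading (q + 1) := by
  refine (ge_le fun j hj x hx => ?_ :
    ge C.grading q ≤ (ge C.grading (q + 1)).comap (LinearMap.id - C.pr q)) hx
  change x - C.pr q x ∈ ge C.grading (q + 1)
  rcases hj.eq_or_lt with rfl | hj
  · rw [C.pr_of_mem hx, sub_self]; exact zero_mem _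
  · rw [C.pr_of_mem_ne hx hj.ne', sub_zero]; exact mem_ge hj hx

lemma pr_ge_succ {q i : ℕ} (hi : i < q) {x : C.A} (hx : x ∈ ge C.grading q) : C.pr i x = 0 := by
  refine (ge_le fun j hj x hx => ?_ : ge C.grading q ≤ LinearMap.ker (C.pr i)) hx
  exact C.pr_of_mem_ne hx (by omega)

/-- A contracting homotopy of an acyclic stable subspace. -/
lemma FormalIdeal.exists_homotopy {K : Submodule ℚ C.A} (hK : C.FormalIdeal K) :
    ∃ h : C.A →ₗ[ℚ] C.A, ∀ x ∈ K, C.d (h x) + h (C.d x) = x := by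
  obtain ⟨σ, hσ⟩ := exists_pseudo_inverse (C.d ∘ₗ K.subtype)
  let τ := K.subtype ∘ₗ σ
  have hτ : ∀ x ∈ K, C.d x = 0 → C.d (τ x) = x := by
    intro x hx hd
    obtain ⟨y, hy, rfl⟩ := hK.acyc x hx hd
    exact hσ ⟨y, hy⟩
  have hτK : ∀ x, τ x ∈ K := fun x => (σ x).2
  refine ⟨τ ∘ₗ (LinearMap.id - τ ∘ₗ C.d), fun x hx => ?_⟩
  have h1 : C.d (τ (C.d x)) = C.d x := hτ _ (hK.d_mem x) (C.d_sq x)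
  change C.d (τ (x - τ (C.d x))) + τ (C.d x - τ (C.d (C.d x))) = x
  rw [hτ (x - τ (C.d x)) (sub_mem hx (hτK _)) (by rw [map_sub, h1, sub_self]), C.d_sq, map_zero,
    sub_zero, sub_add_cancel]

/-- A contraction of a bigraded model onto a graded complement of the coboundaries in lower degree
zero, which represents its cohomology. -/
lemma LowGrading.exists_contraction {E : ℕ → Submodule ℚ C.A} (hE : C.LowGrading E) :
    ∃ c η : C.A →ₗ[ℚ] C.A, (∀ x, c x + C.d (η x) + η (C.d x) = x) ∧ (∀ x, c (C.d x) = 0) ∧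
      (∀ x, c x ∈ E 0) ∧ (∀ p, ∀ x ∈ E (p + 1), c x = 0) ∧ (∀ x, c (c x) = c x) ∧
      (∀ p, ∀ x ∈ E p, η x ∈ E (p + 1)) ∧ ∀ i x, C.pr i (c x) = c (C.pr i x) := by
  let κ := comp hE.internal
  -- an idempotent with kernel the coboundaries, then made compatible with both gradings
  obtain ⟨σ₀, hσ₀⟩ := exists_pseudo_inverse (LinearMap.range C.d).mkQ
  let P := σ₀ ∘ₗ (LinearMap.range C.d).mkQ
  have hP0 : ∀ x, P (C.d x) = 0 := by
    intro x
    have : (LinearMap.range C.d).mkQ (C.d x) = 0 :=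
      (Submodule.Quotient.mk_eq_zero _).mpr ⟨x, rfl⟩
    simp only [P, LinearMap.comp_apply, this, map_zero]
  have hP1 : ∀ x, ∃ y, C.d y = x - P x := by
    intro x
    have : (LinearMap.range C.d).mkQ (x - P x) = 0 := by
      rw [map_sub, sub_eq_zero]; exact (hσ₀ x).symm
    exact (Submodule.Quotient.mk_eq_zero _).mp this
  obtain ⟨c, hc⟩ := exists_comp_glue C.internal fun i => C.pr i ∘ₗ κ 0 ∘ₗ P ∘ₗ κ 0
  have hc' : ∀ i, ∀ x ∈ C.grading i, c x = C.pr i (κ 0 (P (κ 0 x))) := hc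
  have hcd : ∀ x, c (C.d x) = 0 := by
    intro x
    refine LinearMap.congr_fun (f := c ∘ₗ C.d) (g := 0) (C.lin_ext fun i x hx => ?_) x
    change c (C.d x) = 0
    rw [hc' _ _ (C.d_mem hx)]
    simp only [κ]
    rw [hE.comp_d, hP0, map_zero, map_zero]
  have hc0 : ∀ x, c x ∈ E 0 := by
    intro x
    refine C.homog_induction (p := fun x => c x ∈ E 0) ?_ ?_ x
    · intro i x hx
      rw [hc' i x hx]
      exact hE.homog 0 i _ (comp_mem _ 0 _)
    · intro x y hx hy; rw [map_add]; exact add_mem hx hy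
  have hcpr : ∀ i x, C.pr i (c x) = c (C.pr i x) := by
    intro i x
    refine LinearMap.congr_fun (f := C.pr i ∘ₗ c) (g := c ∘ₗ C.pr i)
      (C.lin_ext fun j x hx => ?_) x
    change C.pr i (c x) = c (C.pr i x)
    by_cases hij : j = i
    · subst hij
      rw [C.pr_of_mem hx, hc' j x hx, C.pr_of_mem (C.pr_mem j _)]
    · rw [C.pr_of_mem_ne hx hij, map_zero, hc' j x hx, C.pr_of_mem_ne (C.pr_mem j _) hij]
  -- `c` only depends on the component of lower degree zero, and differs from it by coboundaries
  have hcκ : ∀ x, ∃ y, C.d y = κ 0 x - c x := by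
    intro x
    refine C.homog_induction (p := fun x => ∃ y, C.d y = κ 0 x - c x) ?_ ?_ x
    · intro i x hx
      obtain ⟨y, hy⟩ := hP1 (κ 0 x)
      have h1 : C.pr i (κ 0 (C.d y)) ∈ LinearMap.range C.d := by
        refine C.homog_range_d i _ ?_
        simp only [κ]
        rw [hE.comp_d]; exact ⟨_, rfl⟩
      obtain ⟨t, ht⟩ := h1
      refine ⟨t, ht.trans ?_⟩
      have h2 : C.pr i (κ 0 (κ 0 x)) = κ 0 x := by
        simp only [κ]
        rw [comp_of_mem _ (comp_mem _ 0 x), hE.comp_homog, C.pr_of_mem hx]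
      rw [hy, map_sub, map_sub, h2, hc' i x hx]
    · rintro x y ⟨a, ha⟩ ⟨b, hb⟩
      exact ⟨a + b, by rw [map_add, ha, hb, map_add, map_add]; abel⟩
  have hcE : ∀ p, ∀ x ∈ E (p + 1), c x = 0 := by
    intro p x hx
    refine C.ext_pr fun i => ?_
    rw [hcpr, hc' i _ (C.pr_mem i x), map_zero]
    simp only [κ]
    rw [comp_of_mem_ne _ (hE.homog _ i x hx) (by omega), map_zero, map_zero, map_zero]
  have hcκ' : ∀ x, c (κ 0 x) = c x := by
    intro x
    refine LinearMap.congr_fun (f := c ∘ₗ κ 0) (g := c) (comp_lin_ext hE.internal fun p x hx => ?_) x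
    change c (κ 0 x) = c x
    simp only [κ]
    rcases p with _ | p
    · rw [comp_of_mem _ hx]
    · rw [comp_of_mem_ne _ hx (by omega), map_zero, hcE p x hx]
  have hcc : ∀ x, c (c x) = c x := by
    intro x
    obtain ⟨y, hy⟩ := hcκ x
    have h1 := hcd y
    rw [hy, map_sub, hcκ'] at h1
    exact (sub_eq_zero.mp h1).symm
  -- a section of `d` on coboundaries raising the lower degree by one
  obtain ⟨σ₁, hσ₁⟩ := exists_pseudo_inverse C.d
  obtain ⟨σ, hσ⟩ := exists_comp_glue hE.internal fun p => κ (p + 1) ∘ₗ σ₁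
  have hσ' : ∀ p, ∀ x ∈ E p, σ x = κ (p + 1) (σ₁ x) := hσ
  have hσE : ∀ p, ∀ x ∈ E p, σ x ∈ E (p + 1) := fun p x hx => by
    rw [hσ' p x hx]; exact comp_mem _ _ _
  have hdσ : ∀ x, C.d (σ (C.d x)) = C.d x := by
    intro x
    refine LinearMap.congr_fun (f := C.d ∘ₗ σ ∘ₗ C.d) (g := C.d)
      (comp_lin_ext hE.internal fun p x hx => ?_) x
    change C.d (σ (C.d x)) = C.d x
    rcases p with _ | p
    · rw [hE.d_zero hx, map_zero, map_zero]
    · rw [hσ' p _ (hE.d_succ hx)]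
      simp only [κ]
      rw [← hE.comp_d, hσ₁, comp_of_mem _ (hE.d_succ hx)]
  let w : C.A →ₗ[ℚ] C.A := LinearMap.id - c - σ ∘ₗ C.d
  have hw : ∀ x, w x = x - c x - σ (C.d x) := fun x => rfl
  have hwE : ∀ p, ∀ x ∈ E p, w x ∈ E p := by
    intro p x hx
    rw [hw]
    rcases p with _ | p
    · rw [hE.d_zero hx, map_zero, sub_zero]; exact sub_mem hx (hc0 x)
    · rw [hcE p x hx, sub_zero]; exact sub_mem hx (hσE p _ (hE.d_succ hx))
  have hwd : ∀ x, C.d (w x) = 0 := by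
    intro x
    rw [hw, map_sub, map_sub, hdσ, hE.d_zero (hc0 x), sub_zero, sub_self]
  have hwb : ∀ x, ∃ y, C.d y = w x := by
    intro x
    refine comp_induction hE.internal (P := fun x => ∃ y, C.d y = w x) ?_ ?_ x
    · intro p x hx
      rcases p with _ | p
      · obtain ⟨y, hy⟩ := hcκ x
        refine ⟨y, hy.trans ?_⟩
        simp only [κ]
        rw [hw, hE.d_zero hx, map_zero, sub_zero, comp_of_mem _ hx]
      · obtain ⟨y, -, hy⟩ := hE.acyc (hwE _ x hx) (hwd x)
        exact ⟨y, hy⟩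
    · rintro x y ⟨a, ha⟩ ⟨b, hb⟩
      exact ⟨a + b, by rw [map_add, ha, hb, map_add]⟩
  refine ⟨c, σ ∘ₗ w, fun x => ?_, hcd, hc0, hcE, hcc, fun p x hx => hσE p _ (hwE p x hx), hcpr⟩
  have h1 : C.d (σ (w x)) = w x := by
    obtain ⟨y, hy⟩ := hwb x
    rw [← hy, hdσ]
  have h2 : w (C.d x) = C.d x := by
    rw [hw, hcd, C.d_sq, map_zero, sub_zero, sub_zero]
  change c x + C.d (σ (w x)) + σ (w (C.d x)) = x
  rw [h1, h2, hw]
  abel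

end CDGA

end RHT

end

/-! ### Twisted tensor products -/

noncomputable section

namespace RHT

/-- The data needed of a fibration `i : B → T` whose fibre `F` carries a lower grading `E` and a
multiplicative section `s : F → T`: additively `T` is the tensor product of `B` and `F`, so that
pairs of linear maps of `B` and `F` act on `T`; the differential of `T` agrees with that of `F`
modulo positive base degrees, vanishes on lower degree zero, and lowers the lower degree by at
most one. -/
structure Twist (T B F : CDGA) (i : B.A →ₐ[ℚ] T.A) (s : F.A →ₐ[ℚ] T.A)
    (E : ℕ → Submodule ℚ F.A) : Prop where
  low : F.LowGrading E
  i_mem : ∀ {n x}, x ∈ B.grading n → i x ∈ T.grading n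
  s_mem : ∀ {n x}, x ∈ F.grading n → s x ∈ T.grading n
  i_d : ∀ x, T.d (i x) = i (B.d x)
  op : ∀ (f : B.A →ₗ[ℚ] B.A) (g : F.A →ₗ[ℚ] F.A),
    ∃ φ : T.A →ₗ[ℚ] T.A, ∀ b a, φ (i b * s a) = i (f b) * s (g a)
  span : ∀ x, x ∈ Submodule.map i.toLinearMap ⊤ * Submodule.map s.toLinearMap ⊤
  d_zero : ∀ {a}, a ∈ E 0 → T.d (s a) = 0
  d_succ : ∀ {k a}, a ∈ E (k + 1) →
    T.d (s a) ∈ Submodule.map i.toLinearMap ⊤ * Submodule.map s.toLinearMap (ge E k)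
  d_fib : ∀ a, T.d (s a) - s (F.d a) ∈
    Submodule.map i.toLinearMap (ge B.grading 1) * Submodule.map s.toLinearMap ⊤

namespace Twist

variable {T B F : CDGA} {i : B.A →ₐ[ℚ] T.A} {s : F.A →ₐ[ℚ] T.A} {E : ℕ → Submodule ℚ F.A}

/-- The image of `X ⊗ Y` in `T`. -/
def tw (i : B.A →ₐ[ℚ] T.A) (s : F.A →ₐ[ℚ] T.A) (X : Submodule ℚ B.A) (Y : Submodule ℚ F.A) :
    Submodule ℚ T.A := Submodule.map i.toLinearMap X * Submodule.map s.toLinearMap Y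

lemma tw_mem {X : Submodule ℚ B.A} {Y : Submodule ℚ F.A} {b : B.A} {a : F.A} (hb : b ∈ X)
    (ha : a ∈ Y) : i b * s a ∈ tw i s X Y :=
  Submodule.mul_mem_mul (Submodule.mem_map_of_mem hb) (Submodule.mem_map_of_mem ha)

lemma tw_le {X : Submodule ℚ B.A} {Y : Submodule ℚ F.A} {S : Submodule ℚ T.A}
    (h : ∀ b ∈ X, ∀ a ∈ Y, i b * s a ∈ S) : tw i s X Y ≤ S := by
  refine Submodule.mul_le.mpr ?_
  rintro _ ⟨b, hb, rfl⟩ _ ⟨a, ha, rfl⟩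
  exact h b hb a ha

lemma tw_mono {X X' : Submodule ℚ B.A} {Y Y' : Submodule ℚ F.A} (h : X ≤ X') (h' : Y ≤ Y') :
    tw i s X Y ≤ tw i s X' Y' :=
  tw_le fun _ hb _ ha => tw_mem (h hb) (h' ha)

section

variable (h : Twist T B F i s E)
include h

lemma mem_top (x : T.A) : x ∈ tw i s ⊤ ⊤ := h.span x

lemma lin_ext {f g : T.A →ₗ[ℚ] T.A} (hfg : ∀ b a, f (i b * s a) = g (i b * s a)) (x : T.A) :
    f x = g x := by
  have := tw_le (S := LinearMap.eqLocus f g) (X := ⊤) (Y := ⊤) (i := i) (s := s)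
    (fun b _ a _ => hfg b a) (h.mem_top x)
  exact this

lemma comm {j : ℕ} {a : F.A} (ha : a ∈ F.grading j) (b : B.A) :
    s a * i b = i (B.sg j b) * s a := by
  refine B.homog_induction (p := fun b => s a * i b = i (B.sg j b) * s a) ?_ ?_ b
  · intro n b hb
    rw [T.comm_left (h.s_mem ha), T.sg_of_mem j (h.i_mem hb), B.sg_of_mem j hb, map_smul]
  · intro x y hx hy
    simp only [map_add, mul_add, add_mul, hx, hy]

lemma sg_i (b : B.A) : T.sg 1 (i b) = i (B.sg 1 b) := by
  refine B.homog_induction (p := fun b => T.sg 1 (i b) = i (B.sg 1 b)) ?_ ?_ b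
  · intro n b hb
    rw [T.sg_of_mem 1 (h.i_mem hb), B.sg_of_mem 1 hb, map_smul]
  · intro x y hx hy
    simp only [map_add, hx, hy]

lemma d_mul (b : B.A) (a : F.A) :
    T.d (i b * s a) = i (B.d b) * s a + i (B.sg 1 b) * T.d (s a) := by
  rw [T.leib, h.i_d, h.sg_i]

lemma d_mul_zero (b : B.A) {a : F.A} (ha : a ∈ E 0) : T.d (i b * s a) = i (B.d b) * s a := by
  rw [h.d_mul, h.d_zero ha, mul_zero, add_zero]

omit h in
lemma i_mul {X X' : Submodule ℚ B.A} {Y : Submodule ℚ F.A} {b : B.A}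
    (hb : ∀ x ∈ X, b * x ∈ X') {x : T.A} (hx : x ∈ tw i s X Y) : i b * x ∈ tw i s X' Y := by
  refine tw_le (S := (tw i s X' Y).comap (LinearMap.mulLeft ℚ (i b))) ?_ hx
  intro b' hb' a ha
  change i b * (i b' * s a) ∈ tw i s X' Y
  rw [← mul_assoc, ← map_mul]
  exact tw_mem (hb b' hb') ha

omit h in
lemma i_mul_ge {p q : ℕ} {Y : Submodule ℚ F.A} {b : B.A} (hb : b ∈ ge B.grading p) {x : T.A}
    (hx : x ∈ tw i s (ge B.grading q) Y) : i b * x ∈ tw i s (ge B.grading (p + q)) Y :=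
  i_mul (fun _ hx => B.ge_mul hb hx) hx

lemma mul_left {X : Submodule ℚ B.A} {Y : Submodule ℚ F.A} (hX : B.Homog X)
    (hX' : ∀ a, ∀ x ∈ X, a * x ∈ X) (hY : ∀ a, ∀ x ∈ Y, a * x ∈ Y) (z x : T.A)
    (hx : x ∈ tw i s X Y) : z * x ∈ tw i s X Y := by
  have key : ∀ a : F.A, s a * x ∈ tw i s X Y := by
    intro a
    refine F.homog_induction (p := fun a => s a * x ∈ tw i s X Y) ?_ ?_ a
    · intro j a ha
      refine tw_le (S := (tw i s X Y).comap (LinearMap.mulLeft ℚ (s a))) ?_ hx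
      intro b hb a' ha'
      change s a * (i b * s a') ∈ tw i s X Y
      rw [← mul_assoc, h.comm ha, mul_assoc, ← map_mul]
      exact tw_mem (hX.sg j hb) (hY a a' ha')
    · intro a b ha hb
      rw [map_add, add_mul]; exact add_mem ha hb
  refine tw_le (S := (tw i s X Y).comap (LinearMap.mulRight ℚ x)) ?_ (h.mem_top z)
  intro b _ a _
  change i b * s a * x ∈ tw i s X Y
  rw [mul_assoc]
  exact i_mul (hX' b) (key a)

lemma homog {X : Submodule ℚ B.A} {Y : Submodule ℚ F.A} (hX : B.Homog X) (hY : F.Homog Y) :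
    T.Homog (tw i s X Y) := by
  intro n x hx
  refine tw_le (S := (tw i s X Y).comap (T.pr n)) ?_ hx
  intro b hb a ha
  change T.pr n (i b * s a) ∈ tw i s X Y
  obtain ⟨S, hS⟩ := B.exists_sum_pr b
  obtain ⟨S', hS'⟩ := F.exists_sum_pr a
  rw [← hS, ← hS', map_sum, map_sum, Finset.sum_mul_sum, map_sum]
  refine Submodule.sum_mem _ fun p _ => ?_
  rw [map_sum]
  refine Submodule.sum_mem _ fun q _ => ?_
  have hm := T.mul_deg (h.i_mem (B.pr_mem p b)) (h.s_mem (F.pr_mem q a))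
  by_cases hn : p + q = n
  · subst hn
    rw [T.pr_of_mem hm]
    exact tw_mem (hX p b hb) (hY q a ha)
  · rw [T.pr_of_mem_ne hm hn]; exact zero_mem _

/-- The linear map of `T` induced by a pair of linear maps. -/
def o (f : B.A →ₗ[ℚ] B.A) (g : F.A →ₗ[ℚ] F.A) : T.A →ₗ[ℚ] T.A := (h.op f g).choose

lemma o_apply (f : B.A →ₗ[ℚ] B.A) (g : F.A →ₗ[ℚ] F.A) (b : B.A) (a : F.A) :
    h.o f g (i b * s a) = i (f b) * s (g a) := (h.op f g).choose_spec b a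

lemma o_mem {f : B.A →ₗ[ℚ] B.A} {g : F.A →ₗ[ℚ] F.A} {X X' : Submodule ℚ B.A}
    {Y Y' : Submodule ℚ F.A} (hf : ∀ x ∈ X, f x ∈ X') (hg : ∀ y ∈ Y, g y ∈ Y') {x : T.A}
    (hx : x ∈ tw i s X Y) : h.o f g x ∈ tw i s X' Y' := by
  refine tw_le (S := (tw i s X' Y').comap (h.o f g)) ?_ hx
  intro b hb a ha
  change h.o f g (i b * s a) ∈ tw i s X' Y'
  rw [h.o_apply]
  exact tw_mem (hf b hb) (hg a ha)

lemma o_zero {f : B.A →ₗ[ℚ] B.A} {g : F.A →ₗ[ℚ] F.A} {X : Submodule ℚ B.A}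
    {Y : Submodule ℚ F.A} (hf : ∀ x ∈ X, ∀ y ∈ Y, i (f x) * s (g y) = 0) {x : T.A}
    (hx : x ∈ tw i s X Y) : h.o f g x = 0 := by
  refine tw_le (S := LinearMap.ker (h.o f g)) ?_ hx
  intro b hb a ha
  change h.o f g (i b * s a) = 0
  rw [h.o_apply, hf b hb a ha]

lemma o_id {f : B.A →ₗ[ℚ] B.A} {g : F.A →ₗ[ℚ] F.A} {X : Submodule ℚ B.A}
    {Y : Submodule ℚ F.A} (hf : ∀ x ∈ X, f x = x) (hg : ∀ y ∈ Y, g y = y) {x : T.A}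
    (hx : x ∈ tw i s X Y) : h.o f g x = x := by
  refine tw_le (S := LinearMap.eqLocus (h.o f g) LinearMap.id) ?_ hx
  intro b hb a ha
  change h.o f g (i b * s a) = i b * s a
  rw [h.o_apply, hf b hb, hg a ha]

lemma ge_base {q : ℕ} {x : T.A} (hx : x ∈ tw i s (ge B.grading q) ⊤) : x ∈ ge T.grading q := by
  have hi : ∀ b ∈ ge B.grading q, i b ∈ ge T.grading q := by
    intro b hb
    refine ge_induction (E := B.grading) (P := fun b => i b ∈ ge T.grading q) ?_ ?_ ?_ hb
    · intro j hj x hx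
      exact mem_ge hj (h.i_mem hx)
    · rw [map_zero]; exact zero_mem _
    · intro x y hx hy; rw [map_add]; exact add_mem hx hy
  refine tw_le (S := ge T.grading q) ?_ hx
  intro b hb a _
  have ha : s a ∈ ge T.grading 0 := by rw [T.ge_zero]; exact Submodule.mem_top
  exact T.ge_mul (p := q) (q := 0) (hi b hb) ha

/-- The leading part of the differential for the filtration by base degree. -/
def lead : T.A →ₗ[ℚ] T.A := h.o (B.sg 1).toLinearMap F.d

lemma d_sub_lead {q : ℕ} {x : T.A} (hx : x ∈ tw i s (ge B.grading q) ⊤) :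
    T.d x - h.lead x ∈ tw i s (ge B.grading (q + 1)) ⊤ := by
  refine tw_le (S := (tw i s (ge B.grading (q + 1)) ⊤).comap (T.d - h.lead)) ?_ hx
  intro b hb a _
  change T.d (i b * s a) - h.lead (i b * s a) ∈ tw i s (ge B.grading (q + 1)) ⊤
  have h1 : T.d (i b * s a) - h.lead (i b * s a) =
      i (B.d b) * s a + i (B.sg 1 b) * (T.d (s a) - s (F.d a)) := by
    rw [lead, h.o_apply, h.d_mul, AlgHom.toLinearMap_apply, mul_sub]; abel
  rw [h1]
  exact add_mem (tw_mem (B.ge_d hb) trivial) (i_mul_ge (B.ge_sg 1 hb) (h.d_fib a))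

end

section

variable (h : Twist T B F i s E) {K : Submodule ℚ B.A} (hK : B.FormalIdeal K)
include h

lemma low_ideal (p : ℕ) (a : F.A) : ∀ x ∈ ge E p, a * x ∈ ge E p := by
  intro x hx
  refine comp_induction h.low.internal (P := fun a => a * x ∈ ge E p) ?_ ?_ a
  · intro k a ha
    refine ge_induction (E := E) (P := fun x => a * x ∈ ge E p) ?_ ?_ ?_ hx
    · intro j hj x hx
      exact mem_ge (by omega) (h.low.mul ha hx)
    · rw [mul_zero]; exact zero_mem _
    · intro x y hx hy; rw [mul_add]; exact add_mem hx hy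
  · intro x y hx hy; rw [add_mul]; exact add_mem hx hy

lemma low_homog (p : ℕ) : F.Homog (ge E p) := by
  intro n x hx
  refine ge_induction (E := E) (P := fun x => F.pr n x ∈ ge E p) ?_ ?_ ?_ hx
  · intro j hj x hx
    exact mem_ge hj (h.low.homog j n x hx)
  · rw [map_zero]; exact zero_mem _
  · intro x y hx hy; rw [map_add]; exact add_mem hx hy

/-- The ideal generated by a formal ideal of the base and the positive lower degrees. -/
def idl (i : B.A →ₐ[ℚ] T.A) (s : F.A →ₐ[ℚ] T.A) (E : ℕ → Submodule ℚ F.A)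
    (K : Submodule ℚ B.A) : Submodule ℚ T.A := tw i s K ⊤ ⊔ tw i s ⊤ (ge E 1)

omit h in
lemma idl_le {S : Submodule ℚ T.A} (h1 : ∀ x ∈ tw i s K ⊤, x ∈ S)
    (h2 : ∀ x ∈ tw i s ⊤ (ge E 1), x ∈ S) : idl i s E K ≤ S := sup_le h1 h2

lemma d_low {p : ℕ} {x : T.A} (hx : x ∈ tw i s ⊤ (ge E (p + 1))) :
    T.d x ∈ tw i s ⊤ (ge E p) := by
  refine tw_le (S := (tw i s ⊤ (ge E p)).comap T.d) ?_ hx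
  intro b _ a ha
  change T.d (i b * s a) ∈ tw i s ⊤ (ge E p)
  rw [h.d_mul]
  refine add_mem (tw_mem Submodule.mem_top (ge_anti (Nat.le_succ p) ha)) (i_mul (fun _ _ => Submodule.mem_top)
    (X := ⊤) ?_)
  refine ge_induction (E := E) (P := fun a => T.d (s a) ∈ tw i s ⊤ (ge E p)) ?_ ?_ ?_ ha
  · intro j hj x hx
    obtain ⟨k, rfl⟩ : ∃ k, j = k + 1 := ⟨j - 1, by omega⟩
    exact tw_mono le_rfl (ge_anti (by omega)) (h.d_succ hx)
  · rw [map_zero, map_zero]; exact zero_mem _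
  · intro x y hx hy; rw [map_add, map_add]; exact add_mem hx hy

include hK

lemma d_base {x : T.A} (hx : x ∈ tw i s K ⊤) : T.d x ∈ tw i s K ⊤ := by
  refine tw_le (S := (tw i s K ⊤).comap T.d) ?_ hx
  intro b hb a _
  change T.d (i b * s a) ∈ tw i s K ⊤
  rw [h.d_mul]
  exact add_mem (tw_mem (hK.d_mem b) trivial)
    (i_mul (fun _ _ => hK.mul_right _ (hK.homog.sg 1 hb)) (h.mem_top _))

/-- One step of the descent through the filtration by base degree: up to coboundaries and elements
of `K ⊗ c(F)`, cocycles of the ideal can be pushed into higher filtration. -/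
lemma descent {c η : F.A →ₗ[ℚ] F.A} (h1 : ∀ x, c x + F.d (η x) + η (F.d x) = x)
    (h2 : ∀ x, c (F.d x) = 0) (h3 : ∀ x, c x ∈ E 0) (h4 : ∀ p, ∀ x ∈ E (p + 1), c x = 0)
    (h5 : ∀ x, c (c x) = c x) (h6 : ∀ p, ∀ x ∈ E p, η x ∈ E (p + 1))
    {q : ℕ} {k r : T.A} (hk : k ∈ tw i s K (LinearMap.range c)) (hr : r ∈ idl i s E K)
    (hrq : r ∈ tw i s (ge B.grading q) ⊤) (hd : T.d k + T.d r = 0) :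
    ∃ k' ∈ tw i s K (LinearMap.range c), ∃ r' ∈ idl i s E K, ∃ t',
      r' ∈ tw i s (ge B.grading (q + 1)) ⊤ ∧ r = k' + r' + T.d t' := by
  let π := h.o (B.pr q) LinearMap.id
  have hπ : ∀ b a, π (i b * s a) = i (B.pr q b) * s a := fun b a => h.o_apply _ _ b a
  have hl : ∀ b a, h.lead (i b * s a) = i (B.sg 1 b) * s (F.d a) := fun b a => h.o_apply _ _ b a
  have hπ0 : ∀ x ∈ tw i s (ge B.grading (q + 1)) ⊤, π x = 0 := fun x hx =>
    h.o_zero (fun b hb a _ => by rw [B.pr_ge_succ (Nat.lt_succ_self q) hb, map_zero, zero_mul]) hx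
  have ha : r - π r ∈ tw i s (ge B.grading (q + 1)) ⊤ := by
    refine tw_le (S := (tw i s (ge B.grading (q + 1)) ⊤).comap (LinearMap.id - π)) ?_ hrq
    intro b hb a _
    change i b * s a - π (i b * s a) ∈ tw i s (ge B.grading (q + 1)) ⊤
    rw [hπ, ← sub_mul, ← map_sub]
    exact tw_mem (B.ge_pr hb) trivial
  have hrq' : π r ∈ tw i s (ge B.grading q) ⊤ := by
    have := sub_mem hrq (tw_mono (ge_anti (Nat.le_succ q)) le_rfl ha)
    rwa [sub_sub_cancel] at this
  -- the leading part of `d` kills the leading part of `r`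
  have hπd : π (T.d r) = h.lead (π r) := by
    have e1 : π (T.d r) = π (h.lead r) := by
      have := hπ0 _ (h.d_sub_lead hrq)
      rwa [map_sub, sub_eq_zero] at this
    rw [e1]
    refine h.lin_ext (f := π ∘ₗ h.lead) (g := h.lead ∘ₗ π) (fun b a => ?_) r
    simp only [LinearMap.comp_apply]
    rw [hl, hπ, hπ, hl, B.pr_sg]
  let γ := h.o LinearMap.id c
  have hγ : ∀ b a, γ (i b * s a) = i b * s (c a) := fun b a => h.o_apply _ _ b a
  have hdk : T.d k ∈ tw i s ⊤ (LinearMap.range c) := by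
    refine tw_le (S := (tw i s ⊤ (LinearMap.range c)).comap T.d) ?_ hk
    rintro b _ _ ⟨a, rfl⟩
    change T.d (i b * s (c a)) ∈ tw i s ⊤ (LinearMap.range c)
    rw [h.d_mul_zero _ (h3 a)]
    exact tw_mem Submodule.mem_top ⟨a, rfl⟩
  have hlead0 : h.lead (π r) = 0 := by
    have e1 : T.d r = - T.d k := by rw [eq_neg_iff_add_eq_zero, add_comm]; exact hd
    have e2 : h.lead (π r) ∈ tw i s ⊤ (LinearMap.range c) := by
      rw [← hπd, e1, map_neg]
      exact neg_mem (h.o_mem (fun _ _ => Submodule.mem_top) (fun _ hy => hy) hdk)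
    have e3 : γ (h.lead (π r)) = h.lead (π r) :=
      h.o_id (fun _ _ => rfl) (by rintro _ ⟨a, rfl⟩; exact h5 a) e2
    rw [← e3]
    refine h.lin_ext (f := γ ∘ₗ h.lead) (g := 0) (fun b a => ?_) _
    simp only [LinearMap.comp_apply, LinearMap.zero_apply]
    rw [hl, hγ, h2, map_zero, mul_zero]
  have hfib0 : h.o LinearMap.id F.d (π r) = 0 := by
    have e : h.o LinearMap.id F.d (π r) =
        h.o (B.sg 1).toLinearMap LinearMap.id (h.lead (π r)) := by
      refine h.lin_ext (f := h.o LinearMap.id F.d)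
        (g := h.o (B.sg 1).toLinearMap LinearMap.id ∘ₗ h.lead) (fun b a => ?_) _
      simp only [LinearMap.comp_apply]
      rw [hl, h.o_apply, h.o_apply, AlgHom.toLinearMap_apply, B.sg_self]
      rfl
    rw [e, hlead0, map_zero]
  -- the contraction of the fibre, applied to the leading part
  let θ := h.o (B.sg 1).toLinearMap η
  have hθ : ∀ b a, θ (i b * s a) = i (B.sg 1 b) * s (η a) := fun b a => h.o_apply _ _ b a
  have hdec : π r = γ (π r) + h.lead (θ (π r)) := by
    have e : ∀ x, γ x + h.lead (θ x) + h.o LinearMap.id η (h.o LinearMap.id F.d x) = x := by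
      intro x
      refine h.lin_ext (f := γ + h.lead ∘ₗ θ + h.o LinearMap.id η ∘ₗ h.o LinearMap.id F.d)
        (g := LinearMap.id) (fun b a => ?_) x
      simp only [LinearMap.comp_apply, LinearMap.add_apply]
      rw [hγ, hθ, hl, B.sg_self, h.o_apply, h.o_apply]
      simp only [LinearMap.id_apply]
      rw [← mul_add, ← mul_add, ← map_add, ← map_add, h1]
    have := e (π r)
    rw [hfib0, map_zero, add_zero] at this
    exact this.symm
  have hπL : π r ∈ idl i s E K := by
    refine idl_le (S := (idl i s E K).comap π) (fun x hx => ?_) (fun x hx => ?_) hr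
    · exact Submodule.mem_sup_left (h.o_mem (fun b hb => hK.homog q b hb) (fun _ ha => ha) hx)
    · exact Submodule.mem_sup_right (h.o_mem (fun _ _ => Submodule.mem_top) (fun _ ha => ha) hx)
  have hγK : γ (π r) ∈ tw i s K (LinearMap.range c) := by
    refine idl_le (S := (tw i s K (LinearMap.range c)).comap γ) (fun x hx => ?_)
      (fun x hx => ?_) hπL
    · exact h.o_mem (X' := K) (Y' := LinearMap.range c) (fun _ hb => hb) (fun a _ => ⟨a, rfl⟩) hx
    · have : γ x = 0 := by
        refine h.o_zero (fun b _ a ha => ?_) hx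
        have : c a = 0 := by
          refine ge_induction (E := E) (P := fun a => c a = 0) ?_ (map_zero c) ?_ ha
          · intro j hj x hx
            obtain ⟨k, rfl⟩ : ∃ k, j = k + 1 := ⟨j - 1, by omega⟩
            exact h4 k x hx
          · intro x y hx hy; rw [map_add, hx, hy, add_zero]
        rw [this, map_zero, mul_zero]
      change γ x ∈ tw i s K (LinearMap.range c)
      rw [this]; exact zero_mem _
  have hθL : T.d (θ (π r)) ∈ idl i s E K := by
    refine idl_le (S := (idl i s E K).comap (T.d ∘ₗ θ)) (fun x hx => ?_) (fun x hx => ?_) hπL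
    · exact Submodule.mem_sup_left (h.d_base hK
        (h.o_mem (X' := K) (Y' := ⊤) (fun b hb => hK.homog.sg 1 hb) (fun _ _ => Submodule.mem_top) hx))
    · refine Submodule.mem_sup_right (h.d_low
        (h.o_mem (X' := ⊤) (Y' := ge E 2) (fun _ _ => Submodule.mem_top) (fun a ha => ?_) hx))
      refine ge_induction (E := E) (P := fun a => η a ∈ ge E 2) ?_ ?_ ?_ ha
      · intro j hj x hx; exact mem_ge (by omega) (h6 j x hx)
      · rw [map_zero]; exact zero_mem _
      · intro x y hx hy; rw [map_add]; exact add_mem hx hy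
  have hθq : θ (π r) ∈ tw i s (ge B.grading q) ⊤ :=
    h.o_mem (fun b hb => B.ge_sg 1 hb) (fun _ _ => Submodule.mem_top) hrq'
  refine ⟨γ (π r), hγK, r - γ (π r) - T.d (θ (π r)),
    sub_mem (sub_mem hr (Submodule.mem_sup_left (tw_mono le_rfl le_top hγK))) hθL,
    θ (π r), ?_, by abel⟩
  have e : r - γ (π r) - T.d (θ (π r)) =
      (r - π r) - (T.d (θ (π r)) - h.lead (θ (π r))) := by
    have e' : r - π r = r - (γ (π r) + h.lead (θ (π r))) := by rw [← hdec]
    rw [e']; abel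
  rw [e]
  exact sub_mem ha (h.d_sub_lead hθq)

/-- Cocycles of the ideal are coboundaries: in high base degree the descent stops for reasons of
degree, and on `K ⊗ c(F)` the differential acts through the acyclic `K`. -/
lemma exact_idl {n : ℕ} {z : T.A} (hz : z ∈ idl i s E K) (hn : z ∈ T.grading n)
    (hd : T.d z = 0) : ∃ y, T.d y = z := by
  obtain ⟨c, η, h1, h2, h3, h4, h5, h6, h7⟩ := h.low.exists_contraction
  have key : ∀ q, ∃ k ∈ tw i s K (LinearMap.range c), ∃ r ∈ idl i s E K, ∃ t,
      r ∈ tw i s (ge B.grading q) ⊤ ∧ z = k + r + T.d t := by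
    intro q
    induction q with
    | zero =>
      refine ⟨0, zero_mem _, z, hz, 0, ?_, by rw [map_zero, zero_add, add_zero]⟩
      rw [B.ge_zero]; exact h.mem_top z
    | succ q ih =>
      obtain ⟨k, hk, r, hr, t, hrq, e⟩ := ih
      have hd' : T.d k + T.d r = 0 := by
        rw [e, map_add, map_add, T.d_sq, add_zero] at hd; exact hd
      obtain ⟨k', hk', r', hr', t', hrq', e'⟩ :=
        h.descent hK h1 h2 h3 h4 h5 h6 hk hr hrq hd'
      exact ⟨k + k', add_mem hk hk', r', hr', t + t', hrq', by rw [e, e', map_add]; abel⟩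
  obtain ⟨k, hk, r, -, t, hr, e⟩ := key (n + 1)
  have hrn : T.pr n r = 0 := T.pr_ge_succ (Nat.lt_succ_self n) (h.ge_base hr)
  obtain ⟨t', ht'⟩ := T.homog_range_d n _ ⟨t, rfl⟩
  have hcH : F.Homog (LinearMap.range c) := by
    rintro j _ ⟨a, rfl⟩
    exact ⟨F.pr j a, (h7 j a).symm⟩
  have hkn := h.homog hK.homog hcH n k hk
  have ez : z = T.pr n k + T.d t' := by
    rw [ht']
    conv_lhs => rw [← T.pr_of_mem hn, e, map_add, map_add, hrn, add_zero]
  have hdk : T.d (T.pr n k) = 0 := by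
    rw [ez, map_add, T.d_sq, add_zero] at hd; exact hd
  obtain ⟨τ, hτ⟩ := hK.exists_homotopy
  have hh : ∀ x ∈ tw i s K (LinearMap.range c),
      T.d (h.o τ LinearMap.id x) + h.o τ LinearMap.id (T.d x) = x := by
    intro x hx
    refine tw_le (S := LinearMap.eqLocus
      (T.d ∘ₗ h.o τ LinearMap.id + h.o τ LinearMap.id ∘ₗ T.d) LinearMap.id) ?_ hx
    rintro b hb _ ⟨a, rfl⟩
    change T.d (h.o τ LinearMap.id (i b * s (c a))) +
      h.o τ LinearMap.id (T.d (i b * s (c a))) = i b * s (c a)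
    rw [h.o_apply, LinearMap.id_apply, h.d_mul_zero _ (h3 a), h.d_mul_zero _ (h3 a), h.o_apply,
      LinearMap.id_apply, ← add_mul, ← map_add, hτ b hb]
  refine ⟨h.o τ LinearMap.id (T.pr n k) + t', ?_⟩
  have := hh _ hkn
  rw [hdk, map_zero, add_zero] at this
  rw [map_add, this, ez.symm]

/-- The total algebra of a twisted tensor product is formal if its base is. -/
theorem formal : Formal T := by
  have hH : T.Homog (idl i s E K) :=
    (h.homog hK.homog fun _ _ _ => Submodule.mem_top).sup
      (h.homog (fun _ _ _ => Submodule.mem_top) (h.low_homog 1))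
  refine CDGA.formal_of_ideal (L := idl i s E K) hH ?_ ?_ ?_
  · intro a x hx
    refine idl_le (S := (idl i s E K).comap (LinearMap.mulLeft ℚ a)) (fun x hx => ?_)
      (fun x hx => ?_) hx
    · exact Submodule.mem_sup_left
        (h.mul_left hK.homog hK.mul_left (fun _ _ _ => Submodule.mem_top) a x hx)
    · exact Submodule.mem_sup_right
        (h.mul_left (fun _ _ _ => Submodule.mem_top) (fun _ _ _ => Submodule.mem_top) (h.low_ideal 1) a x hx)
  · intro x
    refine Submodule.mul_induction_on
      (C := fun x => ∃ l ∈ idl i s E K, T.d (x - l) = 0) (h.span x) ?_ ?_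
    · rintro _ ⟨b, -, rfl⟩ _ ⟨a, -, rfl⟩
      change ∃ l ∈ idl i s E K, T.d (i b * s a - l) = 0
      have ha : a - comp h.low.internal 0 a ∈ ge E 1 := by
        refine comp_induction h.low.internal
          (P := fun a => a - comp h.low.internal 0 a ∈ ge E 1) ?_ ?_ a
        · intro p a ha
          rcases p with _ | p
          · rw [comp_of_mem _ ha, sub_self]; exact zero_mem _
          · rw [comp_of_mem_ne _ ha (by omega), sub_zero]; exact mem_ge (by omega) ha
        · intro x y hx hy
          rw [map_add, add_sub_add_comm]; exact add_mem hx hy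
      obtain ⟨k, hk, hdk⟩ := hK.sup b
      have ha0 := comp_mem h.low.internal 0 a
      refine ⟨i b * s (a - comp h.low.internal 0 a) + i k * s (comp h.low.internal 0 a),
        add_mem (Submodule.mem_sup_right (tw_mem Submodule.mem_top ha))
          (Submodule.mem_sup_left (tw_mem hk trivial)), ?_⟩
      have e : i b * s a - (i b * s (a - comp h.low.internal 0 a) +
          i k * s (comp h.low.internal 0 a)) = i (b - k) * s (comp h.low.internal 0 a) := by
        rw [map_sub, map_sub, mul_sub, sub_mul]; abel
      rw [e, h.d_mul_zero _ ha0, hdk, map_zero, zero_mul]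
    · rintro x y ⟨l, hl, hdl⟩ ⟨m, hm, hdm⟩
      exact ⟨l + m, add_mem hl hm, by rw [add_sub_add_comm, map_add, hdl, hdm, add_zero]⟩
  · intro x hx hd
    have hc : ∀ n, ∃ y, T.d y = T.pr n x := fun n =>
      h.exact_idl hK (hH n x hx) (T.pr_mem n x) (by rw [← T.pr_d, hd, map_zero])
    choose y hy using hc
    obtain ⟨S, hS⟩ := T.exists_sum_pr x
    exact ⟨∑ n ∈ S, y n, by rw [map_sum, Finset.sum_congr rfl fun n _ => hy n, hS]⟩

end

end Twist

end RHT

end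

/-! ### The graded tensor product -/

noncomputable section

namespace RHT

open scoped TensorProduct DirectSum

namespace CDGA

variable (B F : CDGA)

/-- The graded tensor product of the underlying algebras of two cochain algebras. -/
abbrev GT : Type := GradedTensorProduct ℚ B.grading F.grading

variable {B F}

/-- Pure tensors in the graded tensor product. -/
def tm (b : B.A) (a : F.A) : GT B F := GradedTensorProduct.tmul ℚ b a

lemma tm_mul {j k : ℕ} (b : B.A) {a : F.A} (ha : a ∈ F.grading j) {b' : B.A}
    (hb : b' ∈ B.grading k) (a' : F.A) :
    tm b a * tm b' a' = ((-1 : ℚ) ^ (j * k)) • (tm (b * b') (a * a') : GT B F) := by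
  refine (GradedTensorProduct.tmul_coe_mul_coe_tmul (R := ℚ) B.grading F.grading b ⟨a, ha⟩
    ⟨b', hb⟩ a').trans ?_
  rcases Nat.even_or_odd (j * k) with h | h
  · have e : (-1 : ℤˣ) ^ (j * k) = 1 := h.neg_one_pow
    have eQ : (-1 : ℚ) ^ (j * k) = 1 := h.neg_one_pow
    have e' : ((-1 : ℤˣ) ^ (j * k)) • (tm (b * b') (a * a') : GT B F) = tm (b * b') (a * a') := by
      rw [e, one_smul]
    refine e'.trans ?_
    rw [eQ, one_smul]
  · have e : (-1 : ℤˣ) ^ (j * k) = -1 := h.neg_one_pow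
    have eQ : (-1 : ℚ) ^ (j * k) = -1 := h.neg_one_pow
    have e' : ((-1 : ℤˣ) ^ (j * k)) • (tm (b * b') (a * a') : GT B F) =
        -tm (b * b') (a * a') := by
      rw [e, Units.neg_smul, one_smul]
    refine e'.trans ?_
    rw [eQ, neg_one_smul]

lemma tm_one_mul (b b' : B.A) (a' : F.A) :
    tm b 1 * tm b' a' = (tm (b * b') a' : GT B F) := by
  refine B.homog_induction
    (p := fun b' => tm b 1 * tm b' a' = (tm (b * b') a' : GT B F)) ?_ ?_ b'
  · intro k b' hb'
    rw [tm_mul b F.one_deg hb' a', zero_mul, pow_zero, one_smul, one_mul]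
  · intro x y hx hy
    have e : ∀ x y : B.A, (tm (x + y) a' : GT B F) = tm x a' + tm y a' := fun x y => by
      simp only [tm, GradedTensorProduct.tmul, TensorProduct.add_tmul, map_add]
    rw [e, mul_add, mul_add, e, hx, hy]

lemma tm_induction {P : GT B F → Prop} (h0 : P 0) (ht : ∀ b a, P (tm b a))
    (ha : ∀ x y, P x → P y → P (x + y)) (x : GT B F) : P x :=
  TensorProduct.induction_on (motive := fun x => P (GradedTensorProduct.of ℚ _ _ x))
    ((GradedTensorProduct.of ℚ B.grading F.grading).symm x) h0 ht
    (fun _ _ hx hy => ha _ _ hx hy)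

/-- The total grading of the graded tensor product. -/
def tgr (B F : CDGA) (n : ℕ) : Submodule ℚ (GT B F) :=
  Submodule.span ℚ {z | ∃ p q b a, p + q = n ∧ b ∈ B.grading p ∧ a ∈ F.grading q ∧ z = tm b a}

lemma tm_mem {p q : ℕ} {b : B.A} {a : F.A} (hb : b ∈ B.grading p) (ha : a ∈ F.grading q) :
    tm b a ∈ tgr B F (p + q) := Submodule.subset_span ⟨p, q, b, a, rfl, hb, ha, rfl⟩

lemma tgr_mul (i j : ℕ) (x y : GT B F) (hx : x ∈ tgr B F i) (hy : y ∈ tgr B F j) :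
    x * y ∈ tgr B F (i + j) := by
  refine Submodule.span_induction (p := fun x _ => x * y ∈ tgr B F (i + j)) ?_ ?_ ?_ ?_ hx
  · rintro _ ⟨p, q, b, a, rfl, hb, ha, rfl⟩
    refine Submodule.span_induction (p := fun y _ => tm b a * y ∈ tgr B F (p + q + j))
      ?_ ?_ ?_ ?_ hy
    · rintro _ ⟨p', q', b', a', rfl, hb', ha', rfl⟩
      rw [tm_mul b ha hb' a', show p + q + (p' + q') = (p + p') + (q + q') by omega]
      exact Submodule.smul_mem _ _ (tm_mem (B.mul_deg hb hb') (F.mul_deg ha ha'))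
    · rw [mul_zero]; exact zero_mem _
    · intro x y _ _ hx hy; rw [mul_add]; exact add_mem hx hy
    · intro c x _ hx; rw [mul_smul_comm]; exact Submodule.smul_mem _ _ hx
  · rw [zero_mul]; exact zero_mem _
  · intro x y _ _ hx hy; rw [add_mul]; exact add_mem hx hy
  · intro c x _ hx; rw [smul_mul_assoc]; exact Submodule.smul_mem _ _ hx

lemma tm_smul (c c' : ℚ) (b : B.A) (a : F.A) :
    (tm (c • b) (c' • a) : GT B F) = (c * c') • tm b a := by
  simp only [tm, GradedTensorProduct.tmul, TensorProduct.smul_tmul_smul, map_smul]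

lemma tgr_comm (i j : ℕ) (x y : GT B F) (hx : x ∈ tgr B F i) (hy : y ∈ tgr B F j) :
    x * y = ((-1 : ℚ) ^ (i * j)) • (y * x) := by
  refine Submodule.span_induction (p := fun x _ => x * y = ((-1 : ℚ) ^ (i * j)) • (y * x))
    ?_ ?_ ?_ ?_ hx
  · rintro _ ⟨p, q, b, a, rfl, hb, ha, rfl⟩
    refine Submodule.span_induction
      (p := fun y _ => tm b a * y = ((-1 : ℚ) ^ ((p + q) * j)) • (y * tm b a)) ?_ ?_ ?_ ?_ hy
    · rintro _ ⟨p', q', b', a', rfl, hb', ha', rfl⟩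
      rw [tm_mul b ha hb' a', tm_mul b' ha' hb a, B.gcomm hb hb', F.gcomm ha ha', tm_smul,
        smul_smul, smul_smul]
      congr 1
      have e : ∀ n : ℕ, (-1 : ℚ) ^ n * (-1 : ℚ) ^ n = 1 := fun n => by
        rw [← mul_pow]; norm_num
      rw [show (p + q) * (p' + q') = p * p' + q * p' + q * q' + q' * p by ring, pow_add, pow_add,
        pow_add, mul_assoc _ ((-1 : ℚ) ^ (q' * p)), e]
      ring
    · rw [mul_zero, zero_mul, smul_zero]
    · intro x y _ _ hx hy; rw [mul_add, hx, hy, ← smul_add, ← add_mul]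
    · intro c x _ hx; rw [mul_smul_comm, hx, smul_mul_assoc, smul_comm]
  · rw [zero_mul, mul_zero, smul_zero]
  · intro x y _ _ hx hy; rw [add_mul, mul_add, hx, hy, smul_add]
  · intro c x _ hx; rw [smul_mul_assoc, hx, mul_smul_comm, smul_comm]

/-- The filtration of the graded tensor product by the degree of the left factor. -/
def fil (B F : CDGA) (q : ℕ) : Submodule ℚ (GT B F) :=
  Submodule.span ℚ {z | ∃ b ∈ ge B.grading q, ∃ a, z = tm b a}

lemma tm_fil {q : ℕ} {b : B.A} (hb : b ∈ ge B.grading q) (a : F.A) : tm b a ∈ fil B F q :=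
  Submodule.subset_span ⟨b, hb, a, rfl⟩

/-- The filtration by base degree is separated. -/
lemma eq_zero_of_fil {x : GT B F} (hx : ∀ q, x ∈ fil B F q) : x = 0 := by
  let of := GradedTensorProduct.of ℚ B.grading F.grading
  let ρ : ℕ → GT B F →ₗ[ℚ] GT B F := fun n => of.toLinearMap ∘ₗ
    (LinearMap.rTensor F.A (∑ p ∈ Finset.range n, comp B.internal p)) ∘ₗ of.symm.toLinearMap
  have hρ : ∀ n b a, ρ n (tm b a) = tm ((∑ p ∈ Finset.range n, comp B.internal p) b) a :=
    fun n b a => rfl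
  have h1 : ∃ m, ∀ n ≥ m, ρ n x = x := by
    refine tm_induction (P := fun x => ∃ m, ∀ n ≥ m, ρ n x = x) ⟨0, fun n _ => map_zero _⟩ ?_ ?_ x
    · intro b a
      obtain ⟨m, hm⟩ := exists_sum_comp B.internal b
      refine ⟨m, fun n hn => ?_⟩
      rw [hρ, LinearMap.sum_apply, hm n hn]
    · rintro x y ⟨m, hm⟩ ⟨k, hk⟩
      refine ⟨max m k, fun n hn => ?_⟩
      rw [map_add, hm n (le_of_max_le_left hn), hk n (le_of_max_le_right hn)]
  obtain ⟨m, hm⟩ := h1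
  rw [← hm m le_rfl]
  have h2 : fil B F m ≤ LinearMap.ker (ρ m) := by
    refine Submodule.span_le.mpr ?_
    rintro _ ⟨b, hb, a, rfl⟩
    change ρ m (tm b a) = 0
    have e : (∑ p ∈ Finset.range m, comp B.internal p) b = 0 := by
      refine ge_induction (E := B.grading)
        (P := fun b => (∑ p ∈ Finset.range m, comp B.internal p) b = 0) ?_ (map_zero _) ?_ hb
      · intro j hj x hx
        rw [LinearMap.sum_apply]
        refine Finset.sum_eq_zero fun p hp => ?_
        have := Finset.mem_range.mp hp
        exact comp_of_mem_ne _ hx (by omega)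
      · intro x y hx hy; rw [map_add, hx, hy, add_zero]
    rw [hρ, e]
    simp only [tm, GradedTensorProduct.tmul, TensorProduct.zero_tmul, map_zero]
  exact h2 (hx m)

variable (B F) in
lemma exists_left : ∃ φ : B.A →ₐ[ℚ] GT B F, ∀ b, φ b = tm b 1 :=
  ⟨GradedTensorProduct.includeLeft B.grading F.grading, fun _ => rfl⟩

variable (B F) in
lemma exists_right : ∃ φ : F.A →ₐ[ℚ] GT B F, ∀ a, φ a = tm 1 a :=
  ⟨GradedTensorProduct.includeRight B.grading F.grading, fun _ => rfl⟩

/-- Evaluation of the left factor of a graded tensor product by an augmentation. -/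
lemma exists_ev (ε : B.A →ₐ[ℚ] ℚ) (hε : ∀ n, 0 < n → ∀ x ∈ B.grading n, ε x = 0) :
    ∃ ev : GT B F →ₐ[ℚ] F.A, ∀ b a, ev (tm b a) = ε b • a := by
  refine ⟨GradedTensorProduct.lift B.grading F.grading ((Algebra.ofId ℚ F.A).comp ε)
    (AlgHom.id ℚ F.A) ?_, fun b a => ?_⟩
  · intro i j a b
    have e : ((Algebra.ofId ℚ F.A).comp ε) (a : B.A) = algebraMap ℚ F.A (ε a) := rfl
    rw [e, AlgHom.id_apply, Algebra.commutes]
    rcases Nat.eq_zero_or_pos i with rfl | hi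
    · have e' : ((-1 : ℤˣ) ^ (j * 0)) • ((b : F.A) * algebraMap ℚ F.A (ε a)) =
        (b : F.A) * algebraMap ℚ F.A (ε a) := by rw [mul_zero, pow_zero, one_smul]
      exact e'.symm
    · rw [hε i hi a a.2, map_zero, mul_zero, smul_zero]
  · refine (GradedTensorProduct.lift_tmul _ _ _ _ _ b a).trans ?_
    rw [Algebra.smul_def]
    rfl

end CDGA

open CDGA

/-- In a fibration with a multiplicative section of the projection, the total algebra is additively
the tensor product of base and fibre, as far as the construction of linear maps goes. -/
theorem exists_op {B T F : CDGA} {incl : Hom B T} {V : ℕ → Submodule ℚ T.A}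
    (hV : ∀ n, V n ≤ T.grading n)
    (hrel : RelativelyFree B T incl V) (proj : Hom T F) (ε : B.A →ₐ[ℚ] ℚ)
    (hε : ∀ n, 0 < n → ∀ x ∈ B.grading n, ε x = 0)
    (hε0 : ∀ x ∈ B.grading 0, x = algebraMap ℚ B.A (ε x))
    (hpi : ∀ b, proj.toAlgHom (incl.toAlgHom b) = algebraMap ℚ F.A (ε b))
    (s : F.A →ₐ[ℚ] T.A) (hs : ∀ a, proj.toAlgHom (s a) = a)
    (hspan : ∀ x, x ∈ Submodule.map incl.toAlgHom.toLinearMap ⊤ * Submodule.map s.toLinearMap ⊤)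
    (f : B.A →ₗ[ℚ] B.A) (g : F.A →ₗ[ℚ] F.A) :
    ∃ φ : T.A →ₗ[ℚ] T.A, ∀ b a,
      φ (incl.toAlgHom b * s a) = incl.toAlgHom (f b) * s (g a) := by
  let i := incl.toAlgHom
  obtain ⟨iL, hL⟩ := exists_left B F
  obtain ⟨iR, hR⟩ := exists_right B F
  have hL' : ∀ n (x : B.A), x ∈ B.grading n → iL x ∈ tgr B F n := fun n x hx => by
    have := tm_mem (F := F) hx F.one_deg
    rw [add_zero] at this
    rw [hL]; exact this
  let fV : (n : ℕ) → V n →ₗ[ℚ] GT B F := fun n =>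
    (iR.comp proj.toAlgHom).toLinearMap ∘ₗ (V n).subtype
  have hfV : ∀ n (v : V n), fV n v = tm 1 (proj.toAlgHom v) := fun n v => hR _
  have hR' : ∀ n (v : V n), fV n v ∈ tgr B F n := fun n v => by
    have := tm_mem (B := B) (F := F) B.one_deg (proj.map_grading (hV n v.2))
    rw [zero_add] at this
    rw [hfV]; exact this
  have h1 : (1 : GT B F) ∈ tgr B F 0 := by
    have := hL' 0 1 B.one_deg
    rwa [map_one] at this
  obtain ⟨Φ, ⟨hΦi, hΦv⟩, -⟩ := hrel (GT B F) (tgr B F) h1 tgr_mul tgr_comm iL hL' fV hR'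
  have hΦi' : ∀ b, Φ (i b) = tm b 1 := fun b => (hΦi b).trans (hL b)
  have hΦv' : ∀ n (v : V n), Φ (v : T.A) = tm 1 (proj.toAlgHom v) :=
    fun n v => (hΦv n v).trans (hfV n v)
  obtain ⟨ev, hev⟩ := exists_ev (F := F) ε hε
  have hevΦ : ev.comp Φ = proj.toAlgHom := by
    refine (hrel F.A F.grading F.one_deg (fun _ _ _ _ hx hy => F.mul_deg hx hy)
      (fun _ _ _ _ hx hy => F.gcomm hx hy) (proj.toAlgHom.comp i)
      (fun n x hx => proj.map_grading (incl.map_grading hx))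
      (fun n => proj.toAlgHom.toLinearMap ∘ₗ (V n).subtype)
      (fun n v => proj.map_grading (hV n v.2))).unique ⟨?_, ?_⟩ ⟨fun _ => rfl, fun _ _ => rfl⟩
    · intro b
      change ev (Φ (i b)) = proj.toAlgHom (i b)
      rw [hΦi', hev, hpi, Algebra.algebraMap_eq_smul_one]
    · intro n v
      change ev (Φ v) = proj.toAlgHom v
      rw [hΦv', hev, map_one, one_smul]
  have hεge : ∀ b, b - algebraMap ℚ B.A (ε b) ∈ ge B.grading 1 := by
    intro b
    refine B.homog_induction (p := fun b => b - algebraMap ℚ B.A (ε b) ∈ ge B.grading 1) ?_ ?_ b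
    · intro n x hx
      rcases Nat.eq_zero_or_pos n with rfl | hn
      · rw [← hε0 x hx, sub_self]; exact zero_mem _
      · rw [hε n hn x hx, map_zero, sub_zero]; exact mem_ge hn hx
    · intro x y hx hy
      rw [map_add, map_add, add_sub_add_comm]; exact add_mem hx hy
  -- an element of the tensor product agrees with its evaluation modulo positive filtration
  have hJ : ∀ w : GT B F, w - tm 1 (ev w) ∈ fil B F 1 := by
    have ea : ∀ x y : F.A, (tm 1 (x + y) : GT B F) = tm 1 x + tm 1 y := fun x y => by
      simp only [tm, GradedTensorProduct.tmul, TensorProduct.tmul_add, map_add]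
    have e0 : (tm 1 (0 : F.A) : GT B F) = 0 := by
      simp only [tm, GradedTensorProduct.tmul, TensorProduct.tmul_zero, map_zero]
    intro w
    refine tm_induction (P := fun w => w - tm 1 (ev w) ∈ fil B F 1) ?_ ?_ ?_ w
    · rw [map_zero, e0, sub_zero]; exact zero_mem _
    · intro b a
      have e : (tm b a - tm 1 (ev (tm b a)) : GT B F) = tm (b - algebraMap ℚ B.A (ε b)) a := by
        rw [hev, Algebra.algebraMap_eq_smul_one]
        simp only [tm, GradedTensorProduct.tmul, TensorProduct.sub_tmul, map_sub,
          TensorProduct.tmul_smul, TensorProduct.smul_tmul']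
      rw [e]
      exact tm_fil (hεge b) a
    · intro x y hx hy
      rw [map_add, ea, add_sub_add_comm]; exact add_mem hx hy
  let Λ : GT B F →ₗ[ℚ] T.A := TensorProduct.lift
    ((LinearMap.mul ℚ T.A).compl₁₂ i.toLinearMap s.toLinearMap) ∘ₗ
      (GradedTensorProduct.of ℚ B.grading F.grading).symm.toLinearMap
  have hΛ : ∀ b a, Λ (tm b a) = i b * s a := fun b a => rfl
  have hmulfil : ∀ q, ∀ b ∈ ge B.grading q, ∀ w ∈ fil B F 1, tm b 1 * w ∈ fil B F (q + 1) := by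
    intro q b hb w hw
    refine (Submodule.span_le.mpr ?_ : fil B F 1 ≤
      (fil B F (q + 1)).comap (LinearMap.mulLeft ℚ (tm b 1))) hw
    rintro _ ⟨b', hb', a', rfl⟩
    change tm b 1 * tm b' a' ∈ fil B F (q + 1)
    rw [tm_one_mul]
    exact tm_fil (B.ge_mul hb hb') a'
  -- `Φ ∘ Λ` is the identity modulo higher filtration, hence `Λ` is injective
  have hN : ∀ q, ∀ x ∈ fil B F q, Φ (Λ x) - x ∈ fil B F (q + 1) := by
    intro q x hx
    refine (Submodule.span_le.mpr ?_ : fil B F q ≤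
      (fil B F (q + 1)).comap (Φ.toLinearMap ∘ₗ Λ - LinearMap.id)) hx
    rintro _ ⟨b, hb, a, rfl⟩
    change Φ (Λ (tm b a)) - tm b a ∈ fil B F (q + 1)
    have e1 : ev (Φ (s a)) = a := (AlgHom.congr_fun hevΦ (s a)).trans (hs a)
    have e2 : Φ (Λ (tm b a)) - tm b a = tm b 1 * (Φ (s a) - tm 1 (ev (Φ (s a)))) := by
      rw [hΛ, map_mul, hΦi', mul_sub, e1, tm_one_mul, mul_one]
    rw [e2]
    exact hmulfil q b hb _ (hJ _)
  have hinj : ∀ x, Λ x = 0 → x = 0 := by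
    intro x hx
    refine eq_zero_of_fil fun q => ?_
    induction q with
    | zero =>
      refine tm_induction (P := fun x => x ∈ fil B F 0) (zero_mem _) (fun b a => tm_fil ?_ a)
        (fun _ _ hx hy => add_mem hx hy) x
      rw [B.ge_zero]; exact Submodule.mem_top
    | succ q ih =>
      have := hN q x ih
      rw [hx, map_zero, zero_sub, neg_mem_iff] at this
      exact this
  have hsurj : ∀ t, ∃ x, Λ x = t := by
    intro t
    refine Submodule.mul_induction_on (C := fun t => ∃ x, Λ x = t) (hspan t) ?_ ?_
    · rintro _ ⟨b, -, rfl⟩ _ ⟨a, -, rfl⟩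
      exact ⟨tm b a, rfl⟩
    · rintro _ _ ⟨x, rfl⟩ ⟨y, rfl⟩
      exact ⟨x + y, map_add _ _ _⟩
  let e := LinearEquiv.ofBijective Λ ⟨(injective_iff_map_eq_zero Λ).mpr hinj, hsurj⟩
  let M : GT B F →ₗ[ℚ] GT B F := (GradedTensorProduct.of ℚ B.grading F.grading).toLinearMap ∘ₗ
    TensorProduct.map f g ∘ₗ (GradedTensorProduct.of ℚ B.grading F.grading).symm.toLinearMap
  refine ⟨Λ ∘ₗ M ∘ₗ e.symm.toLinearMap, fun b a => ?_⟩
  have h1 : e.symm (i b * s a) = tm b a := by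
    rw [LinearEquiv.symm_apply_eq]; rfl
  change Λ (M (e.symm (i b * s a))) = _
  rw [h1]
  rfl

end RHT

end

/-! ### The section of a TNCZ fibration -/

noncomputable section

namespace RHT

open CDGA

namespace FibrationModel

variable {B : CDGA} {F : Sullivan} (P : FibrationModel B F)

lemma proj_surjective (y : F.A) : ∃ x, P.proj.toAlgHom x = y := by
  have h : P.proj.toAlgHom.range = ⊤ := by
    rw [eq_top_iff, ← F.generates]
    refine Algebra.adjoin_le ?_
    intro v hv
    obtain ⟨k, hk⟩ := Set.mem_iUnion.mp hv
    rw [← P.proj_V k] at hk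
    obtain ⟨x, -, hx⟩ := hk
    exact ⟨x, hx⟩
  have : y ∈ P.proj.toAlgHom.range := by rw [h]; exact Algebra.mem_top
  exact this

/-- A homogeneous cocycle of the fibre lifts to a homogeneous cocycle of the total algebra. -/
lemma exists_lift_cocycle (h : P.TNCZ) {k : ℕ} {y : F.A} (hy : y ∈ F.grading k)
    (hd : F.d y = 0) : ∃ x ∈ P.T.grading k, P.proj.toAlgHom x = y ∧ P.T.d x = 0 := by
  obtain ⟨x, hx, z, hz⟩ := h y hd
  obtain ⟨w, rfl⟩ := P.proj_surjective z
  refine ⟨P.T.pr k (x - P.T.d w), P.T.pr_mem _ _, ?_, ?_⟩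
  · rw [map_pr, map_sub, P.proj.comm_d, hz, sub_sub_cancel]
    exact CDGA.pr_of_mem _ hy
  · rw [← P.T.pr_d, map_sub, hx, P.T.d_sq, sub_zero, map_zero]

lemma exists_lift {k : ℕ} {y : F.A} (hy : y ∈ F.grading k) :
    ∃ x ∈ P.T.grading k, P.proj.toAlgHom x = y := by
  obtain ⟨x, rfl⟩ := P.proj_surjective y
  refine ⟨P.T.pr k x, P.T.pr_mem _ _, ?_⟩
  rw [map_pr]; exact CDGA.pr_of_mem _ hy

/-- The augmentation of the base. -/
lemma exists_aug {ι : Type} {u : ι → B.A} {n : ι → ℕ} (h : B.FreeOn u n) (hn : ∀ i, n i ≠ 0) :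
    ∃ ε : B.A →ₐ[ℚ] ℚ, (∀ k, 0 < k → ∀ x ∈ B.grading k, ε x = 0) ∧
      (∀ x ∈ B.grading 0, x = algebraMap ℚ B.A (ε x)) := by
  let 𝒞 : ℕ → Submodule ℚ ℚ := fun k => if k = 0 then ⊤ else ⊥
  have h1 : (1 : ℚ) ∈ 𝒞 0 := by simp [𝒞]
  have h2 : ∀ i j (x y : ℚ), x ∈ 𝒞 i → y ∈ 𝒞 j → x * y ∈ 𝒞 (i + j) := by
    intro i j x y hx hy
    simp only [𝒞] at hx hy ⊢
    rcases Nat.eq_zero_or_pos i with rfl | hi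
    · rcases Nat.eq_zero_or_pos j with rfl | hj
      · simp
      · rw [if_neg hj.ne', Submodule.mem_bot] at hy
        simp [hy]
    · rw [if_neg hi.ne', Submodule.mem_bot] at hx
      simp [hx]
  obtain ⟨ε, hε⟩ := h.lift ℚ 𝒞 h1 h2
    (by
      intro i j x y hx hy
      simp only [𝒞] at hx hy ⊢
      rcases Nat.eq_zero_or_pos i with rfl | hi
      · simp [mul_comm]
      · rw [if_neg hi.ne', Submodule.mem_bot] at hx
        simp [hx])
    (fun _ => 0) (fun i => zero_mem _)
  refine ⟨ε, ?_, ?_⟩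
  · intro k hk x hx
    have := h.map_mem 𝒞 h1 h2 ε (fun i => by rw [hε]; exact zero_mem _) hx
    simp only [𝒞] at this
    rwa [if_neg hk.ne', Submodule.mem_bot] at this
  · intro x hx
    obtain ⟨c, rfl⟩ := h.grading_zero hn hx
    rw [map_smul, map_one, smul_eq_mul, mul_one, Algebra.algebraMap_eq_smul_one]

lemma proj_incl_eq {ε : B.A →ₐ[ℚ] ℚ} (hε : ∀ k, 0 < k → ∀ x ∈ B.grading k, ε x = 0)
    (hε0 : ∀ x ∈ B.grading 0, x = algebraMap ℚ B.A (ε x)) (b : B.A) :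
    P.proj.toAlgHom (P.incl.toAlgHom b) = algebraMap ℚ F.A (ε b) := by
  refine B.homog_induction
    (p := fun b => P.proj.toAlgHom (P.incl.toAlgHom b) = algebraMap ℚ F.A (ε b)) ?_ ?_ b
  · intro k b hb
    rcases Nat.eq_zero_or_pos k with rfl | hk
    · conv_lhs => rw [hε0 b hb]
      rw [AlgHom.commutes, AlgHom.commutes]
    · rw [P.proj_incl k hk b hb, hε k hk b hb, map_zero]
  · intro x y hx hy
    simp only [map_add, hx, hy]

/-- The kernel of the projection is spanned, in each degree, by products with a homogeneous
element of positive degree of the base. -/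
lemma ker_proj_induction {Q : P.T.A → Prop}
    (h : ∀ j, 0 < j → ∀ b ∈ B.grading j, ∀ t, Q (P.incl.toAlgHom b * t))
    (ha : ∀ x y, Q x → Q y → Q (x + y)) {x : P.T.A} (hx : P.proj.toAlgHom x = 0) : Q x := by
  refine Submodule.mul_induction_on (C := Q) ((P.ker_proj x).mp hx) ?_ ha
  rintro _ ⟨b, hb, rfl⟩ t -
  refine Submodule.iSup_induction (fun i => B.grading (i + 1))
    (motive := fun b => Q (P.incl.toAlgHom b * t)) hb ?_ ?_ ?_
  · intro j b hb; exact h _ (Nat.succ_pos j) b hb t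
  · have := h 1 one_pos 0 (zero_mem _) t
    exact this
  · intro x y hx hy; rw [map_add, add_mul]; exact ha _ _ hx hy

section

variable {s : F.A →ₐ[ℚ] P.T.A} (hs : ∀ a, P.proj.toAlgHom (s a) = a)
  (hsm : ∀ {k a}, a ∈ F.grading k → s a ∈ P.T.grading k)

include hs hsm

/-- A section of the projection and the base generate the total algebra additively: by induction
on the degree, since the kernel of the projection is generated by positive degrees of the base. -/
lemma span_section (x : P.T.A) :
    x ∈ Submodule.map P.incl.toAlgHom.toLinearMap ⊤ * Submodule.map s.toLinearMap ⊤ := by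
  let W : Submodule ℚ P.T.A :=
    Submodule.map P.incl.toAlgHom.toLinearMap ⊤ * Submodule.map s.toLinearMap ⊤
  have hi : ∀ b, ∀ t ∈ W, P.incl.toAlgHom b * t ∈ W := fun b t ht =>
    Twist.i_mul (X := ⊤) (X' := ⊤) (Y := ⊤) (fun _ _ => Submodule.mem_top) ht
  have hsW : ∀ a, s a ∈ W := fun a => by
    have := Twist.tw_mem (i := P.incl.toAlgHom) (s := s) (b := 1) (a := a) (X := ⊤) (Y := ⊤)
      Submodule.mem_top Submodule.mem_top
    rwa [map_one, one_mul] at this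
  have key : ∀ k, ∀ x, P.T.pr k x ∈ W := by
    intro k
    induction k using Nat.strong_induction_on with
    | _ k ih =>
    intro x
    have h1 : P.T.pr k (x - s (P.proj.toAlgHom x)) ∈ W := by
      refine P.ker_proj_induction (Q := fun z => P.T.pr k z ∈ W) ?_ ?_
        (x := x - s (P.proj.toAlgHom x)) (by rw [map_sub, hs, sub_self])
      · intro j hj b hb t
        by_cases hjk : j ≤ k
        · obtain ⟨m, rfl⟩ := Nat.exists_eq_add_of_le hjk
          rw [P.T.pr_mul_left (P.incl.map_grading hb)]
          exact hi b _ (ih m (by omega) t)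
        · rw [P.T.pr_mul_left_lt (P.incl.map_grading hb) t (by omega)]
          exact zero_mem W
      · intro y z hy hz; rw [map_add]; exact add_mem hy hz
    have h2 : ∀ a, P.T.pr k (s a) ∈ W := by
      intro a
      refine F.homog_induction (p := fun a => P.T.pr k (s a) ∈ W) ?_ ?_ a
      · intro m a ha
        by_cases hm : m = k
        · subst hm
          rw [P.T.pr_of_mem (hsm ha)]; exact hsW a
        · rw [P.T.pr_of_mem_ne (hsm ha) hm]; exact zero_mem W
      · intro y z hy hz; rw [map_add, map_add]; exact add_mem hy hz
    have := add_mem h1 (h2 (P.proj.toAlgHom x))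
    rwa [← map_add, sub_add_cancel] at this
  obtain ⟨S, hS⟩ := P.T.exists_sum_pr x
  have : x ∈ W := by
    rw [← hS]; exact Submodule.sum_mem _ fun k _ => key k x
  exact this

/-- The differential of a section agrees with that of the fibre modulo positive degrees of the
base. -/
lemma d_section_fibre (a : F.A) : P.T.d (s a) - s (F.d a) ∈
    Submodule.map P.incl.toAlgHom.toLinearMap (ge B.grading 1) *
      Submodule.map s.toLinearMap ⊤ := by
  refine P.ker_proj_induction (Q := fun z => z ∈
    Submodule.map P.incl.toAlgHom.toLinearMap (ge B.grading 1) *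
      Submodule.map s.toLinearMap ⊤) ?_ (fun _ _ hx hy => add_mem hx hy)
      (x := P.T.d (s a) - s (F.d a)) ?_
  · intro j hj b hb t
    have hb' : b ∈ ge B.grading 1 := mem_ge (E := B.grading) hj hb
    have ht := P.span_section hs hsm t
    refine Twist.i_mul (X := ⊤) (X' := ge B.grading 1) (Y := ⊤) (fun c _ => ?_) ht
    have := B.ge_mul hb' (y := c) (q := 0) (by rw [B.ge_zero]; exact Submodule.mem_top)
    exact this
  · rw [map_sub, hs, P.proj.comm_d, hs, sub_self]

/-- If a section sends generators of lower degree zero to cocycles and all generators have lower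
degree at most one, the differential lowers the lower degree by at most one: this is clear on
generators and follows for products from the derivation property. -/
lemma d_section_low {E : ℕ → Submodule ℚ F.A} {r : ℕ} {u : Fin r → F.A} {n p : Fin r → ℕ}
    (hE : F.toCDGA.LowGrading E) (hu : F.toCDGA.BiFree E u n p) (hp : ∀ i, p i ≤ 1)
    (h0 : ∀ i, p i = 0 → P.T.d (s (u i)) = 0) {k : ℕ} {a : F.A} (ha : a ∈ E k) :
    (k = 0 → P.T.d (s a) = 0) ∧ ∀ m, k = m + 1 → P.T.d (s a) ∈
      Submodule.map P.incl.toAlgHom.toLinearMap ⊤ * Submodule.map s.toLinearMap (ge E m) := by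
  have hspan := P.span_section hs hsm
  let W : ℕ → Submodule ℚ P.T.A := fun m => Twist.tw P.incl.toAlgHom s ⊤ (ge E m)
  -- the admissible values of the differential in lower degree `k`
  let X : ℕ → Submodule ℚ P.T.A := fun k => Nat.casesOn k ⊥ W
  have hge : ∀ {i m : ℕ} {a : F.A}, a ∈ E i → ∀ x ∈ ge E m, a * x ∈ ge E (i + m) := by
    intro i m a ha x hx
    refine (ge_le (S := (ge E (i + m)).comap (LinearMap.mulLeft ℚ a)) fun j hj x hx => ?_) hx
    exact mem_ge (add_le_add le_rfl hj) (hE.mul ha hx)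
  have hge' : ∀ {i m : ℕ} {a : F.A}, a ∈ E i → ∀ x ∈ ge E m, x * a ∈ ge E (m + i) := by
    intro i m a ha x hx
    refine (ge_le (S := (ge E (m + i)).comap (LinearMap.mulRight ℚ a)) fun j hj x hx => ?_) hx
    exact mem_ge (add_le_add hj le_rfl) (hE.mul hx ha)
  have hcomm : ∀ {j : ℕ} {a : F.A}, a ∈ F.grading j → ∀ b,
      s a * P.incl.toAlgHom b = P.incl.toAlgHom (B.sg j b) * s a := by
    intro j a ha b
    refine B.homog_induction
      (p := fun b => s a * P.incl.toAlgHom b = P.incl.toAlgHom (B.sg j b) * s a) ?_ ?_ b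
    · intro n b hb
      rw [P.T.comm_left (hsm ha), P.T.sg_of_mem j (P.incl.map_grading hb), B.sg_of_mem j hb,
        map_smul]
    · intro x y hx hy
      simp only [map_add, mul_add, add_mul, hx, hy]
  have hl : ∀ {i k : ℕ} {a : F.A}, a ∈ E i → ∀ z ∈ X k, s a * z ∈ X (i + k) := by
    intro i k a ha z hz
    cases k with
    | zero =>
      have : z = 0 := hz
      rw [this, mul_zero]; exact zero_mem _
    | succ m =>
      have hz' : z ∈ Twist.tw P.incl.toAlgHom s ⊤ (ge E m) := hz
      change s a * z ∈ Twist.tw P.incl.toAlgHom s ⊤ (ge E (i + m))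
      obtain ⟨S, hS⟩ := F.toCDGA.exists_sum_pr a
      rw [← hS, map_sum, Finset.sum_mul]
      refine Submodule.sum_mem _ fun j _ => ?_
      refine Twist.tw_le (S := (Twist.tw P.incl.toAlgHom s ⊤ (ge E (i + m))).comap
        (LinearMap.mulLeft ℚ (s (F.toCDGA.pr j a)))) ?_ hz'
      intro b _ a' ha'
      change s (F.toCDGA.pr j a) * (P.incl.toAlgHom b * s a') ∈
        Twist.tw P.incl.toAlgHom s ⊤ (ge E (i + m))
      rw [← mul_assoc, hcomm (F.toCDGA.pr_mem j a), mul_assoc, ← map_mul]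
      exact Twist.tw_mem Submodule.mem_top (hge (hE.homog i j a ha) a' ha')
  have hr : ∀ {i k : ℕ} {a : F.A}, a ∈ E i → ∀ z ∈ X k, z * s a ∈ X (k + i) := by
    intro i k a ha z hz
    cases k with
    | zero =>
      have : z = 0 := hz
      rw [this, zero_mul]; exact zero_mem _
    | succ m =>
      have hz' : z ∈ Twist.tw P.incl.toAlgHom s ⊤ (ge E m) := hz
      rw [Nat.add_right_comm]
      refine Twist.tw_le (S := (Twist.tw P.incl.toAlgHom s ⊤ (ge E (m + i))).comap
        (LinearMap.mulRight ℚ (s a))) ?_ hz'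
      intro b _ a' ha'
      change P.incl.toAlgHom b * s a' * s a ∈ Twist.tw P.incl.toAlgHom s ⊤ (ge E (m + i))
      rw [mul_assoc, ← map_mul]
      exact Twist.tw_mem Submodule.mem_top (hge' ha a' ha')
  have hsg : ∀ a, P.T.sg 1 (s a) = s (F.toCDGA.sg 1 a) := by
    intro a
    refine F.homog_induction (p := fun a => P.T.sg 1 (s a) = s (F.toCDGA.sg 1 a)) ?_ ?_ a
    · intro n a ha
      rw [P.T.sg_of_mem 1 (hsm ha), F.toCDGA.sg_of_mem 1 ha, map_smul]
    · intro x y hx hy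
      simp only [map_add, hx, hy]
  -- the elements of lower degree `k` with admissible differential are closed under products
  let G : ℕ → Submodule ℚ F.A := fun k => E k ⊓ (X k).comap (P.T.d ∘ₗ s.toLinearMap)
  have hGmul : ∀ {i j : ℕ} {a b : F.A}, a ∈ G i → b ∈ G j → a * b ∈ G (i + j) := by
    rintro i j a b ⟨ha, ha'⟩ ⟨hb, hb'⟩
    refine ⟨hE.mul ha hb, ?_⟩
    change P.T.d (s (a * b)) ∈ X (i + j)
    rw [map_mul, P.T.leib, hsg]
    exact add_mem (hr hb _ ha') (hl ((hE.homog i).sg 1 ha) _ hb')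
  have hG1 : (1 : F.A) ∈ G 0 := by
    refine ⟨hE.one, ?_⟩
    change P.T.d (s 1) ∈ X 0
    rw [map_one, P.T.d_one]; exact zero_mem _
  have hGu : ∀ i, u i ∈ G (p i) := by
    intro i
    refine ⟨hu.lowmem i, ?_⟩
    change P.T.d (s (u i)) ∈ X (p i)
    rcases Nat.le_one_iff_eq_zero_or_eq_one.mp (hp i) with h | h
    · rw [h0 i h]; exact zero_mem _
    · rw [h]
      change P.T.d (s (u i)) ∈ Twist.tw P.incl.toAlgHom s ⊤ (ge E 0)
      refine Twist.tw_mono le_rfl ?_ (hspan _)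
      intro x _
      refine comp_induction hE.internal (P := fun x => x ∈ ge E 0) ?_ ?_ x
      · intro j x hx; exact mem_ge (Nat.zero_le j) hx
      · intro x y hx hy; exact add_mem hx hy
  have hmul : ∀ a ∈ ⨆ k, G k, ∀ b ∈ ⨆ k, G k, a * b ∈ ⨆ k, G k := by
    intro a ha b hb
    refine Submodule.iSup_induction G (motive := fun a => a * b ∈ ⨆ k, G k) ha ?_ ?_ ?_
    · intro i a ha
      refine Submodule.iSup_induction G (motive := fun b => a * b ∈ ⨆ k, G k) hb ?_ ?_ ?_
      · intro j b hb; exact Submodule.mem_iSup_of_mem (i + j) (hGmul ha hb)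
      · rw [mul_zero]; exact zero_mem _
      · intro x y hx hy; rw [mul_add]; exact add_mem hx hy
    · rw [zero_mul]; exact zero_mem _
    · intro x y hx hy; rw [add_mul]; exact add_mem hx hy
  have htop : ∀ a, a ∈ ⨆ k, G k := by
    intro a
    have ha : a ∈ Algebra.adjoin ℚ (Set.range u) := by rw [hu.gen]; exact Algebra.mem_top
    induction ha using Algebra.adjoin_induction with
    | mem x hx =>
      obtain ⟨i, rfl⟩ := hx
      exact Submodule.mem_iSup_of_mem _ (hGu i)
    | algebraMap c =>
      rw [Algebra.algebraMap_eq_smul_one]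
      exact Submodule.smul_mem _ _ (Submodule.mem_iSup_of_mem 0 hG1)
    | add x y _ _ hx hy => exact add_mem hx hy
    | mul x y _ _ hx hy => exact hmul x hx y hy
  have hcomp : ∀ a k, comp hE.internal k a ∈ G k := by
    intro a k
    refine Submodule.iSup_induction G (motive := fun a => comp hE.internal k a ∈ G k)
      (htop a) ?_ ?_ ?_
    · intro j a ha
      by_cases h : j = k
      · subst h
        rw [comp_of_mem _ ha.1]; exact ha
      · rw [comp_of_mem_ne _ ha.1 h]; exact zero_mem _
    · rw [map_zero]; exact zero_mem _
    · intro x y hx hy; rw [map_add]; exact add_mem hx hy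
  have hfin := (hcomp a k).2
  rw [comp_of_mem _ ha] at hfin
  have hfin' : P.T.d (s a) ∈ X k := hfin
  constructor
  · rintro rfl; exact hfin'
  · rintro m rfl; exact hfin'

end

/-- Lifting generators of lower degree zero to cocycles, which is possible as the fibration is
totally non-cohomologous to zero, gives the data of a `Twist`. -/
theorem exists_twist (h : P.TNCZ) {ι : Type} {w : ι → B.A} {e : ι → ℕ} (hw : B.FreeOn w e)
    (he : ∀ i, e i ≠ 0) {E : ℕ → Submodule ℚ F.A} {r : ℕ} {u : Fin r → F.A} {n p : Fin r → ℕ}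
    (hE : F.toCDGA.LowGrading E) (hu : F.toCDGA.BiFree E u n p) (hp : ∀ i, p i ≤ 1) :
    ∃ s, Twist P.T B F.toCDGA P.incl.toAlgHom s E := by
  have hc : ∀ i, ∃ x ∈ P.T.grading (n i), P.proj.toAlgHom x = u i ∧ (p i = 0 → P.T.d x = 0) := by
    intro i
    by_cases h0 : p i = 0
    · obtain ⟨x, hx, hxu, hd⟩ := P.exists_lift_cocycle h (hu.mem i)
        (hE.d_zero (h0 ▸ hu.lowmem i))
      exact ⟨x, hx, hxu, fun _ => hd⟩
    · obtain ⟨x, hx, hxu⟩ := P.exists_lift (hu.mem i)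
      exact ⟨x, hx, hxu, fun h => absurd h h0⟩
  choose c hcm hcu hc0 using hc
  obtain ⟨s, hsu⟩ := hu.lift P.T.A P.T.grading P.T.one_deg
    (fun _ _ _ _ hx hy => P.T.mul_deg hx hy) (fun _ _ _ _ hx hy => P.T.gcomm hx hy) c hcm
  have hsm : ∀ {k a}, a ∈ F.grading k → s a ∈ P.T.grading k := fun {k a} ha =>
    hu.map_mem P.T.grading P.T.one_deg (fun _ _ _ _ hx hy => P.T.mul_deg hx hy) s
      (fun i => by rw [hsu]; exact hcm i) ha
  have hs : ∀ a, P.proj.toAlgHom (s a) = a := by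
    have e : P.proj.toAlgHom.comp s = AlgHom.id ℚ F.A :=
      hu.hom_ext fun i => by
        change P.proj.toAlgHom (s (u i)) = u i
        rw [hsu, hcu]
    exact fun a => AlgHom.congr_fun e a
  obtain ⟨ε, hε, hε0⟩ := exists_aug hw he
  have h0 : ∀ i, p i = 0 → P.T.d (s (u i)) = 0 := fun i hi => by rw [hsu]; exact hc0 i hi
  exact ⟨s,
    { low := hE
      i_mem := fun hx => P.incl.map_grading hx
      s_mem := hsm
      i_d := fun x => (P.incl.comm_d x).symm
      op := exists_op P.V_le P.relFree P.proj ε hε hε0 (P.proj_incl_eq hε hε0) s hs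
        (P.span_section hs hsm)
      span := P.span_section hs hsm
      d_zero := fun ha => (P.d_section_low hs hsm hE hu hp h0 ha).1 rfl
      d_succ := fun ha => (P.d_section_low hs hsm hE hu hp h0 ha).2 _ rfl
      d_fib := P.d_section_fibre hs hsm }⟩

end FibrationModel

end RHT

end

open RHT in
/-- Proposition 3.2.  Let `F → E → B` be a rational fibration in which
`F` is formal and elliptic and `B` is formal.  If the fibration is TNCZ, then the total
space `E` is formal.  (The total algebra `T` of the KS-model is a Sullivan algebra
quasi-isomorphic to the minimal model of `E`, so formality of `E` is formality of `T`.) -/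
theorem halperin_variations_stmt3
    (SB : Sullivan) (hSBmin : SB.Minimal) (hSBformal : Formal SB.toCDGA)
    (SF : Sullivan) (hSFmin : SF.Minimal) (hSFformal : Formal SF.toCDGA)
    (hSFell : SF.Elliptic)
    (P : FibrationModel SB.toCDGA SF)
    (htncz : P.TNCZ) :
    Formal P.T := by
  obtain ⟨E, r, u, n, p, hE, hu, hp⟩ := SF.exists_biFree hSFmin hSFformal hSFell
  obtain ⟨K, hK⟩ := CDGA.exists_formalIdeal hSBformal
  obtain ⟨s, hs⟩ := P.exists_twist htncz SB.freeOn
    (fun k => by have := SB.two_le k; omega) hE hu hp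
  exact hs.formal hK
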